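/- Let Ω₀ be a smooth, origin-symmetric, strictly convex body in ℝⁿ (n ≥ 2), let f : S^{n−1} → (0,∞) be smooth and even, let φ : (0,∞) → (0,∞) be smooth, and assume Condition (i) or Condition (ii) holds. Let Ω_t be a smooth, origin-symmetric, strictly convex solution of the flow on [0,∞) with initial body Ω₀ and support functions h(·,t). Then there exists a constant C > 0, independent of t, such that every eigenvalue λ of the matrix (∇²h + hI)(x,t) satisfies 1/C ≤ λ ≤ C for all (x,t) ∈ S^{n−1} × (0,∞); equivalently, the principal curvatures κ_i of ∂Ω_t satisfy 1/C ≤ κ_i ≤ C. -/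

import Mathlib

/-!
All estimates are made for the `1`-homogeneous extension of the support function `h`, whose
Euclidean gradient `∇h` at a unit normal `x` is the boundary point with normal `x`, and whose
Hessian on `x^⊥` is `∇²h + hI`. The proof first bounds `h` on both sides, then the largest principal
radius from above, then the product of the radii from below.

*Bounds on `h`.* The radial Gauss map `x ↦ ∇h/|∇h|` has Jacobian `h det(∇²h + hI)/|∇h|^n`
(`lintegral_radDir`), and in terms of it the flow is `∂ₜ log h = 1 - η f / (φ(1/h) J)`. Integrating
against `J`, the choice of `η` makes `∫ (∂ₜ log h) J` vanish, so comparing radial functions through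
the Gauss map shows that `∫ log ρ` does not decrease (`GFlow.radEnt_le`). An origin-symmetric body
with a small width in a direction `θ` lies in the slab `|⟪u, θ⟫| ρ(u) ≤ h(θ)`, which makes `∫ log ρ`
very negative; hence the lower bound on `h` (`GFlow.lower_bound`). For a primitive `S` of
`1/(z φ(1/z))`, Cauchy–Schwarz gives that `∫ f S(h)` does not increase (`GFlow.functional_le`). Both
conditions on `φ` provide such an `S`: positive and tending to infinity under the second condition,
negative and tending to zero under the first. A body of large diameter has large `h` off a thin
equatorial strip, of uniformly small measure by `singular_bound`, and this contradicts the monotonicity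
in either case (`GFlow.upper_bound`). The bounds on `h` bound `|∇h|` and `η`.

*Largest principal radius.* Write the speed as `F = h - ∂ₜh`, so that
`log F = log η + log f - log φ(1/h) + n log |∇h| - log det(∇²h + hI)`. Consider a space-time
maximum, at positive time, of the largest principal radius `λ₁` divided by
`(h - ε)(c - |∇h|²/2)`. In an eigenframe at that point, Hadamard's inequality bounds the determinant
at nearby points by the product of the diagonal entries in the fixed frame, so two derivatives of
`log F` can be estimated without differentiating eigenvalues or determinants. Along the
line through the point only second derivatives of `h` in fixed directions occur, and the maximality
of the quotient over all points and all tangent directions gives the required inequalities for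
them. The terms quadratic in `λ₁` have a favourable sign, and `λ₁` is bounded there
(`lam_algebra`, `GFlow.lam_step`, `GFlow.lam_bound`).

*Product of the radii.* At a space-time maximum of `F / (η (h - ε))` the first and second order
conditions show that either the speed is bounded, or `∑ 1/λᵢ` is bounded (`GFlow.tso_step`). The second
alternative also bounds the speed, by the formula for `log F`. As `η`, `h` and `|∇h|` are controlled,
a bound on the speed everywhere is a lower bound for `det(∇²h + hI)` (`GFlow.det_bound`). Together
with the upper bound on each radius it bounds each radius from below (`EigenFrame.lam_ge`).
-/

noncomputable section

open Metric MeasureTheory Set Filter Topology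
open scoped RealInnerProductSpace NNReal

/-- Abbreviation for `n`-dimensional Euclidean space. -/
abbrev Euc (n : ℕ) : Type := EuclideanSpace ℝ (Fin n)

/-- The unit sphere `S^{n-1}` in `ℝⁿ`, as a set. -/
abbrev USphere (n : ℕ) : Set (Euc n) := Metric.sphere (0 : Euc n) 1

/-- The surface (spherical Lebesgue) measure on the unit sphere. -/
def sphMeasure (n : ℕ) : Measure (USphere n) :=
  (volume : Measure (Euc n)).toSphere

/-- Total surface measure `|S^{n-1}|` of the unit sphere. -/
def sphArea (n : ℕ) : ℝ := (sphMeasure n Set.univ).toReal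

/-- Integral over the unit sphere with respect to the spherical Lebesgue measure. -/
def sphInt (n : ℕ) (g : Euc n → ℝ) : ℝ :=
  ∫ x : USphere n, g x ∂(sphMeasure n)

/-- The covariant (spherical) gradient on `S^{n-1}` of the restriction of `F`,
i.e. the tangential component of the Euclidean gradient of `F`. -/
def sphGrad (n : ℕ) (F : Euc n → ℝ) (x : Euc n) : Euc n :=
  gradient F x - ⟪gradient F x, x⟫ • x

/-- `√(|∇h|² + h²)` for the (1-homogeneous extension of the) function `F` at `x`. -/
def radTerm (n : ℕ) (F : Euc n → ℝ) (x : Euc n) : ℝ :=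
  Real.sqrt (‖sphGrad n F x‖ ^ 2 + F x ^ 2)

/-- The Euclidean Hessian operator of `F` at `x`. For a positively 1-homogeneous `F`
this operator kills `x` and restricts on `x^⊥` to the matrix `∇²h + hI` of the
spherical Hessian. -/
def hessOp (n : ℕ) (F : Euc n → ℝ) (x : Euc n) : Euc n →L[ℝ] Euc n :=
  fderiv ℝ (gradient F) x

/-- `det(∇²h + hI)` at `x ∈ S^{n-1}`: the determinant of the restriction of the Euclidean
Hessian of the 1-homogeneous extension to `x^⊥`, computed as the determinant of
`Hess F + x ⊗ x` on all of `ℝⁿ` (the Hessian of a 1-homogeneous function kills `x`). -/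
def sphDet (n : ℕ) (F : Euc n → ℝ) (x : Euc n) : ℝ :=
  LinearMap.det
    ((hessOp n F x + (innerSL ℝ x).smulRight x : Euc n →L[ℝ] Euc n) : Euc n →ₗ[ℝ] Euc n)

/-- `F` is the (1-homogeneously extended) support function of a smooth strictly convex
body with the origin in its interior: it is smooth away from the origin, positively
1-homogeneous, positive, and `∇²h + hI` is positive definite on each tangent space. -/
structure IsSupportFn (n : ℕ) (F : Euc n → ℝ) : Prop where
  smooth : ContDiffOn ℝ (⊤ : ℕ∞) F {(0 : Euc n)}ᶜ
  homog : ∀ c : ℝ, 0 < c → ∀ x : Euc n, F (c • x) = c * F x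
  pos : ∀ x ∈ USphere n, 0 < F x
  posdef : ∀ x ∈ USphere n, ∀ v : Euc n, v ≠ 0 → ⟪x, v⟫ = 0 →
    0 < ⟪v, hessOp n F x v⟫

/-- The convex body determined by the support function `F`. -/
def bodyOf (n : ℕ) (F : Euc n → ℝ) : Set (Euc n) :=
  {y | ∀ x ∈ USphere n, ⟪x, y⟫ ≤ F x}

/-- The radial function of the convex body with support function `F`. -/
def radialFn (n : ℕ) (F : Euc n → ℝ) (u : Euc n) : ℝ :=
  sSup {r : ℝ | 0 < r ∧ r • u ∈ bodyOf n F}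

/-- The normalization factor `η` of the flow. -/
def flowEta (n : ℕ) (f : Euc n → ℝ) (φ : ℝ → ℝ) (h : Euc n → ℝ) : ℝ :=
  sphArea n / sphInt n (fun x => f x / φ (1 / h x))

/-- `H : ℝ → Euc n → ℝ` is (the family of support functions of) a smooth, origin-symmetric,
strictly convex solution of the flow on the time interval `J`. -/
structure IsFlowSol (n : ℕ) (f : Euc n → ℝ) (φ : ℝ → ℝ) (J : Set ℝ)
    (H : ℝ → Euc n → ℝ) : Prop where
  smooth : ContDiffOn ℝ (⊤ : ℕ∞) (fun p : ℝ × Euc n => H p.1 p.2) (J ×ˢ {(0 : Euc n)}ᶜ)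
  body : ∀ t ∈ J, IsSupportFn n (H t)
  symm : ∀ t ∈ J, ∀ x : Euc n, H t (-x) = H t x
  eqn : ∀ t ∈ J, ∀ x ∈ USphere n,
    HasDerivWithinAt (fun s => H s x)
      (H t x - flowEta n f φ (H t) * f x * radTerm n (H t) x ^ n /
        (φ (1 / H t x) * sphDet n (H t) x)) J t

/-- Condition (i) of the Orlicz-Aleksandrov flow theorem. -/
def CondI (n : ℕ) (f : Euc n → ℝ) (φ : ℝ → ℝ) (h₀ : Euc n → ℝ) : Prop :=
  ∃ R : ℝ → ℝ, (∀ s ∈ Ioi (0 : ℝ), 0 < R s) ∧ StrictMonoOn R (Ioi 0) ∧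
    Tendsto R (𝓝[>] (0 : ℝ)) (𝓝 0) ∧ Tendsto R atTop atTop ∧
    (∀ s ∈ Ioi (0 : ℝ), IntegrableOn (fun t => 1 / (t * φ t)) (Ioo 0 s) ∧
      R s = ∫ t in Ioo (0 : ℝ) s, 1 / (t * φ t)) ∧
    (∀ s ∈ Ioi (0 : ℝ), HasDerivAt R (1 / (s * φ s)) s ∧ 1 / (s * φ s) ≠ 0) ∧
    ∃ Chat : ℝ, 0 < Chat ∧
      (∀ θ ∈ USphere n,
        sphInt n (fun x => f x * R (1 / |⟪x, θ⟫|)) ≤ Chat) ∧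
      Chat < sphInt n (fun x => f x * R (1 / h₀ x))

/-- Condition (ii) of the Orlicz-Aleksandrov flow theorem. -/
def CondII (φ : ℝ → ℝ) : Prop :=
  ∃ R : ℝ → ℝ, (∀ s ∈ Ioi (0 : ℝ), 0 < R s) ∧ StrictAntiOn R (Ioi 0) ∧
    Tendsto R (𝓝[>] (0 : ℝ)) atTop ∧ Tendsto R atTop (𝓝 0) ∧
    (∀ s ∈ Ioi (0 : ℝ), IntegrableOn (fun t => 1 / (t * φ t)) (Ioi s) ∧
      R s = ∫ t in Ioi s, 1 / (t * φ t)) ∧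
    (∀ s ∈ Ioi (0 : ℝ), HasDerivAt R (-(1 / (s * φ s))) s ∧ 1 / (s * φ s) ≠ 0)

/-! ### Directional derivatives of functions smooth away from the origin -/

/-- The directional derivative `∂_v g` as a function of the base point. -/
def dd {n : ℕ} (v : Euc n) (g : Euc n → ℝ) : Euc n → ℝ := fun x => fderiv ℝ g x v

/-- Smoothness away from the origin. -/
def Sm {n : ℕ} (g : Euc n → ℝ) : Prop := ContDiffOn ℝ (⊤ : ℕ∞) g {(0 : Euc n)}ᶜ

/-- Positive homogeneity of integer degree `p` away from the origin. -/
def Hom {n : ℕ} (p : ℤ) (g : Euc n → ℝ) : Prop :=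
  ∀ c : ℝ, 0 < c → ∀ x : Euc n, x ≠ 0 → g (c • x) = c ^ p * g x

section
variable {n : ℕ} {g : Euc n → ℝ} {x v w : Euc n}

lemma compl_zero_nhds (hx : x ≠ 0) : ({(0 : Euc n)}ᶜ : Set (Euc n)) ∈ 𝓝 x :=
  isOpen_compl_singleton.mem_nhds hx

lemma Sm.contDiffAt (hg : Sm g) (hx : x ≠ 0) : ContDiffAt ℝ (⊤ : ℕ∞) g x :=
  ContDiffOn.contDiffAt hg (compl_zero_nhds hx)

lemma Sm.differentiableAt (hg : Sm g) (hx : x ≠ 0) : DifferentiableAt ℝ g x :=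
  (hg.contDiffAt hx).differentiableAt (by simp)

lemma Sm.continuousOn (hg : Sm g) : ContinuousOn g {(0 : Euc n)}ᶜ := ContDiffOn.continuousOn hg

lemma Sm.contDiffAt_fderiv (hg : Sm g) (hx : x ≠ 0) :
    ContDiffAt ℝ (⊤ : ℕ∞) (fderiv ℝ g) x :=
  (hg.contDiffAt hx).fderiv_right (by simp)

lemma Sm.ddir (hg : Sm g) (v : Euc n) : Sm (dd v g) := by
  intro y hy
  exact ((hg.contDiffAt_fderiv hy).clm_apply contDiffAt_const).contDiffWithinAt

lemma dd_dd_eq (hg : Sm g) (hx : x ≠ 0) (v w : Euc n) :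
    dd v (dd w g) x = fderiv ℝ (fderiv ℝ g) x v w := by
  have h1 : HasFDerivAt (fderiv ℝ g) (fderiv ℝ (fderiv ℝ g) x) x :=
    ((hg.contDiffAt_fderiv hx).differentiableAt (by simp)).hasFDerivAt
  have h2 := h1.clm_apply (hasFDerivAt_const w x)
  have h3 : fderiv ℝ (dd w g) x = _ := h2.fderiv
  rw [dd, h3]; simp

lemma dd_comm (hg : Sm g) (hx : x ≠ 0) (v w : Euc n) :
    dd v (dd w g) x = dd w (dd v g) x := by
  rw [dd_dd_eq hg hx, dd_dd_eq hg hx]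
  exact ((hg.contDiffAt hx).isSymmSndFDerivAt (by simpa using ENat.LEInfty.out)).eq v w

lemma dd_congr {g₁ g₂ : Euc n → ℝ} (h : ∀ y : Euc n, y ≠ 0 → g₁ y = g₂ y) (hx : x ≠ 0) :
    dd v g₁ x = dd v g₂ x := by
  have : g₁ =ᶠ[𝓝 x] g₂ := by
    filter_upwards [compl_zero_nhds hx] with y hy using h y hy
  rw [dd, dd, this.fderiv_eq]

lemma dd_comm_outer (hg : Sm g) (hx : x ≠ 0) (u v w : Euc n) :
    dd u (dd v (dd w g)) x = dd u (dd w (dd v g)) x :=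
  dd_congr (fun _ hy => dd_comm hg hy v w) hx

lemma Hom.ddir {p : ℤ} (hg : Hom p g) (hs : Sm g) (v : Euc n) : Hom (p - 1) (dd v g) := by
  intro c hc x hx
  have hcx : c • x ≠ 0 := smul_ne_zero hc.ne' hx
  have h1 : HasFDerivAt (fun y : Euc n => g (c • y))
      ((fderiv ℝ g (c • x)).comp (c • ContinuousLinearMap.id ℝ (Euc n))) x :=
    HasFDerivAt.comp x (hs.differentiableAt hcx).hasFDerivAt ((hasFDerivAt_id x).const_smul c)
  have h2 : HasFDerivAt (fun y : Euc n => g (c • y)) (c ^ p • fderiv ℝ g x) x := by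
    refine ((hs.differentiableAt hx).hasFDerivAt.const_smul (c ^ p)).congr_of_eventuallyEq ?_
    filter_upwards [compl_zero_nhds hx] with y hy
    simpa using hg c hc y hy
  have h3 := congrArg (fun L : Euc n →L[ℝ] ℝ => L v) (h1.unique h2)
  simp only [ContinuousLinearMap.comp_apply, _root_.smul_apply,
    ContinuousLinearMap.id_apply, map_smul, smul_eq_mul] at h3
  rw [zpow_sub_one₀ hc.ne']
  simp only [dd]
  field_simp
  linarith

lemma line_hasDerivAt (hs : Sm g) {s : ℝ} (h : x + s • v ≠ 0) :
    HasDerivAt (fun s : ℝ => g (x + s • v)) (dd v g (x + s • v)) s := by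
  have h1 : HasDerivAt (fun s : ℝ => x + s • v) v s := by
    simpa using ((hasDerivAt_id s).smul_const v).const_add x
  exact (hs.differentiableAt h).hasFDerivAt.comp_hasDerivAt s h1

/-- Euler's relation for homogeneous functions. -/
lemma Hom.euler {p : ℤ} (hg : Hom p g) (hs : Sm g) (hx : x ≠ 0) : dd x g x = p * g x := by
  have h1 : HasDerivAt (fun s : ℝ => g (x + s • x)) (dd x g (x + (0 : ℝ) • x)) 0 :=
    line_hasDerivAt hs (by simpa using hx)
  have h2 : HasDerivAt (fun s : ℝ => (1 + s) ^ p * g x) (p * g x) 0 := by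
    have := (((hasDerivAt_zpow p (1 + (0 : ℝ)) (by simp)).comp_const_add 1 0)).mul_const (g x)
    simpa using this
  have h3 : (fun s : ℝ => g (x + s • x)) =ᶠ[𝓝 0] fun s : ℝ => (1 + s) ^ p * g x := by
    have : Ioi (-1 : ℝ) ∈ 𝓝 (0 : ℝ) := Ioi_mem_nhds (by norm_num)
    filter_upwards [this] with s hs'
    have hpos : 0 < 1 + s := by simp at hs'; linarith
    rw [← hg (1 + s) hpos x hx, add_smul, one_smul]
  have := (h2.congr_of_eventuallyEq h3).unique h1
  simpa using this.symm

lemma dd_add_left (a b : Euc n) : dd (a + b) g x = dd a g x + dd b g x := by simp [dd]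
lemma dd_smul_left (c : ℝ) (a : Euc n) : dd (c • a) g x = c * dd a g x := by simp [dd]
lemma dd_sum_left {ι : Type*} (s : Finset ι) (a : ι → Euc n) :
    dd (∑ i ∈ s, a i) g x = ∑ i ∈ s, dd (a i) g x := by simp [dd]

lemma dd_add_mid (hs : Sm g) (hx : x ≠ 0) (u a b : Euc n) :
    dd u (dd (a + b) g) x = dd u (dd a g) x + dd u (dd b g) x := by
  simp [dd_dd_eq hs hx]
lemma dd_smul_mid (hs : Sm g) (hx : x ≠ 0) (u : Euc n) (c : ℝ) (a : Euc n) :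
    dd u (dd (c • a) g) x = c * dd u (dd a g) x := by
  simp [dd_dd_eq hs hx]

lemma inner_gradient (v : Euc n) : ⟪gradient g x, v⟫ = dd v g x := by
  simp [gradient, dd]

lemma inner_hessOp (hs : Sm g) (hx : x ≠ 0) (v w : Euc n) :
    ⟪w, hessOp n g x v⟫ = dd v (dd w g) x := by
  rw [dd_dd_eq hs hx, hessOp]
  have h1 : HasFDerivAt (fderiv ℝ g) (fderiv ℝ (fderiv ℝ g) x) x :=
    ((hs.contDiffAt_fderiv hx).differentiableAt (by simp)).hasFDerivAt
  set b := EuclideanSpace.basisFun (Fin n) ℝ with hb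
  have hexp : gradient g = fun y => ∑ i, dd (b i) g y • b i := by
    funext y
    rw [← b.sum_repr' (gradient g y)]
    refine Finset.sum_congr rfl fun i _ => ?_
    rw [real_inner_comm, inner_gradient]
  have hdiff : DifferentiableAt ℝ (gradient g) x := by
    rw [hexp]
    exact DifferentiableAt.fun_sum fun i _ =>
      ((hs.ddir (b i)).differentiableAt hx).smul_const (b i)
  have h2 := (hdiff.hasFDerivAt.inner ℝ (hasFDerivAt_const w x))
  have h3 : HasFDerivAt (fun y => ⟪gradient g y, w⟫)
      ((fderiv ℝ (fderiv ℝ g) x).flip w) x := by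
    have := h1.clm_apply (hasFDerivAt_const w x)
    simp only [inner_gradient]
    rw [ContinuousLinearMap.comp_zero, zero_add] at this
    exact this
  have h4 := congrArg (fun L : Euc n →L[ℝ] ℝ => L v) (h2.unique h3)
  rw [real_inner_comm]
  simpa using h4

end

/-! ### Second-order jets of functions of one real variable -/

/-- `q` has at `0` the value `a`, first derivative `b` and second derivative `c`. -/
def J2 (q : ℝ → ℝ) (a b c : ℝ) : Prop :=
  q 0 = a ∧ ∃ q1 : ℝ → ℝ, (∀ᶠ s in 𝓝 (0 : ℝ), HasDerivAt q (q1 s) s) ∧ q1 0 = b ∧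
    HasDerivAt q1 c 0

section
variable {q p : ℝ → ℝ} {a b c a' b' c' : ℝ}

lemma J2.congr_val (h : J2 q a b c) (ha : a = a') (hb : b = b') (hc : c = c') :
    J2 q a' b' c' := by subst ha hb hc; exact h

lemma J2.hasDerivAt (h : J2 q a b c) : HasDerivAt q b 0 := by
  obtain ⟨_, q1, h1, rfl, _⟩ := h
  exact h1.self_of_nhds

lemma J2.const (k : ℝ) : J2 (fun _ => k) k 0 0 :=
  ⟨rfl, fun _ => 0, Eventually.of_forall fun s => hasDerivAt_const s k, rfl, hasDerivAt_const _ _⟩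

lemma J2.id : J2 (fun s => s) 0 1 0 :=
  ⟨rfl, fun _ => 1, Eventually.of_forall fun s => hasDerivAt_id s, rfl, hasDerivAt_const _ _⟩

lemma J2.add (h : J2 q a b c) (h' : J2 p a' b' c') :
    J2 (fun s => q s + p s) (a + a') (b + b') (c + c') := by
  obtain ⟨rfl, q1, h1, rfl, h2⟩ := h
  obtain ⟨rfl, p1, k1, rfl, k2⟩ := h'
  exact ⟨rfl, fun s => q1 s + p1 s, by filter_upwards [h1, k1] with s x y using x.add y, rfl,
    h2.add k2⟩

lemma J2.mul (h : J2 q a b c) (h' : J2 p a' b' c') :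
    J2 (fun s => q s * p s) (a * a') (b * a' + a * b') (c * a' + 2 * (b * b') + a * c') := by
  obtain ⟨rfl, q1, h1, rfl, h2⟩ := h
  obtain ⟨rfl, p1, k1, rfl, k2⟩ := h'
  refine ⟨rfl, fun s => q1 s * p s + q s * p1 s,
    by filter_upwards [h1, k1] with s x y using x.mul y, rfl, ?_⟩
  have := (h2.mul k1.self_of_nhds).add (h1.self_of_nhds.mul k2)
  exact this.congr_deriv (by ring)

lemma J2.const_mul (k : ℝ) (h : J2 q a b c) :
    J2 (fun s => k * q s) (k * a) (k * b) (k * c) :=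
  ((J2.const k).mul h).congr_val rfl (by ring) (by ring)

lemma J2.neg (h : J2 q a b c) : J2 (fun s => - q s) (-a) (-b) (-c) := by
  have := (h.const_mul (-1)).congr_val (a' := -a) (b' := -b) (c' := -c) (by ring) (by ring) (by ring)
  simpa using this

lemma J2.sub (h : J2 q a b c) (h' : J2 p a' b' c') :
    J2 (fun s => q s - p s) (a - a') (b - b') (c - c') := by
  simpa [sub_eq_add_neg] using h.add h'.neg

lemma J2.sum {ι : Type*} (s : Finset ι) {Q : ι → ℝ → ℝ} {A B C : ι → ℝ}
    (h : ∀ i ∈ s, J2 (Q i) (A i) (B i) (C i)) :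
    J2 (fun t => ∑ i ∈ s, Q i t) (∑ i ∈ s, A i) (∑ i ∈ s, B i) (∑ i ∈ s, C i) := by
  classical
  induction s using Finset.induction_on with
  | empty => simpa using J2.const 0
  | insert i s hi ih =>
    have := (h i (by simp)).add (ih fun j hj => h j (by simp [hj]))
    simpa [Finset.sum_insert hi] using this

lemma J2.congr (h : J2 q a b c) (e : p =ᶠ[𝓝 0] q) : J2 p a b c := by
  obtain ⟨h0, q1, h1, h3, h2⟩ := h
  refine ⟨e.self_of_nhds.trans h0, q1, ?_, h3, h2⟩
  filter_upwards [h1, e.eventuallyEq_nhds] with s x y using x.congr_of_eventuallyEq y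

lemma J2.log (h : J2 q a b c) (ha : 0 < a) :
    J2 (fun s => Real.log (q s)) (Real.log a) (b / a) (c / a - (b / a) ^ 2) := by
  obtain ⟨rfl, q1, h1, rfl, h2⟩ := h
  have hc := h1.self_of_nhds.continuousAt
  have hne : ∀ᶠ s in 𝓝 (0 : ℝ), 0 < q s := hc.eventually (lt_mem_nhds ha)
  refine ⟨rfl, fun s => q1 s / q s, ?_, rfl, ?_⟩
  · filter_upwards [h1, hne] with s x y using x.log y.ne'
  · have := h2.div h1.self_of_nhds ha.ne'
    exact this.congr_deriv (by field_simp)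

/-- The second-derivative test for two functions touching at `0`. -/
lemma J2.le (h : J2 q a b c) (h' : J2 p a b' c') (hle : ∀ᶠ s in 𝓝 (0 : ℝ), q s ≤ p s) :
    b = b' ∧ c ≤ c' := by
  have hd := h'.sub h
  set r : ℝ → ℝ := fun s => p s - q s with hr
  have hr0 : ∀ᶠ s in 𝓝 (0 : ℝ), 0 ≤ r s := by
    filter_upwards [hle] with s hs; simp [hr, hs]
  obtain ⟨h0, r1, h1, h3, h2⟩ := hd
  have h00 : r 0 = 0 := by rw [h0]; ring
  have hmin : IsLocalMin r 0 := by
    filter_upwards [hr0] with s hs; rw [h00]; exact hs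
  have hb : b' - b = 0 := by
    rw [← h3]; exact hmin.hasDerivAt_eq_zero h1.self_of_nhds
  refine ⟨by linarith, ?_⟩
  by_contra hcc
  have hneg : c' - c < 0 := by linarith [not_le.mp hcc]
  -- a negative second derivative would make `r` strictly decreasing to the right of `0`
  have hr1 : r1 0 = 0 := by rw [h3, hb]
  have hsl := hasDerivAt_iff_tendsto_slope.mp h2
  have hev : ∀ᶠ s in 𝓝[>] (0 : ℝ), r1 s < 0 := by
    have h5 : ∀ᶠ s in 𝓝[>] (0 : ℝ), slope r1 0 s < 0 :=
      (hsl.mono_left (nhdsWithin_mono 0 (fun s hs => (ne_of_gt hs)))).eventually (gt_mem_nhds hneg)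
    filter_upwards [h5, self_mem_nhdsWithin] with s hs hs0
    have hs0' : 0 < s := hs0
    rw [slope_def_field, hr1, sub_zero, sub_zero] at hs
    rcases div_neg_iff.mp hs with h | h
    · linarith [h.2]
    · exact h.1
  obtain ⟨e1, he1, H1⟩ := Metric.eventually_nhds_iff.mp h1
  obtain ⟨e2, he2, H2⟩ := Metric.eventually_nhds_iff.mp hr0
  rw [eventually_nhdsWithin_iff] at hev
  obtain ⟨e3, he3, H3⟩ := Metric.eventually_nhds_iff.mp hev
  set e := min e1 (min e2 e3) / 2 with he
  have hepos : 0 < e := by positivity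
  have hmm : min e1 (min e2 e3) ≤ e1 := min_le_left _ _
  have hmm2 : min e1 (min e2 e3) ≤ e2 := (min_le_right _ _).trans (min_le_left _ _)
  have hmm3 : min e1 (min e2 e3) ≤ e3 := (min_le_right _ _).trans (min_le_right _ _)
  obtain ⟨ξ, hξ, hξ'⟩ := exists_hasDerivAt_eq_slope r r1 hepos
    (fun s hs => (H1 (by
      rw [Real.dist_eq, sub_zero, abs_of_nonneg hs.1]; linarith [hs.2])).continuousAt.continuousWithinAt)
    (fun s hs => H1 (by
      rw [Real.dist_eq, sub_zero, abs_of_pos hs.1]; linarith [hs.2]))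
  have hξn : r1 ξ < 0 := H3 (by
      rw [Real.dist_eq, sub_zero, abs_of_pos hξ.1]; linarith [hξ.2]) hξ.1
  have hre : 0 ≤ r e := H2 (by rw [Real.dist_eq, sub_zero, abs_of_pos hepos]; linarith)
  rw [hξ', h00] at hξn
  have : 0 ≤ (r e - 0) / (e - 0) := by
    apply div_nonneg <;> linarith
  linarith

end

lemma J2.line {n : ℕ} {g : Euc n → ℝ} {x : Euc n} (hs : Sm g) (hx : x ≠ 0) (v : Euc n) :
    J2 (fun s => g (x + s • v)) (g x) (dd v g x) (dd v (dd v g) x) := by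
  refine ⟨by simp, fun s => dd v g (x + s • v), ?_, by simp, ?_⟩
  · have hc : ContinuousAt (fun s : ℝ => x + s • v) 0 := by fun_prop
    have : ∀ᶠ s in 𝓝 (0 : ℝ), x + s • v ∈ ({0}ᶜ : Set (Euc n)) :=
      hc.eventually_mem (by simpa using compl_zero_nhds hx)
    filter_upwards [this] with s h using line_hasDerivAt hs h
  · have := line_hasDerivAt (hs.ddir v) (x := x) (v := v) (s := 0) (by simpa using hx)
    simpa using this

/-! ### Support functions: homogeneity, convexity, determinants -/

section
variable {n : ℕ} {F : Euc n → ℝ} {x y v w : Euc n}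

lemma IsSupportFn.sm (hF : IsSupportFn n F) : Sm F := hF.smooth

lemma IsSupportFn.hom (hF : IsSupportFn n F) : Hom 1 F := by
  intro c hc x _
  simpa using hF.homog c hc x

lemma USphere.ne_zero (hx : x ∈ USphere n) : x ≠ 0 := by
  rintro rfl; simp at hx

lemma USphere.norm (hx : x ∈ USphere n) : ‖x‖ = 1 := by simpa using hx

lemma unit_mem (hx : x ≠ 0) : ‖x‖⁻¹ • x ∈ USphere n := by
  simp [norm_smul, norm_ne_zero_iff.mpr hx]

lemma IsSupportFn.pos' (hF : IsSupportFn n F) (hx : x ≠ 0) : 0 < F x := by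
  have h := hF.pos _ (unit_mem hx)
  rw [hF.homog _ (by positivity)] at h
  have : 0 < ‖x‖⁻¹ := by positivity
  exact pos_of_mul_pos_right h this.le

lemma IsSupportFn.euler (hF : IsSupportFn n F) (hx : x ≠ 0) : dd x F x = F x := by
  simpa using hF.hom.euler hF.sm hx

lemma IsSupportFn.dd_radial (hF : IsSupportFn n F) (hx : x ≠ 0) (v : Euc n) :
    dd x (dd v F) x = 0 := by
  simpa using (hF.hom.ddir hF.sm v).euler (hF.sm.ddir v) hx

lemma IsSupportFn.dd_radial' (hF : IsSupportFn n F) (hx : x ≠ 0) (v : Euc n) :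
    dd v (dd x F) x = 0 := by
  rw [dd_comm hF.sm hx, hF.dd_radial hx]

lemma IsSupportFn.hom2 (hF : IsSupportFn n F) (v w : Euc n) : Hom (-1) (dd v (dd w F)) := by
  simpa using (hF.hom.ddir hF.sm w).ddir (hF.sm.ddir w) v

lemma IsSupportFn.ddd_radial (hF : IsSupportFn n F) (hx : x ≠ 0) (v w : Euc n) :
    dd x (dd v (dd w F)) x = - dd v (dd w F) x := by
  have := (hF.hom2 v w).euler ((hF.sm.ddir w).ddir v) hx
  simpa using this

lemma IsSupportFn.hessOp_self (hF : IsSupportFn n F) (hx : x ≠ 0) : hessOp n F x x = 0 := by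
  refine ext_inner_left ℝ fun w => ?_
  rw [inner_hessOp hF.sm hx, hF.dd_radial hx, inner_zero_right]

lemma hessOp_symm (hs : Sm F) (hx : x ≠ 0) (v w : Euc n) :
    ⟪hessOp n F x v, w⟫ = ⟪v, hessOp n F x w⟫ := by
  rw [real_inner_comm, inner_hessOp hs hx, inner_hessOp hs hx, dd_comm hs hx]

lemma IsSupportFn.hess_shift (hF : IsSupportFn n F) (hx : x ≠ 0) (v : Euc n) (c : ℝ) :
    dd (v + c • x) (dd (v + c • x) F) x = dd v (dd v F) x := by
  rw [dd_add_left, dd_add_mid hF.sm hx, dd_add_mid hF.sm hx, dd_smul_left, dd_smul_left,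
    dd_smul_mid hF.sm hx, dd_smul_mid hF.sm hx, hF.dd_radial hx, hF.dd_radial' hx,
    hF.dd_radial hx]
  ring

/-- The Hessian is positive on vectors that are not radial. -/
lemma IsSupportFn.hess_pos (hF : IsSupportFn n F) (hx : x ≠ 0)
    (hv : ∀ c : ℝ, v + c • x ≠ 0) : 0 < dd v (dd v F) x := by
  set c : ℝ := -(⟪x, v⟫ / ‖x‖ ^ 2) with hc
  have hxn : ‖x‖ ≠ 0 := norm_ne_zero_iff.mpr hx
  have horth : ⟪x, v + c • x⟫ = 0 := by
    rw [inner_add_right, inner_smul_right, real_inner_self_eq_norm_sq, hc]; field_simp; ring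
  have h1 := hF.posdef _ (unit_mem hx) (v + c • x) (hv c)
    (by rw [real_inner_smul_left, horth, mul_zero])
  rw [inner_hessOp hF.sm (smul_ne_zero (inv_ne_zero hxn) hx),
    hF.hom2 _ _ _ (by positivity) x hx, hF.hess_shift hx] at h1
  have : 0 < (‖x‖⁻¹ : ℝ) ^ (-1 : ℤ) := by positivity
  exact pos_of_mul_pos_right h1 this.le

lemma IsSupportFn.hess_nonneg (hF : IsSupportFn n F) (hx : x ≠ 0) : 0 ≤ dd v (dd v F) x := by
  by_cases hv : ∀ c : ℝ, v + c • x ≠ 0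
  · exact (hF.hess_pos hx hv).le
  · push Not at hv
    obtain ⟨c, hc⟩ := hv
    have h0 := hF.hess_shift hx v c
    rw [hc] at h0
    rw [← h0]; simp [dd]

/-- Strict support inequality: `∇F(x)` is the only boundary point with outer normal `x`. -/
lemma IsSupportFn.support_lt (hF : IsSupportFn n F) (hx : x ∈ USphere n) (hy : y ∈ USphere n)
    (hxy : x ≠ y) : dd y F x < F y := by
  have hx0 := USphere.ne_zero hx
  have nx := USphere.norm hx
  have ny := USphere.norm hy
  by_cases hopp : y = -x
  · have h1 : dd y F x = - F x := by
      rw [hopp, ← neg_one_smul ℝ x, dd_smul_left, hF.euler hx0]; ring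
    rw [h1]; linarith [hF.pos x hx, hF.pos y hy]
  have hz : ∀ s : ℝ, x + s • (y - x) ≠ 0 := by
    intro s h0
    have e : (1 - s) • x = -(s • y) := by
      rw [eq_neg_iff_add_eq_zero, ← h0]; module
    have e2 := congrArg norm e
    rw [norm_neg, norm_smul, norm_smul, nx, ny, mul_one, mul_one, Real.norm_eq_abs,
      Real.norm_eq_abs] at e2
    have hs : s = 1 / 2 := by
      rcases abs_eq_abs.mp e2 with h | h <;> linarith
    rw [hs] at e
    apply hopp
    have : (2 : ℝ) • ((1 - 1/2 : ℝ) • x) = (2 : ℝ) • (-((1/2 : ℝ) • y)) := by rw [e]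
    have h3 : x = -y := by
      rw [smul_neg, smul_smul, smul_smul] at this
      norm_num at this
      exact this
    rw [h3, neg_neg]
  have hpos : ∀ s : ℝ, 0 < dd (y - x) (dd (y - x) F) (x + s • (y - x)) := by
    intro s
    refine hF.hess_pos (hz s) fun c h0 => ?_
    have e : (1 + c * s) • y = (1 + c * s - c) • x := by
      rw [← sub_eq_zero, ← h0]; module
    have e2 := congrArg norm e
    rw [norm_smul, norm_smul, nx, ny, mul_one, mul_one, Real.norm_eq_abs, Real.norm_eq_abs] at e2
    rcases abs_eq_abs.mp e2 with h | h
    · have hc : c = 0 := by linarith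
      subst hc
      simp at e; exact hxy e.symm
    · have e3 : (1 + c * s) • (y + x) = 0 := by
        have : (1 + c * s - c) = -(1 + c * s) := by linarith
        rw [this] at e
        rw [smul_add, e]; module
      rcases smul_eq_zero.mp e3 with h4 | h4
      · have hc : c = 0 := by linarith
        subst hc; simp at h4
      · exact hopp (eq_neg_of_add_eq_zero_left h4)
  have hd1 : ∀ s : ℝ, HasDerivAt (fun s => F (x + s • (y - x)))
      (dd (y - x) F (x + s • (y - x))) s := fun s => line_hasDerivAt hF.sm (hz s)
  have hd2 : ∀ s : ℝ, HasDerivAt (fun s => dd (y - x) F (x + s • (y - x)))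
      (dd (y - x) (dd (y - x) F) (x + s • (y - x))) s :=
    fun s => line_hasDerivAt (hF.sm.ddir _) (hz s)
  obtain ⟨ξ, hξ, e1⟩ := exists_hasDerivAt_eq_slope _ _ (zero_lt_one (α := ℝ))
    (fun s _ => (hd1 s).continuousAt.continuousWithinAt) (fun s _ => hd1 s)
  obtain ⟨ζ, hζ, e2⟩ := exists_hasDerivAt_eq_slope _ _ hξ.1
    (fun s _ => (hd2 s).continuousAt.continuousWithinAt) (fun s _ => hd2 s)
  have hp := hpos ζ
  rw [e2] at hp
  have hp' := (div_pos_iff_of_pos_right (by linarith [hξ.1])).mp hp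
  rw [e1] at hp'
  simp only [one_smul, zero_smul, add_zero, sub_zero, div_one, add_sub_cancel] at hp'
  have : dd y F x = dd (y - x) F x + dd x F x := by rw [← dd_add_left]; simp
  rw [this, hF.euler hx0]; linarith

lemma IsSupportFn.support_le (hF : IsSupportFn n F) (hx : x ∈ USphere n) (hy : y ∈ USphere n) :
    dd y F x ≤ F y := by
  rcases eq_or_ne x y with rfl | h
  · rw [hF.euler (USphere.ne_zero hx)]
  · exact (hF.support_lt hx hy h).le

lemma IsSupportFn.norm_gradient_le (hF : IsSupportFn n F) {M : ℝ} (hx : x ∈ USphere n)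
    (hM : ∀ y ∈ USphere n, F y ≤ M) : ‖gradient F x‖ ≤ M := by
  by_cases h0 : gradient F x = 0
  · rw [h0, norm_zero]; exact (hF.pos x hx).le.trans (hM x hx)
  · have h := hF.support_le hx (unit_mem h0)
    rw [← inner_gradient, real_inner_smul_right, real_inner_self_eq_norm_sq] at h
    have hn : ‖gradient F x‖ ≠ 0 := norm_ne_zero_iff.mpr h0
    calc ‖gradient F x‖ = ‖gradient F x‖⁻¹ * ‖gradient F x‖ ^ 2 := by field_simp
      _ ≤ _ := h.trans (hM _ (unit_mem h0))

lemma IsSupportFn.le_norm_gradient (hF : IsSupportFn n F) (hx : x ∈ USphere n) :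
    F x ≤ ‖gradient F x‖ := by
  rw [← hF.euler (USphere.ne_zero hx), ← inner_gradient]
  calc _ ≤ ‖gradient F x‖ * ‖x‖ := real_inner_le_norm _ _
    _ = _ := by rw [USphere.norm hx, mul_one]

lemma IsSupportFn.gradient_ne_zero (hF : IsSupportFn n F) (hx : x ∈ USphere n) :
    gradient F x ≠ 0 :=
  norm_pos_iff.mp ((hF.pos x hx).trans_le (hF.le_norm_gradient hx))

lemma IsSupportFn.gradient_smul (hF : IsSupportFn n F) (hx : x ≠ 0) {c : ℝ} (hc : 0 < c) :
    gradient F (c • x) = gradient F x := by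
  refine ext_inner_right ℝ fun v => ?_
  rw [inner_gradient, inner_gradient]
  simpa using hF.hom.ddir hF.sm v c hc x hx

lemma IsSupportFn.radTerm_eq (hF : IsSupportFn n F) (hx : x ∈ USphere n) :
    radTerm n F x = ‖gradient F x‖ := by
  have nx := USphere.norm hx
  have h : ‖sphGrad n F x‖ ^ 2 + F x ^ 2 = ‖gradient F x‖ ^ 2 := by
    rw [sphGrad, norm_sub_sq_real, real_inner_smul_right, norm_smul, nx, inner_gradient,
      hF.euler (USphere.ne_zero hx), mul_one, Real.norm_eq_abs, sq_abs]
    ring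
  rw [radTerm, h, Real.sqrt_sq (norm_nonneg _)]

/-- The operator `Hess F + x ⊗ x` whose determinant is `sphDet`. -/
def dOp (n : ℕ) (F : Euc n → ℝ) (x : Euc n) : Euc n →L[ℝ] Euc n :=
  hessOp n F x + (innerSL ℝ x).smulRight x

lemma dOp_apply (v : Euc n) : dOp n F x v = hessOp n F x v + ⟪x, v⟫ • x := by
  simp [dOp]

lemma inner_dOp (hs : Sm F) (hx : x ≠ 0) (v : Euc n) :
    ⟪v, dOp n F x v⟫ = dd v (dd v F) x + ⟪x, v⟫ ^ 2 := by
  rw [dOp_apply, inner_add_right, inner_hessOp hs hx, real_inner_smul_right, real_inner_comm]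
  ring

lemma IsSupportFn.dOp_pos (hF : IsSupportFn n F) (hx : x ∈ USphere n) (hv : v ≠ 0) :
    0 < ⟪v, dOp n F x v⟫ := by
  have hx0 := USphere.ne_zero hx
  rw [inner_dOp hF.sm hx0]
  by_cases h : ∀ c : ℝ, v + c • x ≠ 0
  · have := hF.hess_pos hx0 h; positivity
  · push Not at h
    obtain ⟨c, hc⟩ := h
    have hv' : v = (-c) • x := by rw [neg_smul]; exact eq_neg_of_add_eq_zero_left hc
    have hc0 : c ≠ 0 := by rintro rfl; simp at hv'; exact hv hv'
    have h1 : ⟪x, v⟫ = -c := by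
      rw [hv', real_inner_smul_right, real_inner_self_eq_norm_sq, USphere.norm hx]; ring
    have := hF.hess_nonneg hx0 (v := v)
    rw [h1]
    have : 0 < (-c) ^ 2 := by rw [neg_sq]; positivity
    linarith

/-- Hadamard's determinant inequality for real positive definite matrices. -/
lemma hadamard_matrix {ι : Type*} [Fintype ι] [DecidableEq ι] {A : Matrix ι ι ℝ}
    (hA : A.PosDef) : A.det ≤ ∏ i, A i i := by
  have hd : ∀ i, 0 < A i i := fun i => hA.diag_pos
  set E : Matrix ι ι ℝ := Matrix.diagonal fun i => (Real.sqrt (A i i))⁻¹ with hE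
  have hEdet : E.det ≠ 0 := by
    rw [hE, Matrix.det_diagonal]
    exact Finset.prod_ne_zero_iff.mpr fun i _ => inv_ne_zero (Real.sqrt_pos.mpr (hd i)).ne'
  have hEu : IsUnit E := (Matrix.isUnit_iff_isUnit_det E).mpr (isUnit_iff_ne_zero.mpr hEdet)
  have hEh : E.conjTranspose = E := by
    rw [hE, Matrix.diagonal_conjTranspose]; congr 1
  have hB : (E * A * E).PosDef := by
    have := hA.conjTranspose_mul_mul_same (B := E) (Matrix.mulVec_injective_of_isUnit hEu)
    rwa [hEh] at this
  have htr : (E * A * E).trace = Fintype.card ι := by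
    rw [Matrix.trace]
    have : ∀ i, (E * A * E).diag i = 1 := by
      intro i
      have hs := Real.mul_self_sqrt (hd i).le
      have hs0 := (Real.sqrt_pos.mpr (hd i)).ne'
      rw [Matrix.diag_apply, hE, Matrix.mul_diagonal, Matrix.diagonal_mul]
      field_simp
      linarith
    rw [Finset.sum_congr rfl (fun i _ => this i)]
    simp
  have hdet : (E * A * E).det ≤ 1 := by
    have h1 := hB.isHermitian.det_eq_prod_eigenvalues
    have h2 := hB.isHermitian.trace_eq_sum_eigenvalues
    simp only [RCLike.ofReal_real_eq_id, id_eq] at h1 h2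
    rw [h1]
    calc ∏ i, hB.isHermitian.eigenvalues i
        ≤ ∏ i, Real.exp (hB.isHermitian.eigenvalues i - 1) :=
          Finset.prod_le_prod (fun i _ => (hB.eigenvalues_pos i).le)
            (fun i _ => by linarith [Real.add_one_le_exp (hB.isHermitian.eigenvalues i - 1)])
      _ = 1 := by
          rw [← Real.exp_sum, Finset.sum_sub_distrib, ← h2, htr]; simp
  have hprod : E.det * E.det * ∏ i, A i i = 1 := by
    rw [hE, Matrix.det_diagonal, ← Finset.prod_mul_distrib, ← Finset.prod_mul_distrib]
    refine Finset.prod_eq_one fun i _ => ?_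
    have hs := Real.mul_self_sqrt (hd i).le
    have hs0 := (Real.sqrt_pos.mpr (hd i)).ne'
    field_simp
    linarith
  rw [Matrix.det_mul, Matrix.det_mul] at hdet
  have hpos : 0 < E.det * E.det := mul_self_pos.mpr hEdet
  refine le_of_mul_le_mul_left ?_ hpos
  rw [hprod]; linarith

lemma hadamard_op (b : OrthonormalBasis (Fin n) ℝ (Euc n)) (L : Euc n →L[ℝ] Euc n)
    (hsym : ∀ v w, ⟪L v, w⟫ = ⟪v, L w⟫) (hpos : ∀ v, v ≠ 0 → 0 < ⟪v, L v⟫) :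
    0 < LinearMap.det (L : Euc n →ₗ[ℝ] Euc n) ∧
    LinearMap.det (L : Euc n →ₗ[ℝ] Euc n) ≤ ∏ i, ⟪b i, L (b i)⟫ := by
  set A : Matrix (Fin n) (Fin n) ℝ := LinearMap.toMatrix b.toBasis b.toBasis (L : Euc n →ₗ[ℝ] Euc n)
    with hAdef
  have hAij : ∀ i j, A i j = ⟪b i, L (b j)⟫ := by
    intro i j
    rw [hAdef, LinearMap.toMatrix_apply]
    simp [b.repr_apply_apply]
  have hA : A.PosDef := by
    refine Matrix.PosDef.of_dotProduct_mulVec_pos ?_ ?_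
    · ext i j
      rw [Matrix.conjTranspose_apply, hAij, hAij, star_trivial, ← hsym, real_inner_comm]
    · intro z hz
      set v : Euc n := ∑ i, z i • b i with hv
      have hrep : ∀ i, ⟪b i, v⟫ = z i := by
        intro i
        rw [hv, inner_sum]
        simp [real_inner_smul_right, b.inner_eq_ite]
      have hv0 : v ≠ 0 := by
        intro h0
        apply hz; funext i; rw [← hrep i, h0]; simp
      have h := hpos v hv0
      have : ⟪v, L v⟫ = star z ⬝ᵥ A.mulVec z := by
        conv_lhs => rw [hv]
        rw [map_sum, sum_inner]
        simp only [dotProduct, Matrix.mulVec, hAij, star_trivial, inner_sum, map_smul,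
          real_inner_smul_left, real_inner_smul_right]
        refine Finset.sum_congr rfl fun i _ => ?_
        rw [Finset.mul_sum]
        exact Finset.sum_congr rfl fun j _ => by ring
      rwa [this] at h
  have hdet : LinearMap.det (L : Euc n →ₗ[ℝ] Euc n) = A.det := by
    rw [hAdef, LinearMap.det_toMatrix]
  rw [hdet]
  refine ⟨hA.det_pos, (hadamard_matrix hA).trans_eq ?_⟩
  exact Finset.prod_congr rfl fun i _ => hAij i i

lemma dOp_symm (hs : Sm F) (hx : x ≠ 0) (v w : Euc n) :
    ⟪dOp n F x v, w⟫ = ⟪v, dOp n F x w⟫ := by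
  rw [dOp_apply, dOp_apply, inner_add_left, inner_add_right, hessOp_symm hs hx,
    real_inner_smul_left, real_inner_smul_right, real_inner_comm v x]
  ring

lemma sphDet_eq : sphDet n F x = LinearMap.det (dOp n F x : Euc n →ₗ[ℝ] Euc n) := rfl

lemma IsSupportFn.sphDet_pos (hF : IsSupportFn n F) (hx : x ∈ USphere n) : 0 < sphDet n F x :=
  (hadamard_op (EuclideanSpace.basisFun (Fin n) ℝ) _ (dOp_symm hF.sm (USphere.ne_zero hx))
    fun _ hv => hF.dOp_pos hx hv).1

lemma IsSupportFn.sphDet_le (hF : IsSupportFn n F) (hx : x ∈ USphere n)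
    (b : OrthonormalBasis (Fin n) ℝ (Euc n)) :
    sphDet n F x ≤ ∏ i, (dd (b i) (dd (b i) F) x + ⟪x, b i⟫ ^ 2) := by
  have h := (hadamard_op b _ (dOp_symm hF.sm (USphere.ne_zero hx))
    fun _ hv => hF.dOp_pos hx hv).2
  refine h.trans_eq (Finset.prod_congr rfl fun i _ => inner_dOp hF.sm (USphere.ne_zero hx) _)

/-- An orthonormal frame at `x`, containing `x` itself, that diagonalises the Hessian of `F`. -/
structure EigenFrame (n : ℕ) (F : Euc n → ℝ) (x : Euc n) where
  b : OrthonormalBasis (Fin n) ℝ (Euc n)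
  o : Fin n
  lam : Fin n → ℝ
  b_o : b o = x
  lam_o : lam o = 0
  lam_pos : ∀ i, i ≠ o → 0 < lam i
  eig : ∀ i, hessOp n F x (b i) = lam i • b i

lemma IsSupportFn.exists_frame (hF : IsSupportFn n F) (hx : x ∈ USphere n) :
    Nonempty (EigenFrame n F x) := by
  have hx0 := USphere.ne_zero hx
  have hsym : (hessOp n F x : Euc n →ₗ[ℝ] Euc n).IsSymmetric := fun v w => hessOp_symm hF.sm hx0 v w
  have hn : Module.finrank ℝ (Euc n) = n := by simp
  set b := hsym.eigenvectorBasis hn with hb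
  set lam := hsym.eigenvalues hn with hlam
  have heig : ∀ i, hessOp n F x (b i) = lam i • b i := fun i => by
    exact hsym.apply_eigenvectorBasis hn i
  have hxe : ∀ i, lam i * ⟪x, b i⟫ = 0 := by
    intro i
    rw [← real_inner_smul_right, ← heig, ← hessOp_symm hF.sm hx0, hF.hessOp_self hx0,
      inner_zero_left]
  obtain ⟨o, ho⟩ : ∃ o, ⟪x, b o⟫ ≠ 0 := by
    by_contra! h
    apply hx0
    rw [← b.sum_repr' x]
    exact Finset.sum_eq_zero fun i _ => by rw [real_inner_comm, h i, zero_smul]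
  have hlo : lam o = 0 := (mul_eq_zero.mp (hxe o)).resolve_right ho
  have hpar : ∃ c : ℝ, b o + c • x = 0 := by
    by_contra! h
    have := hF.hess_pos hx0 h
    rw [← inner_hessOp hF.sm hx0, heig, hlo, zero_smul, inner_zero_right] at this
    exact lt_irrefl _ this
  obtain ⟨c, hc⟩ := hpar
  have hbo : b o = (-c) • x := by rw [neg_smul]; exact eq_neg_of_add_eq_zero_left hc
  have hc1 : |c| = 1 := by
    have := b.norm_eq_one o
    rw [hbo, norm_smul, USphere.norm hx, mul_one, norm_neg, Real.norm_eq_abs] at this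
    exact this
  have hpos : ∀ i, i ≠ o → 0 < lam i := by
    intro i hi
    have hxi : ⟪x, b i⟫ = 0 := by
      have := b.inner_eq_zero hi.symm
      rw [hbo, real_inner_smul_left] at this
      rcases mul_eq_zero.mp this with h | h
      · exfalso; rw [neg_eq_zero] at h; rw [h] at hc1; simp at hc1
      · exact h
    have h := hF.posdef x hx (b i) (b.orthonormal.ne_zero i) hxi
    rw [heig, real_inner_smul_right, real_inner_self_eq_norm_sq, b.norm_eq_one] at h
    simpa using h
  rcases (abs_eq zero_le_one).mp hc1 with h | h
  · refine ⟨⟨b.map (LinearIsometryEquiv.neg ℝ), o, lam, ?_, hlo, hpos, ?_⟩⟩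
    · simp [hbo, h]
    · intro i; simp [heig]
  · exact ⟨⟨b, o, lam, by rw [hbo, h]; simp, hlo, hpos, heig⟩⟩

namespace EigenFrame
variable (E : EigenFrame n F x)

/-- The indices of the tangential members of the frame. -/
def tan : Finset (Fin n) := Finset.univ.erase E.o

lemma mem_tan {i : Fin n} : i ∈ E.tan ↔ i ≠ E.o := by simp [tan]

lemma inner_x {i : Fin n} (hi : i ≠ E.o) : ⟪x, E.b i⟫ = 0 := by
  have h := E.b.inner_eq_zero hi.symm
  rwa [E.b_o] at h

lemma card_tan : (E.tan.card : ℝ) = n - 1 := by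
  have h : 0 < n := E.o.pos
  rw [tan, Finset.card_erase_of_mem (Finset.mem_univ _), Finset.card_univ, Fintype.card_fin]
  push_cast [Nat.cast_sub h]; ring

lemma hess (hF : IsSupportFn n F) (hx : x ≠ 0) (i j : Fin n) :
    dd (E.b i) (dd (E.b j) F) x = if i = j then E.lam i else 0 := by
  rw [← inner_hessOp hF.sm hx, E.eig, real_inner_smul_right, E.b.inner_eq_ite]
  by_cases h : i = j <;> simp [h, eq_comm]

lemma prod_eq (f : Fin n → ℝ) : ∏ i, f i = f E.o * ∏ i ∈ E.tan, f i :=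
  (Finset.mul_prod_erase _ _ (Finset.mem_univ _)).symm

lemma sum_eq (f : Fin n → ℝ) : ∑ i, f i = f E.o + ∑ i ∈ E.tan, f i :=
  (Finset.add_sum_erase _ _ (Finset.mem_univ _)).symm

lemma sphDet_eq (hx : x ∈ USphere n) : sphDet n F x = ∏ i ∈ E.tan, E.lam i := by
  set d : Fin n → ℝ := fun i => if i = E.o then 1 else E.lam i with hd
  have h : LinearMap.toMatrix E.b.toBasis E.b.toBasis (dOp n F x : Euc n →ₗ[ℝ] Euc n) =
      Matrix.diagonal d := by
    ext i j
    rw [LinearMap.toMatrix_apply]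
    simp only [OrthonormalBasis.coe_toBasis, ContinuousLinearMap.coe_coe,
      OrthonormalBasis.coe_toBasis_repr_apply, OrthonormalBasis.repr_apply_apply, dOp_apply, E.eig,
      inner_add_right, real_inner_smul_right, E.b.inner_eq_ite, Matrix.diagonal_apply, hd]
    by_cases hj : j = E.o
    · subst hj
      rw [E.b_o, E.lam_o, real_inner_self_eq_norm_sq, USphere.norm hx]
      have : ⟪E.b i, x⟫ = if i = E.o then 1 else 0 := by
        have h := E.b.inner_eq_ite i E.o
        rwa [E.b_o] at h
      rw [this]
      by_cases hi : i = E.o <;> simp [hi]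
    · rw [E.inner_x hj]
      by_cases hi : i = j
      · subst hi; simp [hj]
      · simp [hi]
  rw [_root_.sphDet_eq, ← LinearMap.det_toMatrix E.b.toBasis, h, Matrix.det_diagonal, E.prod_eq]
  have h1 : d E.o = 1 := by simp [hd]
  rw [h1, one_mul]
  refine Finset.prod_congr rfl fun i hi => ?_
  simp [hd, E.mem_tan.mp hi]

end EigenFrame
end

/-! ### The Gauss map and its Jacobian -/

section
variable {n : ℕ} {F : Euc n → ℝ} {x y v w : Euc n}

/-- The outer radial direction `∇F(x)/|∇F(x)|` of the boundary point with normal `x`. -/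
def radDir (F : Euc n → ℝ) (x : Euc n) : Euc n := ‖gradient F x‖⁻¹ • gradient F x

/-- The Jacobian of `radDir` on the sphere. -/
def radJac (n : ℕ) (F : Euc n → ℝ) (x : Euc n) : ℝ :=
  F x * sphDet n F x / ‖gradient F x‖ ^ n

/-- The `1`-homogeneous extension of the inverse Gauss map. -/
def gaussT (F : Euc n → ℝ) (y : Euc n) : Euc n := ‖y‖ • gradient F y

lemma gradient_expand (F : Euc n → ℝ) :
    gradient F = fun y => ∑ i, dd (EuclideanSpace.basisFun (Fin n) ℝ i) F y •
      EuclideanSpace.basisFun (Fin n) ℝ i := by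
  funext y
  rw [← (EuclideanSpace.basisFun (Fin n) ℝ).sum_repr' (gradient F y)]
  refine Finset.sum_congr rfl fun i _ => ?_
  rw [real_inner_comm, inner_gradient]

lemma Sm.gradient_contDiffAt (hs : Sm F) (hx : x ≠ 0) : ContDiffAt ℝ (⊤ : ℕ∞) (gradient F) x := by
  rw [gradient_expand]
  exact ContDiffAt.sum fun i _ => ((hs.ddir _).contDiffAt hx).smul contDiffAt_const

lemma Sm.gradient_hasFDerivAt (hs : Sm F) (hx : x ≠ 0) :
    HasFDerivAt (gradient F) (hessOp n F x) x :=
  ((hs.gradient_contDiffAt hx).differentiableAt (by simp)).hasFDerivAt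

lemma IsSupportFn.hessOp_unit (hF : IsSupportFn n F) (hx : x ≠ 0) :
    ‖x‖ • hessOp n F x = hessOp n F (‖x‖⁻¹ • x) := by
  have hxn : ‖x‖ ≠ 0 := norm_ne_zero_iff.mpr hx
  ext1 v
  refine ext_inner_left ℝ fun w => ?_
  rw [inner_hessOp hF.sm (smul_ne_zero (inv_ne_zero hxn) hx), hF.hom2 _ _ _ (by positivity) x hx]
  change ⟪w, ‖x‖ • hessOp n F x v⟫ = _
  rw [real_inner_smul_right, inner_hessOp hF.sm hx]
  simp

lemma IsSupportFn.gradient_unit (hF : IsSupportFn n F) (hx : x ≠ 0) :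
    gradient F (‖x‖⁻¹ • x) = gradient F x :=
  hF.gradient_smul hx (by have := norm_pos_iff.mpr hx; positivity)

lemma norm_hasFDerivAt (hx : x ≠ 0) :
    HasFDerivAt (fun y : Euc n => ‖y‖) (innerSL ℝ (‖x‖⁻¹ • x)) x := by
  have hxn : ‖x‖ ≠ 0 := norm_ne_zero_iff.mpr hx
  have h := (hasStrictFDerivAt_norm_sq x).hasFDerivAt.sqrt (pow_ne_zero 2 hxn)
  have e : (fun y : Euc n => ‖y‖) = fun y => Real.sqrt (‖y‖ ^ 2) := by
    funext y; rw [Real.sqrt_sq (norm_nonneg _)]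
  rw [e]
  refine h.congr_fderiv ?_
  ext v
  rw [Real.sqrt_sq (norm_nonneg _)]
  simp
  field_simp

/-- The differential of `gaussT`, as a function of the unit normal. -/
def gaussL (n : ℕ) (F : Euc n → ℝ) (x : Euc n) : Euc n →L[ℝ] Euc n :=
  hessOp n F x + (innerSL ℝ x).smulRight (gradient F x)

lemma IsSupportFn.gaussT_hasFDerivAt (hF : IsSupportFn n F) (hx : x ≠ 0) :
    HasFDerivAt (gaussT F) (gaussL n F (‖x‖⁻¹ • x)) x := by
  have h := (norm_hasFDerivAt hx).smul (hF.sm.gradient_hasFDerivAt hx)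
  refine h.congr_fderiv ?_
  rw [gaussL, hF.gradient_unit hx, ← hF.hessOp_unit hx]

lemma IsSupportFn.gaussL_det (hF : IsSupportFn n F) (hx : x ∈ USphere n) :
    (gaussL n F x).det = F x * sphDet n F x := by
  have hx0 := USphere.ne_zero hx
  have h : (gaussL n F x : Euc n →ₗ[ℝ] Euc n) =
      (LinearMap.transvection (innerSL ℝ x : Euc n →ₗ[ℝ] ℝ) (gradient F x - x)).comp
        (dOp n F x : Euc n →ₗ[ℝ] Euc n) := by
    ext1 v
    have h1 : ⟪x, hessOp n F x v⟫ = 0 := by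
      rw [← hessOp_symm hF.sm hx0, hF.hessOp_self hx0, inner_zero_left]
    have h2 : ⟪x, dOp n F x v⟫ = ⟪x, v⟫ := by
      rw [dOp_apply, inner_add_right, h1, real_inner_smul_right, real_inner_self_eq_norm_sq,
        USphere.norm hx]; ring
    change hessOp n F x v + ⟪x, v⟫ • gradient F x =
      dOp n F x v + ⟪x, dOp n F x v⟫ • (gradient F x - x)
    rw [h2, dOp_apply, smul_sub]; abel
  change LinearMap.det (gaussL n F x : Euc n →ₗ[ℝ] Euc n) = _
  rw [h, LinearMap.det_comp, LinearMap.transvection.det, sphDet_eq]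
  congr 1
  change 1 + ⟪x, gradient F x - x⟫ = F x
  rw [inner_sub_right, real_inner_comm, inner_gradient, hF.euler hx0, real_inner_self_eq_norm_sq,
    USphere.norm hx]
  ring

lemma IsSupportFn.gradient_inj (hF : IsSupportFn n F) (hx : x ∈ USphere n) (hy : y ∈ USphere n)
    {a b : ℝ} (ha : 0 < a) (hb : 0 < b) (h : a • gradient F x = b • gradient F y) :
    x = y ∧ a = b := by
  have key : ∀ {x y : Euc n} {a b : ℝ}, x ∈ USphere n → y ∈ USphere n → 0 < a → 0 < b →
      a • gradient F x = b • gradient F y → x ≠ y → b < a := by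
    intro x y a b hx hy ha hb h hne
    have h1 := hF.support_lt hx hy hne
    have h2 : a * dd y F x = b * F y := by
      rw [← inner_gradient, ← real_inner_smul_left, h, real_inner_smul_left, inner_gradient,
        hF.euler (USphere.ne_zero hy)]
    have h3 := hF.pos y hy
    have : b * F y < a * F y := by rw [← h2]; exact mul_lt_mul_of_pos_left h1 ha
    exact lt_of_mul_lt_mul_right this h3.le
  have hxy : x = y := by
    by_contra hne
    exact lt_asymm (key hx hy ha hb h hne) (key hy hx hb ha h.symm (Ne.symm hne))
  subst hxy
  refine ⟨rfl, ?_⟩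
  have : (a - b) • gradient F x = 0 := by rw [sub_smul, h, sub_self]
  rcases smul_eq_zero.mp this with h | h
  · linarith
  · exact absurd h (hF.gradient_ne_zero hx)

lemma IsSupportFn.gaussT_injOn (hF : IsSupportFn n F) : InjOn (gaussT F) {(0 : Euc n)}ᶜ := by
  intro x hx y hy h
  have hx' : x ≠ 0 := hx
  have hy' : y ≠ 0 := hy
  simp only [gaussT] at h
  rw [← hF.gradient_unit hx', ← hF.gradient_unit hy'] at h
  obtain ⟨h1, h2⟩ := hF.gradient_inj (unit_mem hx') (unit_mem hy') (norm_pos_iff.mpr hx')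
    (norm_pos_iff.mpr hy') h
  have : ‖x‖ • (‖x‖⁻¹ • x) = ‖x‖ • (‖y‖⁻¹ • y) := by rw [h1]
  rw [smul_inv_smul₀ (norm_ne_zero_iff.mpr hx')] at this
  rw [this, h2, smul_inv_smul₀ (norm_ne_zero_iff.mpr hy')]

/-- The reciprocal of the radial function, `κ(u) = max_x ⟨x,u⟩ / F(x)`. -/
def invRad (n : ℕ) (F : Euc n → ℝ) (u : Euc n) : ℝ :=
  sSup ((fun x => ⟪x, u⟫ / F x) '' USphere n)

lemma IsSupportFn.invRad_cont (hF : IsSupportFn n F) (u : Euc n) :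
    ContinuousOn (fun x => ⟪x, u⟫ / F x) (USphere n) := by
  refine ContinuousOn.div (by fun_prop) (hF.sm.continuousOn.mono fun x hx => USphere.ne_zero hx)
    fun x hx => (hF.pos x hx).ne'

lemma IsSupportFn.exists_invRad (hF : IsSupportFn n F) (hv : v ∈ USphere n) (u : Euc n) :
    ∃ x ∈ USphere n, invRad n F u = ⟪x, u⟫ / F x ∧ ∀ y ∈ USphere n, ⟪y, u⟫ / F y ≤ invRad n F u := by
  obtain ⟨x, hx, hx1, hx2⟩ := (isCompact_sphere (0 : Euc n) 1).exists_sSup_image_eq_and_ge ⟨v, hv⟩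
    (hF.invRad_cont u)
  exact ⟨x, hx, hx1, fun y hy => (hx2 y hy).trans_eq hx1.symm⟩

lemma IsSupportFn.le_invRad (hF : IsSupportFn n F) (hx : x ∈ USphere n) (u : Euc n) :
    ⟪x, u⟫ / F x ≤ invRad n F u := by
  obtain ⟨_, _, _, h⟩ := hF.exists_invRad hx u
  exact h x hx

/-- At a maximising normal `x` the radial direction `u` is proportional to `∇F(x)`. -/
lemma IsSupportFn.exists_normal (hF : IsSupportFn n F) (hu : v ∈ USphere n) :
    ∃ x ∈ USphere n, 0 < invRad n F v ∧ v = invRad n F v • gradient F x := by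
  obtain ⟨x, hx, hx1, hx2⟩ := hF.exists_invRad hu v
  have hκ : 0 < invRad n F v := by
    refine lt_of_lt_of_le ?_ (hx2 v hu)
    rw [real_inner_self_eq_norm_sq, USphere.norm hu]
    have := hF.pos v hu
    positivity
  refine ⟨x, hx, hκ, ?_⟩
  set κ := invRad n F v with hκdef
  have hx0 := USphere.ne_zero hx
  have hle : ∀ y : Euc n, y ≠ 0 → ⟪y, v⟫ ≤ κ * F y := by
    intro y hy
    have h1 := hx2 _ (unit_mem hy)
    have hn : 0 < ‖y‖ := norm_pos_iff.mpr hy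
    rw [hF.homog _ (by positivity), real_inner_smul_left, div_le_iff₀
      (by have := hF.pos' hy; positivity)] at h1
    have : ‖y‖⁻¹ * ⟪y, v⟫ ≤ ‖y‖⁻¹ * (κ * F y) := by linarith
    exact le_of_mul_le_mul_left this (by positivity)
  have heq : ⟪x, v⟫ = κ * F x := by
    rw [hx1]; have := (hF.pos x hx).ne'; field_simp
  have hmax : IsLocalMax (fun y => ⟪y, v⟫ - κ * F y) x := by
    filter_upwards [compl_zero_nhds hx0] with y hy
    have := hle y hy
    rw [heq]; linarith
  have hd : HasFDerivAt (fun y : Euc n => ⟪y, v⟫ - κ * F y)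
      (innerSL ℝ v - κ • fderiv ℝ F x) x := by
    have h1 : HasFDerivAt (fun y : Euc n => ⟪y, v⟫) (innerSL ℝ v) x := by
      simp_rw [real_inner_comm v]
      exact (innerSL ℝ v).hasFDerivAt
    exact h1.sub ((hF.sm.differentiableAt hx0).hasFDerivAt.const_mul κ)
  have h0 := hmax.hasFDerivAt_eq_zero hd
  refine ext_inner_right ℝ fun z => ?_
  have h2 := congrArg (fun L : Euc n →L[ℝ] ℝ => L z) h0
  simp only [_root_.sub_apply, _root_.smul_apply, innerSL_apply_apply, smul_eq_mul,
    _root_.zero_apply] at h2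
  rw [real_inner_smul_left, inner_gradient, dd]
  linarith

lemma IsSupportFn.gaussT_image (hF : IsSupportFn n F) :
    gaussT F '' {(0 : Euc n)}ᶜ = {(0 : Euc n)}ᶜ := by
  ext z
  constructor
  · rintro ⟨y, hy, rfl⟩
    have hy' : y ≠ 0 := hy
    change gaussT F y ≠ 0
    rw [gaussT, ← hF.gradient_unit hy']
    exact smul_ne_zero (norm_ne_zero_iff.mpr hy') (hF.gradient_ne_zero (unit_mem hy'))
  · intro hz
    have hz' : z ≠ 0 := hz
    obtain ⟨x, hx, hκ, hxz⟩ := hF.exists_normal (unit_mem hz')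
    have hzn := norm_pos_iff.mpr hz'
    refine ⟨(‖z‖ * invRad n F (‖z‖⁻¹ • z)) • x, smul_ne_zero (by positivity) (USphere.ne_zero hx), ?_⟩
    rw [gaussT, hF.gradient_smul (USphere.ne_zero hx) (by positivity), norm_smul, USphere.norm hx,
      mul_one, Real.norm_eq_abs, abs_of_pos (by positivity), ← smul_smul, ← hxz,
      smul_inv_smul₀ hzn.ne']

lemma radDir_mem (hF : IsSupportFn n F) (hx : x ∈ USphere n) : radDir F x ∈ USphere n :=
  unit_mem (hF.gradient_ne_zero hx)

lemma IsSupportFn.invRad_radDir (hF : IsSupportFn n F) (hx : x ∈ USphere n) :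
    invRad n F (radDir F x) = ‖gradient F x‖⁻¹ := by
  obtain ⟨y, hy, hκ, h⟩ := hF.exists_normal (radDir_mem hF hx)
  have hn := norm_pos_iff.mpr (hF.gradient_ne_zero hx)
  exact (hF.gradient_inj hx hy (by positivity) hκ h).2.symm

lemma radJac_pos (hF : IsSupportFn n F) (hx : x ∈ USphere n) : 0 < radJac n F x := by
  have h1 := hF.pos x hx
  have h2 := hF.sphDet_pos hx
  have h3 := norm_pos_iff.mpr (hF.gradient_ne_zero hx)
  rw [radJac]; positivity

lemma dd_continuousOn_sphere (hs : Sm F) : ContinuousOn F (USphere n) :=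
  hs.continuousOn.mono fun _ hx => USphere.ne_zero hx

lemma Sm.gradient_continuousOn (hs : Sm F) : ContinuousOn (gradient F) {(0 : Euc n)}ᶜ :=
  fun _ hx => (hs.gradient_contDiffAt hx).continuousAt.continuousWithinAt

lemma Sm.hessOp_continuousOn (hs : Sm F) : ContinuousOn (hessOp n F) {(0 : Euc n)}ᶜ := fun _ hx =>
  ((hs.gradient_contDiffAt hx).fderiv_right (m := (⊤ : ℕ∞)) (by simp)).continuousAt.continuousWithinAt

lemma Sm.sphDet_continuousOn (hs : Sm F) : ContinuousOn (sphDet n F) {(0 : Euc n)}ᶜ := by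
  have h1 : ContinuousOn (fun x => hessOp n F x + (innerSL ℝ x).smulRight x) {(0 : Euc n)}ᶜ := by
    refine hs.hessOp_continuousOn.add (Continuous.continuousOn ?_)
    have : Continuous fun x : Euc n => ContinuousLinearMap.smulRightL ℝ (Euc n) (Euc n) (innerSL ℝ x) x := by
      fun_prop
    exact this
  have h2 : ContinuousOn (fun x => (hessOp n F x + (innerSL ℝ x).smulRight x).det) {(0 : Euc n)}ᶜ :=
    ContinuousLinearMap.continuous_det.comp_continuousOn h1
  exact h2

/-- Polar coordinates for functions that are a cut-off of a `0`-homogeneous function. -/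
lemma polar_cut (hn : 0 < n) (A : USphere n → ENNReal) (R : USphere n → ℝ) (hA : Measurable A)
    (hR : Measurable R) (hRpos : ∀ x, 0 < R x) (q : Euc n → ENNReal)
    (hq : ∀ (x : USphere n) (s : ℝ), 0 < s → q (s • (x : Euc n)) = if s < R x then A x else 0) :
    ∫⁻ y in {(0 : Euc n)}ᶜ, q y = ∫⁻ x, A x * ENNReal.ofReal (R x ^ n / n) ∂(sphMeasure n) := by
  have hdim : Module.finrank ℝ (Euc n) = n := by simp
  set g : USphere n × Ioi (0 : ℝ) → ENNReal := fun p => if (p.2 : ℝ) < R p.1 then A p.1 else 0 with hg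
  have hgm : Measurable g := by
    refine Measurable.ite ?_ (hA.comp measurable_fst) measurable_const
    exact measurableSet_lt (measurable_subtype_coe.comp measurable_snd) (hR.comp measurable_fst)
  have h1 : ∀ y : ({(0 : Euc n)}ᶜ : Set (Euc n)), q y = g (homeomorphUnitSphereProd (Euc n) y) := by
    intro y
    have hy0 : (y : Euc n) ≠ 0 := y.2
    have e : (y : Euc n) = ‖(y : Euc n)‖ • ((homeomorphUnitSphereProd (Euc n) y).1 : Euc n) := by
      rw [homeomorphUnitSphereProd_apply_fst_coe, smul_inv_smul₀ (norm_ne_zero_iff.mpr hy0)]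
    conv_lhs => rw [e]
    rw [hq _ _ (norm_pos_iff.mpr hy0)]
    simp [hg]
  rw [← lintegral_subtype_comap (measurableSet_singleton _).compl, lintegral_congr h1,
    (Measure.measurePreserving_homeomorphUnitSphereProd (volume : Measure (Euc n))).lintegral_comp_emb
      (Homeomorph.measurableEmbedding _), lintegral_prod _ hgm.aemeasurable, hdim]
  refine lintegral_congr fun x => ?_
  have h2 : ∀ r : Ioi (0 : ℝ), g (x, r) = (Iio (⟨R x, hRpos x⟩ : Ioi (0 : ℝ))).indicator
      (fun _ => A x) r := by
    intro r
    simp [hg, indicator, ← Subtype.coe_lt_coe]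
  rw [lintegral_congr h2, lintegral_indicator_const measurableSet_Iio,
    Measure.volumeIoiPow_apply_Iio]
  have h3 : n - 1 + 1 = n := by omega
  have h4 : ((n - 1 : ℕ) : ℝ) + 1 = n := by exact_mod_cast h3
  simp only [h3, h4]

lemma sphere_continuous {G : Euc n → ℝ} (hG : ContinuousOn G {(0 : Euc n)}ᶜ) :
    Continuous fun x : USphere n => G x :=
  continuousOn_iff_continuous_domRestrict.mp (hG.mono fun _ hx => USphere.ne_zero hx)

lemma radJac_continuous (hF : IsSupportFn n F) : ContinuousOn (radJac n F) (USphere n) := by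
  have hsub : USphere n ⊆ {(0 : Euc n)}ᶜ := fun _ hx => USphere.ne_zero hx
  refine ContinuousOn.div ?_ ?_ fun x hx => pow_ne_zero _ (norm_ne_zero_iff.mpr (hF.gradient_ne_zero hx))
  · exact (hF.sm.continuousOn.mul hF.sm.sphDet_continuousOn).mono hsub
  · exact (hF.sm.gradient_continuousOn.norm.pow n).mono hsub

lemma radDir_continuousOn (hF : IsSupportFn n F) : ContinuousOn (radDir F) (USphere n) := by
  have h : ContinuousOn (gradient F) (USphere n) :=
    hF.sm.gradient_continuousOn.mono fun _ hx => USphere.ne_zero hx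
  exact (h.norm.inv₀ fun x hx => norm_ne_zero_iff.mpr (hF.gradient_ne_zero hx)).smul h

/-- Change of variables `u = radDir F x` on the sphere, in `lintegral` form. -/
lemma lintegral_radDir (hn : 0 < n) (hF : IsSupportFn n F) (w : Euc n → ENNReal) (hw : Measurable w) :
    ∫⁻ u, w u ∂(sphMeasure n) =
      ∫⁻ x, w (radDir F x) * ENNReal.ofReal (radJac n F x) ∂(sphMeasure n) := by
  have hn' : (0 : ℝ) < n := by exact_mod_cast hn
  set q : Euc n → ENNReal := fun y => if ‖y‖ < 1 then w (‖y‖⁻¹ • y) else 0 with hq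
  have hL := polar_cut hn (fun x : USphere n => w x) (fun _ => 1)
    (hw.comp measurable_subtype_coe) measurable_const (fun _ => one_pos) q (by
      intro x s hs
      have : ‖s • (x : Euc n)‖ = s := by
        rw [norm_smul, USphere.norm x.2, mul_one, Real.norm_eq_abs, abs_of_pos hs]
      simp only [hq, this, inv_smul_smul₀ hs.ne'])
  have hcv := lintegral_image_eq_lintegral_abs_det_fderiv_mul (volume : Measure (Euc n))
    (measurableSet_singleton (0 : Euc n)).compl
    (fun x hx => (hF.gaussT_hasFDerivAt hx).hasFDerivWithinAt) hF.gaussT_injOn q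
  rw [hF.gaussT_image] at hcv
  have hGc : Continuous fun x : USphere n => ‖gradient F x‖ :=
    sphere_continuous hF.sm.gradient_continuousOn.norm
  have hDc : Continuous fun x : USphere n => F x * sphDet n F x :=
    sphere_continuous (hF.sm.continuousOn.mul hF.sm.sphDet_continuousOn)
  have hNc : Continuous fun x : USphere n => radDir F x :=
    continuousOn_iff_continuous_domRestrict.mp (radDir_continuousOn hF)
  have hGpos : ∀ x : USphere n, 0 < ‖gradient F x‖ := fun x =>
    norm_pos_iff.mpr (hF.gradient_ne_zero x.2)
  have hR := polar_cut hn
    (fun x : USphere n => ENNReal.ofReal (F x * sphDet n F x) * w (radDir F x))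
    (fun x => ‖gradient F x‖⁻¹)
    ((ENNReal.measurable_ofReal.comp hDc.measurable).mul (hw.comp hNc.measurable))
    hGc.measurable.inv (fun x => inv_pos.mpr (hGpos x))
    (fun y => ENNReal.ofReal |(gaussL n F (‖y‖⁻¹ • y)).det| * q (gaussT F y)) (by
      intro x s hs
      have hsn : ‖s • (x : Euc n)‖ = s := by
        rw [norm_smul, USphere.norm x.2, mul_one, Real.norm_eq_abs, abs_of_pos hs]
      have hdet : 0 < F x * sphDet n F x := mul_pos (hF.pos x x.2) (hF.sphDet_pos x.2)
      have hT : gaussT F (s • (x : Euc n)) = s • gradient F x := by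
        rw [gaussT, hsn, hF.gradient_smul (USphere.ne_zero x.2) hs]
      have hTn : ‖s • gradient F x‖ = s * ‖gradient F x‖ := by
        rw [norm_smul, Real.norm_eq_abs, abs_of_pos hs]
      have hdir : (s * ‖gradient F x‖)⁻¹ • s • gradient F x = radDir F x := by
        rw [radDir, smul_smul]; congr 1
        have := (hGpos x).ne'
        field_simp
      have hcond : s * ‖gradient F x‖ < 1 ↔ s < ‖gradient F x‖⁻¹ := by
        rw [lt_inv_comm₀ hs (hGpos x), ← one_div, lt_div_iff₀' hs]
      simp only [hsn, inv_smul_smul₀ hs.ne', hF.gaussL_det x.2, abs_of_pos hdet, hT, hq, hTn, hdir,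
        hcond]
      split_ifs <;> simp)
  rw [← hcv, hL] at hR
  have hc : ENNReal.ofReal ((1 : ℝ) ^ n / n) ≠ 0 := by
    rw [ne_eq, ENNReal.ofReal_eq_zero, not_le, one_pow]; positivity
  have hR' : (∫⁻ u : USphere n, w u ∂(sphMeasure n)) * ENNReal.ofReal ((1 : ℝ) ^ n / n) =
      (∫⁻ x : USphere n, w (radDir F x) * ENNReal.ofReal (radJac n F x) ∂(sphMeasure n)) *
        ENNReal.ofReal ((1 : ℝ) ^ n / n) := by
    have hwm : Measurable fun x : USphere n => w x := hw.comp measurable_subtype_coe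
    rw [← lintegral_mul_const _ hwm, hR, ← lintegral_mul_const]
    · refine lintegral_congr fun x => ?_
      have hdet : 0 < F x * sphDet n F x := mul_pos (hF.pos x x.2) (hF.sphDet_pos x.2)
      have hg := hGpos x
      rw [mul_assoc (w _), ← ENNReal.ofReal_mul (radJac_pos hF x.2).le, mul_comm (ENNReal.ofReal _) (w _),
        mul_assoc, ← ENNReal.ofReal_mul hdet.le, radJac]
      congr 2
      rw [inv_pow, one_pow]
      field_simp
    · exact (hw.comp hNc.measurable).mul (ENNReal.measurable_ofReal.comp
        (continuousOn_iff_continuous_domRestrict.mp (radJac_continuous hF)).measurable)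
  exact (ENNReal.mul_left_inj hc ENNReal.ofReal_ne_top).mp hR'

lemma sphInt_radDir (hn : 0 < n) (hF : IsSupportFn n F) (w : Euc n → ℝ) (hw : ContinuousOn w (USphere n)) :
    Integrable (fun x : USphere n => w (radDir F x) * radJac n F x) (sphMeasure n) ∧
    sphInt n w = sphInt n fun x => w (radDir F x) * radJac n F x := by
  have hNc : Continuous fun x : USphere n => (⟨radDir F x, radDir_mem hF x.2⟩ : USphere n) :=
    (continuousOn_iff_continuous_domRestrict.mp (radDir_continuousOn hF)).subtype_mk _
  have hJc : Continuous fun x : USphere n => radJac n F x :=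
    continuousOn_iff_continuous_domRestrict.mp (radJac_continuous hF)
  have hwc : Continuous fun x : USphere n => w x := continuousOn_iff_continuous_domRestrict.mp hw
  have hInt : ∀ g : USphere n → ℝ, Continuous g → Integrable g (sphMeasure n) := by
    intro g hg
    have : IsFiniteMeasure (sphMeasure n) := by unfold sphMeasure; infer_instance
    exact hg.integrable_of_hasCompactSupport (HasCompactSupport.of_compactSpace g)
  refine ⟨hInt _ ((hwc.comp hNc).mul hJc), ?_⟩
  set ν := (sphMeasure n).withDensity fun x => ENNReal.ofReal (radJac n F x) with hν
  have hmap : ν.map (fun x : USphere n => (⟨radDir F x, radDir_mem hF x.2⟩ : USphere n)) =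
      sphMeasure n := by
    ext A hA
    have hA' : MeasurableSet ((↑) '' A : Set (Euc n)) :=
      (MeasurableEmbedding.subtype_coe isClosed_sphere.measurableSet).measurableSet_image.mpr hA
    have h := lintegral_radDir hn hF (((↑) '' A : Set (Euc n)).indicator 1)
      (measurable_one.indicator hA')
    have e1 : ∀ u : USphere n, ((↑) '' A : Set (Euc n)).indicator (1 : Euc n → ENNReal) u =
        A.indicator 1 u := by
      intro u
      have : (u : Euc n) ∈ ((↑) '' A : Set (Euc n)) ↔ u ∈ A := by simp
      by_cases hu : u ∈ A
      · rw [indicator_of_mem (this.mpr hu), indicator_of_mem hu]; rfl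
      · rw [indicator_of_notMem (fun h => hu (this.mp h)), indicator_of_notMem hu]
    rw [lintegral_congr e1, lintegral_indicator_one hA] at h
    rw [Measure.map_apply hNc.measurable hA, hν, withDensity_apply _ (hNc.measurable hA), h,
      ← lintegral_indicator (hNc.measurable hA)]
    refine lintegral_congr fun x => ?_
    have hd := radDir_mem hF x.2
    by_cases hx : (⟨radDir F x, hd⟩ : USphere n) ∈ A
    · have h1 : radDir F x ∈ ((↑) '' A : Set (Euc n)) := ⟨_, hx, rfl⟩
      rw [indicator_of_mem h1, indicator_of_mem (show x ∈ _ from hx)]; simp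
    · have h1 : radDir F x ∉ ((↑) '' A : Set (Euc n)) := by
        rintro ⟨z, hz, hz'⟩; apply hx
        have : z = ⟨radDir F x, hd⟩ := Subtype.ext hz'
        rwa [← this]
      rw [indicator_of_notMem h1, indicator_of_notMem (show x ∉ _ from hx)]; simp
  have : sphInt n w = ∫ x, w x ∂(ν.map
      (fun x : USphere n => (⟨radDir F x, radDir_mem hF x.2⟩ : USphere n))) := by rw [hmap]; rfl
  have hJm : Measurable fun x : USphere n => ENNReal.ofReal (radJac n F x) :=
    ENNReal.measurable_ofReal.comp hJc.measurable
  rw [this, integral_map hNc.measurable.aemeasurable hwc.measurable.aestronglyMeasurable, hν,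
    integral_withDensity_eq_integral_toReal_smul hJm
      (by simp)]
  refine integral_congr_ae (Eventually.of_forall fun x => ?_)
  simp only [smul_eq_mul]
  rw [ENNReal.toReal_ofReal (radJac_pos hF x.2).le, mul_comm]

end

/-! ### Time-dependent functions and parametric spherical integrals -/

section
variable {n : ℕ} {U : ℝ → Euc n → ℝ} {t : ℝ} {x v w : Euc n}

/-- Joint smoothness in time (up to `t = 0`) and space (away from the origin). -/
def SmT (U : ℝ → Euc n → ℝ) : Prop :=
  ContDiffOn ℝ (⊤ : ℕ∞) (fun p : ℝ × Euc n => U p.1 p.2) (Ici 0 ×ˢ {(0 : Euc n)}ᶜ)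

/-- The time derivative, one-sided at `t = 0`. -/
def tD (U : ℝ → Euc n → ℝ) : ℝ → Euc n → ℝ := fun t x => derivWithin (fun s => U s x) (Ici 0) t

lemma uniqueDiffOn_dom : UniqueDiffOn ℝ (Ici (0 : ℝ) ×ˢ {(0 : Euc n)}ᶜ) :=
  (uniqueDiffOn_Ici 0).prod isOpen_compl_singleton.uniqueDiffOn

lemma SmT.hasFDerivWithinAt (hU : SmT U) (ht : 0 ≤ t) (hx : x ≠ 0) :
    HasFDerivWithinAt (fun p : ℝ × Euc n => U p.1 p.2)
      (fderivWithin ℝ (fun p : ℝ × Euc n => U p.1 p.2) (Ici 0 ×ˢ {(0 : Euc n)}ᶜ) (t, x))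
      (Ici 0 ×ˢ {(0 : Euc n)}ᶜ) (t, x) :=
  ((hU (t, x) ⟨ht, hx⟩).differentiableWithinAt (by simp)).hasFDerivWithinAt

lemma SmT.slice (hU : SmT U) (ht : 0 ≤ t) : Sm (U t) := by
  have h : ContDiff ℝ (⊤ : ℕ∞) fun y : Euc n => ((t, y) : ℝ × Euc n) := by fun_prop
  exact ContDiffOn.comp (g := fun p : ℝ × Euc n => U p.1 p.2)
    (t := Ici 0 ×ˢ {(0 : Euc n)}ᶜ) hU h.contDiffOn fun y hy => ⟨ht, hy⟩

lemma SmT.dd_eq (hU : SmT U) (ht : 0 ≤ t) (hx : x ≠ 0) (v : Euc n) :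
    dd v (U t) x = fderivWithin ℝ (fun p : ℝ × Euc n => U p.1 p.2)
      (Ici 0 ×ˢ {(0 : Euc n)}ᶜ) (t, x) (0, v) := by
  have h1 := hU.hasFDerivWithinAt ht hx
  have h2 : HasFDerivWithinAt (fun y : Euc n => ((t, y) : ℝ × Euc n))
      (ContinuousLinearMap.inr ℝ ℝ (Euc n)) {(0 : Euc n)}ᶜ x :=
    (hasFDerivAt_prodMk_right t x).hasFDerivWithinAt
  have h3 := h1.comp x h2 (fun y hy => ⟨ht, hy⟩)
  have h4 := (h3.hasFDerivAt (compl_zero_nhds hx)).fderiv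
  have h5 : fderiv ℝ (U t) x = _ := h4
  rw [dd, h5]; simp

lemma SmT.tD_eq (hU : SmT U) (ht : 0 ≤ t) (hx : x ≠ 0) :
    HasDerivWithinAt (fun s => U s x) (fderivWithin ℝ (fun p : ℝ × Euc n => U p.1 p.2)
      (Ici 0 ×ˢ {(0 : Euc n)}ᶜ) (t, x) (1, 0)) (Ici 0) t := by
  have h1 := hU.hasFDerivWithinAt ht hx
  have h2 : HasDerivWithinAt (fun s : ℝ => ((s, x) : ℝ × Euc n)) (1, 0) (Ici 0) t :=
    (hasDerivWithinAt_id t _).prodMk (hasDerivWithinAt_const t _ x)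
  exact h1.comp_hasDerivWithinAt t h2
    (show MapsTo (fun s : ℝ => ((s, x) : ℝ × Euc n)) (Ici 0) (Ici 0 ×ˢ {(0 : Euc n)}ᶜ) from
      fun s hs => ⟨hs, hx⟩)

lemma SmT.hasDerivWithinAt (hU : SmT U) (ht : 0 ≤ t) (hx : x ≠ 0) :
    HasDerivWithinAt (fun s => U s x) (tD U t x) (Ici 0) t :=
  (hU.tD_eq ht hx).differentiableWithinAt.hasDerivWithinAt

lemma SmT.hasDerivAt (hU : SmT U) (ht : 0 < t) (hx : x ≠ 0) :
    HasDerivAt (fun s => U s x) (tD U t x) t :=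
  (hU.hasDerivWithinAt ht.le hx).hasDerivAt (Ici_mem_nhds ht)

lemma SmT.fderivWithin_smooth (hU : SmT U) (z : ℝ × Euc n) :
    ContDiffOn ℝ (⊤ : ℕ∞) (fun p => fderivWithin ℝ (fun p : ℝ × Euc n => U p.1 p.2)
      (Ici 0 ×ˢ {(0 : Euc n)}ᶜ) p z) (Ici 0 ×ˢ {(0 : Euc n)}ᶜ) :=
  (ContDiffOn.fderivWithin hU uniqueDiffOn_dom (by simp)).clm_apply contDiffOn_const

lemma SmT.dd (hU : SmT U) (v : Euc n) : SmT fun t => dd v (U t) :=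
  (hU.fderivWithin_smooth (0, v)).congr fun _ hp => hU.dd_eq hp.1 hp.2 v

lemma SmT.tD (hU : SmT U) : SmT (tD U) :=
  (hU.fderivWithin_smooth (1, 0)).congr fun p hp =>
    (hU.tD_eq hp.1 hp.2).derivWithin (uniqueDiffOn_Ici 0 p.1 hp.1)

lemma SmT.continuousOn (hU : SmT U) :
    ContinuousOn (fun p : ℝ × Euc n => U p.1 p.2) (Ici 0 ×ˢ {(0 : Euc n)}ᶜ) :=
  ContDiffOn.continuousOn hU

/-- Time and space derivatives commute at positive times. -/
lemma SmT.comm (hU : SmT U) (ht : 0 < t) (hx : x ≠ 0) (v : Euc n) :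
    _root_.tD (fun t => _root_.dd v (U t)) t x = _root_.dd v (_root_.tD U t) x := by
  set W : ℝ × Euc n → ℝ := fun p => U p.1 p.2 with hW
  set D : Set (ℝ × Euc n) := Ici 0 ×ˢ {(0 : Euc n)}ᶜ with hD
  have hDn : ∀ p : ℝ × Euc n, 0 < p.1 → p.2 ≠ 0 → D ∈ 𝓝 p := fun p h1 h2 =>
    prod_mem_nhds (Ici_mem_nhds h1) (compl_zero_nhds h2)
  have hp0 : D ∈ 𝓝 (t, x) := hDn _ ht hx
  have hcd : ContDiffAt ℝ (⊤ : ℕ∞) W (t, x) := ContDiffOn.contDiffAt hU hp0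
  have hev : ∀ᶠ p in 𝓝 (t, x), D ∈ 𝓝 p := eventually_mem_nhds_iff.mpr hp0
  have hfd : ∀ z : ℝ × Euc n, HasFDerivAt (fun p => fderiv ℝ W p z)
      ((fderiv ℝ (fderiv ℝ W) (t, x)).flip z) (t, x) := by
    intro z
    have h1 : HasFDerivAt (fderiv ℝ W) (fderiv ℝ (fderiv ℝ W) (t, x)) (t, x) :=
      ((hcd.fderiv_right (m := (⊤ : ℕ∞)) (by simp)).differentiableAt (by simp)).hasFDerivAt
    have h2 := h1.clm_apply (hasFDerivAt_const z (t, x))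
    rw [ContinuousLinearMap.comp_zero, zero_add] at h2
    exact h2
  have e1 : _root_.tD (fun t => _root_.dd v (U t)) t x =
      fderiv ℝ (fderiv ℝ W) (t, x) (1, 0) (0, v) := by
    have h1 : HasFDerivAt (fun p : ℝ × Euc n => _root_.dd v (U p.1) p.2)
        ((fderiv ℝ (fderiv ℝ W) (t, x)).flip (0, v)) (t, x) := by
      refine (hfd (0, v)).congr_of_eventuallyEq ?_
      filter_upwards [hev] with p hp
      have hpD : p ∈ D := mem_of_mem_nhds hp
      rw [hU.dd_eq hpD.1 hpD.2 v]
      exact congrArg (fun L : ℝ × Euc n →L[ℝ] ℝ => L (0, v)) (fderivWithin_of_mem_nhds hp)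
    have h2 : HasDerivAt (fun s : ℝ => ((s, x) : ℝ × Euc n)) (1, 0) t :=
      (hasDerivAt_id t).prodMk (hasDerivAt_const t x)
    have h3 := h1.comp_hasDerivAt t h2
    exact ((hU.dd v).hasDerivAt ht hx).unique h3
  have e2 : _root_.dd v (_root_.tD U t) x = fderiv ℝ (fderiv ℝ W) (t, x) (0, v) (1, 0) := by
    have h1 : HasFDerivAt (fun p : ℝ × Euc n => _root_.tD U p.1 p.2)
        ((fderiv ℝ (fderiv ℝ W) (t, x)).flip (1, 0)) (t, x) := by
      refine (hfd (1, 0)).congr_of_eventuallyEq ?_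
      filter_upwards [hev] with p hp
      have hpD : p ∈ D := mem_of_mem_nhds hp
      rw [show _root_.tD U p.1 p.2 = _ from
        (hU.tD_eq hpD.1 hpD.2).derivWithin (uniqueDiffOn_Ici 0 p.1 hpD.1)]
      exact congrArg (fun L : ℝ × Euc n →L[ℝ] ℝ => L (1, 0)) (fderivWithin_of_mem_nhds hp)
    have h2 : HasFDerivAt (fun y : Euc n => ((t, y) : ℝ × Euc n))
        (ContinuousLinearMap.inr ℝ ℝ (Euc n)) x := hasFDerivAt_prodMk_right t x
    have h3 : fderiv ℝ (_root_.tD U t) x = _ := (h1.comp x h2).fderiv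
    rw [_root_.dd, h3]; simp
  rw [e1, e2]
  exact (hcd.isSymmSndFDerivAt (by simpa using ENat.LEInfty.out)).eq _ _

lemma SmT.comm2 (hU : SmT U) (ht : 0 < t) (hx : x ≠ 0) (v w : Euc n) :
    _root_.tD (fun t => _root_.dd v (_root_.dd w (U t))) t x =
      _root_.dd v (_root_.dd w (_root_.tD U t)) x := by
  rw [(hU.dd w).comm ht hx v]
  exact dd_congr (fun y hy => hU.comm ht hy w) hx

lemma sphere_subset : (Ici (0 : ℝ) ×ˢ USphere n) ⊆ Ici 0 ×ˢ {(0 : Euc n)}ᶜ :=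
  prod_mono_right fun _ hx => USphere.ne_zero hx

instance : IsFiniteMeasure (sphMeasure n) := by unfold sphMeasure; infer_instance

lemma integrable_sphere {g : Euc n → ℝ} (hg : ContinuousOn g (USphere n)) :
    Integrable (fun x : USphere n => g x) (sphMeasure n) :=
  (continuousOn_iff_continuous_domRestrict.mp hg).integrable_of_hasCompactSupport
    (HasCompactSupport.of_compactSpace _)

lemma sphInt_mono {g k : Euc n → ℝ} (hg : ContinuousOn g (USphere n))
    (hk : ContinuousOn k (USphere n)) (h : ∀ x ∈ USphere n, g x ≤ k x) :
    sphInt n g ≤ sphInt n k :=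
  integral_mono (integrable_sphere hg) (integrable_sphere hk) fun x => h x x.2

lemma sphInt_congr {g k : Euc n → ℝ} (h : ∀ x ∈ USphere n, g x = k x) :
    sphInt n g = sphInt n k :=
  integral_congr_ae (Eventually.of_forall fun x => h x x.2)

lemma sphInt_sub {g k : Euc n → ℝ} (hg : ContinuousOn g (USphere n))
    (hk : ContinuousOn k (USphere n)) :
    sphInt n (fun x => g x - k x) = sphInt n g - sphInt n k :=
  integral_sub (integrable_sphere hg) (integrable_sphere hk)

lemma sphInt_add {g k : Euc n → ℝ} (hg : ContinuousOn g (USphere n))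
    (hk : ContinuousOn k (USphere n)) :
    sphInt n (fun x => g x + k x) = sphInt n g + sphInt n k :=
  integral_add (integrable_sphere hg) (integrable_sphere hk)

lemma sphInt_mul (c : ℝ) (g : Euc n → ℝ) : sphInt n (fun x => c * g x) = c * sphInt n g :=
  integral_const_mul _ _

lemma sphInt_const (c : ℝ) : sphInt n (fun _ => c) = c * sphArea n := by
  simp [sphInt, sphArea, Measure.real, mul_comm]

lemma sphArea_pos (hn : 0 < n) : 0 < sphArea n := by
  have : Nontrivial (Euc n) := by
    have : Nonempty (Fin n) := ⟨⟨0, hn⟩⟩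
    infer_instance
  have h : sphMeasure n univ ≠ 0 := by
    rw [sphMeasure, ne_eq, Measure.measure_univ_eq_zero]
    exact Measure.toSphere_ne_zero _
  exact ENNReal.toReal_pos h (measure_ne_top _ _)

lemma sphInt_pos (hn : 0 < n) {g : Euc n → ℝ} (hg : ContinuousOn g (USphere n))
    (h : ∀ x ∈ USphere n, 0 < g x) : 0 < sphInt n g := by
  have hne : (USphere n).Nonempty := by
    have : Nontrivial (Euc n) := by
      have : Nonempty (Fin n) := ⟨⟨0, hn⟩⟩
      infer_instance
    exact NormedSpace.sphere_nonempty.mpr zero_le_one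
  obtain ⟨x, hx, hmin⟩ := (isCompact_sphere (0 : Euc n) 1).exists_isMinOn hne hg
  have h1 := sphInt_mono continuousOn_const hg (fun y hy => hmin hy)
  rw [sphInt_const] at h1
  exact (mul_pos (h x hx) (sphArea_pos hn)).trans_le h1

lemma sphInt_continuousOn {g : ℝ → Euc n → ℝ}
    (hg : ContinuousOn (fun p : ℝ × Euc n => g p.1 p.2) (Ici 0 ×ˢ USphere n)) :
    ContinuousOn (fun t => sphInt n (g t)) (Ici 0) := by
  rw [continuousOn_iff_continuous_domRestrict]
  have : LocallyCompactSpace (Ici (0 : ℝ)) := isClosed_Ici.locallyCompactSpace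
  have h : Continuous (Function.uncurry fun (t : Ici (0 : ℝ)) (x : USphere n) => g t x) := by
    have := continuousOn_iff_continuous_domRestrict.mp hg
    exact this.comp (f := fun p : Ici (0 : ℝ) × USphere n =>
      (⟨((p.1 : ℝ), (p.2 : Euc n)), ⟨p.1.2, p.2.2⟩⟩ : ↥(Ici (0 : ℝ) ×ˢ USphere n)))
      (by fun_prop)
  have := continuous_parametric_integral_of_continuous (μ := sphMeasure n) h isCompact_univ
  simp only [Measure.restrict_univ] at this
  exact this

/-- Differentiation under the spherical integral at positive times. -/
lemma sphInt_hasDerivAt {g g' : ℝ → Euc n → ℝ}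
    (hg : ContinuousOn (fun p : ℝ × Euc n => g p.1 p.2) (Ici 0 ×ˢ USphere n))
    (hg' : ContinuousOn (fun p : ℝ × Euc n => g' p.1 p.2) (Ici 0 ×ˢ USphere n))
    (hd : ∀ t, 0 < t → ∀ x ∈ USphere n, HasDerivAt (fun s => g s x) (g' t x) t) (ht : 0 < t) :
    HasDerivAt (fun s => sphInt n (g s)) (sphInt n (g' t)) t := by
  have hsl : ∀ {k : ℝ → Euc n → ℝ},
      ContinuousOn (fun p : ℝ × Euc n => k p.1 p.2) (Ici 0 ×ˢ USphere n) →
      ∀ s, 0 ≤ s → ContinuousOn (k s) (USphere n) := by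
    intro k hk s hs
    exact hk.comp (f := fun y : Euc n => ((s, y) : ℝ × Euc n)) (by fun_prop) fun y hy => ⟨hs, hy⟩
  obtain ⟨C, hC⟩ := ((isCompact_Icc (a := t / 2) (b := 2 * t)).prod
    (isCompact_sphere (0 : Euc n) 1)).exists_bound_of_continuousOn
    (hg'.mono (prod_mono_left fun s hs => by
      have := hs.1; simp only [mem_Ici]; linarith))
  have hs : Icc (t / 2) (2 * t) ∈ 𝓝 t := Icc_mem_nhds (by linarith) (by linarith)
  refine (hasDerivAt_integral_of_dominated_loc_of_deriv_le (𝕜 := ℝ) (μ := sphMeasure n)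
    (F := fun s (x : USphere n) => g s x) (F' := fun s (x : USphere n) => g' s x) (x₀ := t)
    (bound := fun _ => C) hs ?_ ?_ ?_ ?_ ?_ ?_).2
  · filter_upwards [hs] with s h
    exact (integrable_sphere (hsl hg s (by linarith [h.1]))).aestronglyMeasurable
  · exact integrable_sphere (hsl hg t ht.le)
  · exact (integrable_sphere (hsl hg' t ht.le)).aestronglyMeasurable
  · exact Eventually.of_forall fun x s h => hC (s, x) ⟨h, x.2⟩
  · exact integrable_const _
  · exact Eventually.of_forall fun x s h => hd s (by linarith [h.1]) x x.2

end

/-! ### A uniform singular integral on the sphere -/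

section
variable {n : ℕ}

lemma one_dim_sing {δ : ℝ} (hδ : 0 < δ) :
    Integrable (fun s : ℝ => (Icc (-1 : ℝ) 1).indicator (fun s => (√(max |s| δ))⁻¹) s) ∧
    ∫ s : ℝ, (Icc (-1 : ℝ) 1).indicator (fun s => (√(max |s| δ))⁻¹) s ≤ 4 := by
  have hpos : ∀ s : ℝ, 0 < √(max |s| δ) := fun s => Real.sqrt_pos.mpr (lt_max_of_lt_right hδ)
  have hc : Continuous fun s : ℝ => (√(max |s| δ))⁻¹ :=
    Continuous.inv₀ (by fun_prop) fun s => (hpos s).ne'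
  have hI : Integrable (fun s : ℝ => (Icc (-1 : ℝ) 1).indicator (fun s => (√(max |s| δ))⁻¹) s) :=
    (integrable_indicator_iff measurableSet_Icc).mpr (hc.integrableOn_Icc)
  refine ⟨hI, ?_⟩
  have e1 : (fun s : ℝ => (Icc (-1 : ℝ) 1).indicator (fun s => (√(max |s| δ))⁻¹) s) =
      fun s => (fun y => (Iic (1 : ℝ)).indicator (fun y => (√(max |y| δ))⁻¹) y) |s| := by
    funext s
    by_cases h : |s| ≤ 1
    · simp [indicator, abs_le.mp h, h]
    · have : ¬ (-1 ≤ s ∧ s ≤ 1) := fun h' => h (abs_le.mpr h')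
      simp [indicator, this, h]
  have h1 : IntegrableOn (fun y : ℝ => y ^ (-(1 / 2) : ℝ)) (Ioc 0 1) :=
    (intervalIntegrable_iff_integrableOn_Ioc_of_le zero_le_one).mp
      (intervalIntegral.intervalIntegrable_rpow' (by norm_num))
  have h2 : ∫ y in Ioc (0 : ℝ) 1, y ^ (-(1 / 2) : ℝ) = 2 := by
    rw [← intervalIntegral.integral_of_le zero_le_one, integral_rpow (Or.inl (by norm_num))]
    norm_num
  rw [e1, integral_comp_abs, setIntegral_indicator measurableSet_Iic]
  have h3 : ∫ y in Ioc (0 : ℝ) 1, (√(max |y| δ))⁻¹ ≤ ∫ y in Ioc (0 : ℝ) 1, y ^ (-(1 / 2) : ℝ) := by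
    refine setIntegral_mono_on ?_ h1 measurableSet_Ioc ?_
    · exact (hc.integrableOn_Icc (a := 0) (b := 1)).mono_set Ioc_subset_Icc_self
    · intro y hy
      rw [Real.rpow_neg hy.1.le, ← Real.sqrt_eq_rpow]
      exact inv_anti₀ (Real.sqrt_pos.mpr hy.1)
        (Real.sqrt_le_sqrt ((le_abs_self y).trans (le_max_left _ _)))
  have h4 : Ioi (0 : ℝ) ∩ Iic 1 = Ioc 0 1 := rfl
  rw [h4]
  linarith

lemma singular_lower {n : ℕ} (θ : Euc n) {δ : ℝ} (hδ : 0 < δ) :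
    Continuous fun u : Euc n => (√(max |⟪u, θ⟫| δ))⁻¹ :=
  Continuous.inv₀ (by fun_prop) fun _ => (Real.sqrt_pos.mpr (lt_max_of_lt_right hδ)).ne'

/-- The integrals of `|⟪u, θ⟫|^{-1/2}` over the sphere are bounded uniformly in `θ`; the
truncation at `δ` avoids the junk value at the equator. -/
lemma singular_bound (hn : 0 < n) : ∃ C : ℝ, 0 < C ∧ ∀ θ ∈ USphere n, ∀ δ : ℝ, 0 < δ →
    sphInt n (fun u => (√(max |⟪u, θ⟫| δ))⁻¹) ≤ C := by
  have hn' : (0 : ℝ) < n := by exact_mod_cast hn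
  refine ⟨n * (4 * 2 ^ (n - 1)), by positivity, fun θ hθ δ hδ => ?_⟩
  set i0 : Fin n := ⟨0, hn⟩
  set A : Euc n → ℝ := fun u => (√(max |⟪u, θ⟫| δ))⁻¹ with hA
  have hApos : ∀ u, 0 ≤ A u := fun u => by positivity
  obtain ⟨b, hb⟩ : ∃ b : OrthonormalBasis (Fin n) ℝ (Euc n), b i0 = θ := by
    have ho : Orthonormal ℝ (({i0} : Set (Fin n)).domRestrict fun _ : Fin n => θ) := by
      constructor
      · intro i; simpa using USphere.norm hθ
      · intro i j hij; exact absurd (Subsingleton.elim i j) hij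
    obtain ⟨b, hb⟩ := ho.exists_orthonormalBasis_extension_of_card_eq (by simp)
    exact ⟨b, hb i0 rfl⟩
  set G : Fin n → ℝ → ℝ := fun i => if i = i0 then
      (Icc (-1 : ℝ) 1).indicator (fun s => (√(max |s| δ))⁻¹)
    else (Icc (-1 : ℝ) 1).indicator (fun _ => 1) with hG
  have hG0 : ∀ i s, 0 ≤ G i s := by
    intro i s
    simp only [hG]
    split_ifs <;> exact indicator_nonneg (fun _ _ => by positivity) _
  have hGi : ∀ i, Integrable (G i) := by
    intro i
    simp only [hG]
    split_ifs
    · exact (one_dim_sing hδ).1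
    · exact (integrable_indicator_iff measurableSet_Icc).mpr (by simp)
  have hGint : ∀ i, ∫ s, G i s ≤ if i = i0 then 4 else 2 := by
    intro i
    by_cases h : i = i0
    · simp only [hG, h, if_true]; exact (one_dim_sing hδ).2
    · simp only [hG, h, if_false]
      rw [integral_indicator measurableSet_Icc]
      simp; norm_num
  have hP : Integrable (fun y : Euc n => ∏ i, G i (b.repr y i)) := by
    have h1 : Integrable (fun z : Fin n → ℝ => ∏ i, G i (z i)) :=
      Integrable.fintype_prod (f := G) hGi
    exact ((PiLp.volume_preserving_ofLp (Fin n)).comp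
      b.measurePreserving_repr).integrable_comp_of_integrable h1
  have hPint : ∫ y : Euc n, ∏ i, G i (b.repr y i) ≤ 4 * 2 ^ (n - 1) := by
    have h1 : ∫ y : Euc n, ∏ i, G i (b.repr y i) = ∫ z : Fin n → ℝ, ∏ i, G i (z i) := by
      have e1 := b.measurePreserving_repr.integral_comp'
        (f := b.repr.toHomeomorph.toMeasurableEquiv)
        (g := fun z : Euc n => ∏ i, G i (z i))
      have e2 := (EuclideanSpace.volume_preserving_symm_measurableEquiv_toLp (Fin n)).integral_comp'
        (g := fun z : Fin n → ℝ => ∏ i, G i (z i))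
      exact e1.trans e2
    rw [h1, integral_fintype_prod_volume_eq_prod]
    calc ∏ i, ∫ s, G i s ≤ ∏ i, (if i = i0 then (4 : ℝ) else 2) :=
          Finset.prod_le_prod (fun i _ => integral_nonneg (hG0 i)) fun i _ => hGint i
      _ = 4 * 2 ^ (n - 1) := by
          rw [← Finset.mul_prod_erase Finset.univ _ (Finset.mem_univ i0)]
          rw [Finset.prod_congr rfl fun i hi => if_neg (Finset.ne_of_mem_erase hi)]
          simp
  set q : Euc n → ENNReal := fun y => if ‖y‖ < 1 then ENNReal.ofReal (A (‖y‖⁻¹ • y)) else 0 with hq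
  have hAc : Continuous A := singular_lower θ hδ
  have hL := polar_cut hn (fun x : USphere n => ENNReal.ofReal (A x)) (fun _ => 1)
    (hAc.comp continuous_subtype_val).measurable.ennreal_ofReal measurable_const
    (fun _ => one_pos) q (by
      intro x s hs
      have : ‖s • (x : Euc n)‖ = s := by
        rw [norm_smul, USphere.norm x.2, mul_one, Real.norm_eq_abs, abs_of_pos hs]
      simp only [hq, this, inv_smul_smul₀ hs.ne'])
  have hqle : ∀ y, y ∈ ({(0 : Euc n)}ᶜ : Set (Euc n)) →
      q y ≤ ENNReal.ofReal (∏ i, G i (b.repr y i)) := by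
    intro y hy
    have hy0 : 0 < ‖y‖ := norm_pos_iff.mpr hy
    simp only [hq]
    split_ifs with h
    · refine ENNReal.ofReal_le_ofReal ?_
      have hm : ∀ i, b.repr y i ∈ Icc (-1 : ℝ) 1 := by
        intro i
        have h1 : |b.repr y i| ≤ ‖y‖ := by
          rw [b.repr_apply_apply]
          refine (abs_real_inner_le_norm _ _).trans ?_
          simp
        exact abs_le.mp (h1.trans h.le)
      have hi0 : b.repr y i0 = ⟪y, θ⟫ := by rw [b.repr_apply_apply, hb, real_inner_comm]
      rw [← Finset.mul_prod_erase Finset.univ _ (Finset.mem_univ i0)]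
      rw [Finset.prod_eq_one (s := Finset.univ.erase i0) fun i hi => by
        simp only [hG, if_neg (Finset.ne_of_mem_erase hi)]
        exact indicator_of_mem (hm i) _]
      simp only [hG, if_true, mul_one]
      rw [indicator_of_mem (hm i0), hi0]
      refine inv_anti₀ (Real.sqrt_pos.mpr (lt_max_of_lt_right hδ)) (Real.sqrt_le_sqrt ?_)
      refine max_le_max ?_ le_rfl
      rw [inner_smul_left, abs_mul]
      have : (1 : ℝ) ≤ |(starRingEnd ℝ) ‖y‖⁻¹| := by
        simp only [conj_trivial, abs_inv, abs_norm]
        exact (one_le_inv₀ hy0).mpr h.le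
      nlinarith [abs_nonneg ⟪y, θ⟫]
    · exact zero_le
  have h5 : ∫⁻ x : USphere n, ENNReal.ofReal (A x) * ENNReal.ofReal ((1 : ℝ) ^ n / n)
      ∂(sphMeasure n) ≤ ENNReal.ofReal (4 * 2 ^ (n - 1)) := by
    rw [← hL]
    calc ∫⁻ y in {(0 : Euc n)}ᶜ, q y
        ≤ ∫⁻ y in {(0 : Euc n)}ᶜ, ENNReal.ofReal (∏ i, G i (b.repr y i)) :=
          setLIntegral_mono' (measurableSet_singleton _).compl hqle
      _ ≤ ∫⁻ y, ENNReal.ofReal (∏ i, G i (b.repr y i)) := setLIntegral_le_lintegral _ _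
      _ = ENNReal.ofReal (∫ y : Euc n, ∏ i, G i (b.repr y i)) :=
          (ofReal_integral_eq_lintegral_ofReal hP (Eventually.of_forall fun y =>
            Finset.prod_nonneg fun i _ => hG0 i _)).symm
      _ ≤ _ := ENNReal.ofReal_le_ofReal hPint
  have hAi : Integrable (fun x : USphere n => A x) (sphMeasure n) :=
    integrable_sphere hAc.continuousOn
  have hAm : Measurable fun x : USphere n => ENNReal.ofReal (A x) :=
    (hAc.comp continuous_subtype_val).measurable.ennreal_ofReal
  rw [lintegral_mul_const _ hAm,
    ← ofReal_integral_eq_lintegral_ofReal hAi (Eventually.of_forall fun x => hApos x),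
    ← ENNReal.ofReal_mul (show 0 ≤ ∫ x : USphere n, A x ∂(sphMeasure n) from
      integral_nonneg fun x => hApos x)] at h5
  have h6 := (ENNReal.ofReal_le_ofReal_iff (by positivity)).mp h5
  rw [one_pow, mul_one_div, div_le_iff₀ hn'] at h6
  change ∫ x : USphere n, A x ∂(sphMeasure n) ≤ _
  linarith

end

/-! ### The flow: first identities and monotone quantities -/

section
variable {n : ℕ} {U : ℝ → Euc n → ℝ} {t : ℝ} {x v w : Euc n}

lemma SmT.gradient_continuousOn (hU : SmT U) :
    ContinuousOn (fun p : ℝ × Euc n => gradient (U p.1) p.2) (Ici 0 ×ˢ {(0 : Euc n)}ᶜ) := by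
  have h : ∀ F : Euc n → ℝ, gradient F = _ := gradient_expand
  simp only [h]
  exact continuousOn_finsetSum _ fun i _ => (hU.dd _).continuousOn.smul continuousOn_const

lemma SmT.fderiv_continuousOn (hU : SmT U) :
    ContinuousOn (fun p : ℝ × Euc n => fderiv ℝ (U p.1) p.2) (Ici 0 ×ˢ {(0 : Euc n)}ᶜ) := by
  have h1 : ContinuousOn (fun p => fderivWithin ℝ (fun p : ℝ × Euc n => U p.1 p.2)
      (Ici 0 ×ˢ {(0 : Euc n)}ᶜ) p) (Ici 0 ×ˢ {(0 : Euc n)}ᶜ) :=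
    (ContDiffOn.fderivWithin (m := (⊤ : ℕ∞)) hU uniqueDiffOn_dom (by simp)).continuousOn
  refine (h1.clm_comp (continuousOn_const (c := ContinuousLinearMap.inr ℝ ℝ (Euc n)))).congr ?_
  intro p hp
  ext v
  have := hU.dd_eq hp.1 hp.2 v
  simpa [_root_.dd] using this

lemma SmT.hessOp_continuousOn (hU : SmT U) :
    ContinuousOn (fun p : ℝ × Euc n => hessOp n (U p.1) p.2) (Ici 0 ×ˢ {(0 : Euc n)}ᶜ) := by
  set e := EuclideanSpace.basisFun (Fin n) ℝ
  have h : ContinuousOn (fun p : ℝ × Euc n =>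
      ∑ i, (fderiv ℝ (_root_.dd (e i) (U p.1)) p.2).smulRight (e i)) (Ici 0 ×ˢ {(0 : Euc n)}ᶜ) := by
    refine continuousOn_finsetSum _ fun i _ => ?_
    exact ((ContinuousLinearMap.smulRightL ℝ (Euc n) (Euc n)).flip (e i)).continuous.comp_continuousOn
      (hU.dd (e i)).fderiv_continuousOn
  refine h.congr ?_
  intro p hp
  ext1 v
  rw [← e.sum_repr' (hessOp n (U p.1) p.2 v)]
  simp only [inner_hessOp (hU.slice hp.1) hp.2, _root_.sum_apply]
  rfl

lemma SmT.sphDet_continuousOn (hU : SmT U) :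
    ContinuousOn (fun p : ℝ × Euc n => sphDet n (U p.1) p.2) (Ici 0 ×ˢ {(0 : Euc n)}ᶜ) := by
  have h1 : ContinuousOn (fun p : ℝ × Euc n => hessOp n (U p.1) p.2 +
      (innerSL ℝ p.2).smulRight p.2) (Ici 0 ×ˢ {(0 : Euc n)}ᶜ) := by
    refine hU.hessOp_continuousOn.add (Continuous.continuousOn ?_)
    have : Continuous fun p : ℝ × Euc n =>
        ContinuousLinearMap.smulRightL ℝ (Euc n) (Euc n) (innerSL ℝ p.2) p.2 := by
      fun_prop
    exact this
  exact ContinuousLinearMap.continuous_det.comp_continuousOn h1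

end

/-- The data and regularity of a flow, without the growth conditions. -/
structure GFlow (n : ℕ) (f : Euc n → ℝ) (φ : ℝ → ℝ) (H : ℝ → Euc n → ℝ) : Prop where
  hn : 2 ≤ n
  fs : Sm f
  fpos : ∀ x ∈ USphere n, 0 < f x
  φs : ContDiffOn ℝ (⊤ : ℕ∞) φ (Ioi 0)
  φpos : ∀ s ∈ Ioi (0 : ℝ), 0 < φ s
  sol : IsFlowSol n f φ (Ici 0) H

/-- The normal speed `h - ∂ₜh` of the flow. -/
def speed (n : ℕ) (f : Euc n → ℝ) (φ : ℝ → ℝ) (H : ℝ → Euc n → ℝ) (t : ℝ) (x : Euc n) : ℝ :=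
  flowEta n f φ (H t) * f x * ‖gradient (H t) x‖ ^ n / (φ (1 / H t x) * sphDet n (H t) x)

section
variable {n : ℕ} {f : Euc n → ℝ} {φ : ℝ → ℝ} {H : ℝ → Euc n → ℝ} {t s : ℝ} {x : Euc n}

lemma GFlow.npos (h : GFlow n f φ H) : 0 < n := by have := h.hn; omega

lemma GFlow.smT (h : GFlow n f φ H) : SmT H := h.sol.smooth

lemma GFlow.supp (h : GFlow n f φ H) (ht : 0 ≤ t) : IsSupportFn n (H t) := h.sol.body t ht

lemma GFlow.hpos (h : GFlow n f φ H) (ht : 0 ≤ t) (hx : x ∈ USphere n) : 0 < H t x :=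
  (h.supp ht).pos x hx

lemma GFlow.φinv (h : GFlow n f φ H) (ht : 0 ≤ t) (hx : x ∈ USphere n) : 0 < φ (1 / H t x) :=
  h.φpos _ (one_div_pos.mpr (h.hpos ht hx))

lemma GFlow.tD_eq (h : GFlow n f φ H) (ht : 0 ≤ t) (hx : x ∈ USphere n) :
    tD H t x = H t x - speed n f φ H t x := by
  have h1 := (h.sol.eqn t ht x hx).derivWithin (uniqueDiffOn_Ici 0 t ht)
  rw [(h.supp ht).radTerm_eq hx] at h1
  exact h1

lemma GFlow.hcont (h : GFlow n f φ H) :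
    ContinuousOn (fun p : ℝ × Euc n => H p.1 p.2) (Ici 0 ×ˢ USphere n) :=
  h.smT.continuousOn.mono sphere_subset

lemma GFlow.pcont (h : GFlow n f φ H) :
    ContinuousOn (fun p : ℝ × Euc n => f p.2 / φ (1 / H p.1 p.2)) (Ici 0 ×ˢ USphere n) := by
  refine ContinuousOn.div ?_ ?_ fun p hp => (h.φinv hp.1 hp.2).ne'
  · exact h.fs.continuousOn.comp continuousOn_snd fun p hp => USphere.ne_zero hp.2
  · refine h.φs.continuousOn.comp (continuousOn_const.div h.hcont fun p hp => (h.hpos hp.1 hp.2).ne')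
      fun p hp => one_div_pos.mpr (h.hpos hp.1 hp.2)

lemma slice_cont {k : ℝ → Euc n → ℝ}
    (hk : ContinuousOn (fun p : ℝ × Euc n => k p.1 p.2) (Ici 0 ×ˢ USphere n)) (ht : 0 ≤ t) :
    ContinuousOn (k t) (USphere n) :=
  hk.comp (f := fun y : Euc n => ((t, y) : ℝ × Euc n)) (by fun_prop) fun _ hy => ⟨ht, hy⟩

lemma GFlow.p_pos (h : GFlow n f φ H) (ht : 0 ≤ t) (hx : x ∈ USphere n) : 0 < f x / φ (1 / H t x) :=
  div_pos (h.fpos x hx) (h.φinv ht hx)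

lemma GFlow.pslice (h : GFlow n f φ H) (ht : 0 ≤ t) :
    ContinuousOn (fun x => f x / φ (1 / H t x)) (USphere n) :=
  slice_cont (k := fun t x => f x / φ (1 / H t x)) h.pcont ht

lemma GFlow.pint_pos (h : GFlow n f φ H) (ht : 0 ≤ t) :
    0 < sphInt n (fun x => f x / φ (1 / H t x)) :=
  sphInt_pos h.npos (h.pslice ht) fun _ hx => h.p_pos ht hx

lemma GFlow.eta_pos (h : GFlow n f φ H) (ht : 0 ≤ t) : 0 < flowEta n f φ (H t) :=
  div_pos (sphArea_pos h.npos) (h.pint_pos ht)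

lemma GFlow.speed_pos (h : GFlow n f φ H) (ht : 0 ≤ t) (hx : x ∈ USphere n) :
    0 < speed n f φ H t x := by
  have h1 := h.eta_pos ht
  have h2 := h.fpos x hx
  have h3 := norm_pos_iff.mpr ((h.supp ht).gradient_ne_zero hx)
  have h4 := (h.supp ht).sphDet_pos hx
  have h5 := h.φinv ht hx
  unfold speed; positivity

lemma GFlow.jcont (h : GFlow n f φ H) :
    ContinuousOn (fun p : ℝ × Euc n => radJac n (H p.1) p.2) (Ici 0 ×ˢ USphere n) := by
  refine ContinuousOn.div ?_ ?_ fun p hp =>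
    pow_ne_zero _ (norm_ne_zero_iff.mpr ((h.supp hp.1).gradient_ne_zero hp.2))
  · exact h.hcont.mul (h.smT.sphDet_continuousOn.mono sphere_subset)
  · exact ((h.smT.gradient_continuousOn.mono sphere_subset).norm.pow n)

lemma GFlow.jac_int (h : GFlow n f φ H) (ht : 0 ≤ t) : sphInt n (radJac n (H t)) = sphArea n := by
  have h1 := (sphInt_radDir h.npos (h.supp ht) (fun _ => 1) continuousOn_const).2
  rw [sphInt_const] at h1
  simp only [one_mul] at h1
  exact h1.symm

lemma GFlow.tD_div (h : GFlow n f φ H) (ht : 0 ≤ t) (hx : x ∈ USphere n) :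
    tD H t x / H t x =
      1 - flowEta n f φ (H t) * (f x / φ (1 / H t x)) / radJac n (H t) x := by
  have h1 := (h.hpos ht hx).ne'
  have h2 := (h.φinv ht hx).ne'
  have h3 := (norm_pos_iff.mpr ((h.supp ht).gradient_ne_zero hx)).ne'
  have h4 := ((h.supp ht).sphDet_pos hx).ne'
  rw [h.tD_eq ht hx, speed, radJac]
  field_simp

/-- The functional `∫ f S(h)` is nonincreasing whenever `S' (z) = 1 / (z φ(1/z))`: by the
Cauchy-Schwarz inequality its time derivative is nonpositive. -/
lemma GFlow.functional_le (h : GFlow n f φ H) {S : ℝ → ℝ}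
    (hS : ∀ z, 0 < z → HasDerivAt S (1 / (z * φ (1 / z))) z) (ht : 0 ≤ t) :
    sphInt n (fun x => f x * S (H t x)) ≤ sphInt n (fun x => f x * S (H 0 x)) := by
  have hSc : ContinuousOn S (Ioi 0) := fun z hz => (hS z hz).continuousAt.continuousWithinAt
  have hfc : ContinuousOn (fun p : ℝ × Euc n => f p.2) (Ici 0 ×ˢ USphere n) :=
    h.fs.continuousOn.comp continuousOn_snd fun p hp => USphere.ne_zero hp.2
  have hgc : ContinuousOn (fun p : ℝ × Euc n => f p.2 * S (H p.1 p.2)) (Ici 0 ×ˢ USphere n) :=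
    hfc.mul (hSc.comp h.hcont fun p hp => h.hpos hp.1 hp.2)
  have hgc' : ContinuousOn (fun p : ℝ × Euc n => f p.2 / φ (1 / H p.1 p.2) *
      (tD H p.1 p.2 / H p.1 p.2)) (Ici 0 ×ˢ USphere n) :=
    h.pcont.mul ((h.smT.tD.continuousOn.mono sphere_subset).div h.hcont
      fun p hp => (h.hpos hp.1 hp.2).ne')
  have hd : ∀ s, 0 < s → HasDerivAt (fun s => sphInt n (fun x => f x * S (H s x)))
      (sphInt n fun x => f x / φ (1 / H s x) * (tD H s x / H s x)) s := by
    intro s hs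
    refine sphInt_hasDerivAt (g := fun s x => f x * S (H s x))
      (g' := fun s x => f x / φ (1 / H s x) * (tD H s x / H s x)) hgc hgc' ?_ hs
    intro s hs x hx
    have h1 := (hS (H s x) (h.hpos hs.le hx)).comp s (h.smT.hasDerivAt hs (USphere.ne_zero hx))
    have h2 := h1.const_mul (f x)
    refine h2.congr_deriv ?_
    have := (h.hpos hs.le hx).ne'
    have := (h.φinv hs.le hx).ne'
    field_simp
  have hanti : AntitoneOn (fun s => sphInt n (fun x => f x * S (H s x))) (Ici 0) := by
    refine antitoneOn_of_deriv_nonpos (convex_Ici 0) (sphInt_continuousOn hgc) ?_ ?_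
    · intro s hs
      rw [interior_Ici] at hs
      exact (hd s hs).differentiableAt.differentiableWithinAt
    · intro s hs
      rw [interior_Ici] at hs
      have hs' : (0 : ℝ) < s := hs
      rw [(hd s hs).deriv]
      set η := flowEta n f φ (H s) with hη
      have hηp : 0 < η := h.eta_pos hs'.le
      have hpc := h.pslice hs'.le
      have hjc := slice_cont (k := fun t => radJac n (H t)) h.jcont hs'.le
      have h1 : sphInt n (fun x => f x / φ (1 / H s x) * (tD H s x / H s x)) ≤
          sphInt n (fun x => (1 / η) * radJac n (H s) x - f x / φ (1 / H s x)) := by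
        refine sphInt_mono (slice_cont
          (k := fun s x => f x / φ (1 / H s x) * (tD H s x / H s x)) hgc' hs'.le) ((continuousOn_const.mul hjc).sub hpc) ?_
        intro x hx
        have hJ := radJac_pos (h.supp hs'.le) hx
        rw [h.tD_div hs'.le hx]
        set p := f x / φ (1 / H s x)
        set J := radJac n (H s) x
        have e : (1 / η) * J - p - p * (1 - η * p / J) = (η / J) * (p - J / η) ^ 2 := by
          field_simp; ring
        have : 0 ≤ (η / J) * (p - J / η) ^ 2 := by positivity
        linarith
      rw [sphInt_sub (g := fun x => (1 / η) * radJac n (H s) x)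
        (continuousOn_const.mul hjc) hpc, sphInt_mul, h.jac_int hs'.le] at h1
      have e : 1 / η * sphArea n = sphInt n (fun x => f x / φ (1 / H s x)) := by
        have := (h.pint_pos hs'.le).ne'
        have := (sphArea_pos h.npos).ne'
        rw [hη, flowEta]; field_simp
      linarith
  exact hanti (mem_Ici.mpr le_rfl) ht ht

end

/-! ### Uniform bounds on the support function -/

section
variable {n : ℕ} {f : Euc n → ℝ} {φ : ℝ → ℝ} {H : ℝ → Euc n → ℝ} {t s : ℝ} {x u : Euc n}
  {F : Euc n → ℝ}

lemma sphere_nonempty (hn : 0 < n) : (USphere n).Nonempty := by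
  have : Nontrivial (Euc n) := by
    have : Nonempty (Fin n) := ⟨⟨0, hn⟩⟩
    infer_instance
  exact NormedSpace.sphere_nonempty.mpr zero_le_one

lemma IsSupportFn.exists_lower (hn : 0 < n) (hF : IsSupportFn n F) :
    ∃ c : ℝ, 0 < c ∧ ∀ x ∈ USphere n, c ≤ F x := by
  obtain ⟨x, hx, h⟩ := (isCompact_sphere (0 : Euc n) 1).exists_isMinOn (sphere_nonempty hn)
    (hF.sm.continuousOn.mono fun x hx => USphere.ne_zero hx)
  exact ⟨F x, hF.pos x hx, fun y hy => h hy⟩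

lemma IsSupportFn.invRad_continuous (hn : 0 < n) (hF : IsSupportFn n F) :
    Continuous (invRad n F) := by
  obtain ⟨c, hc, hcF⟩ := hF.exists_lower hn
  obtain ⟨v, hv⟩ := sphere_nonempty hn
  have key : ∀ u w, invRad n F u - invRad n F w ≤ c⁻¹ * ‖u - w‖ := by
    intro u w
    obtain ⟨x, hx, hxe, _⟩ := hF.exists_invRad hv u
    have h1 := hF.le_invRad hx w
    have h2 : ⟪x, u⟫ / F x - ⟪x, w⟫ / F x = ⟪x, u - w⟫ / F x := by rw [inner_sub_right]; ring
    have h3 : ⟪x, u - w⟫ ≤ ‖u - w‖ := by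
      refine (real_inner_le_norm _ _).trans ?_
      rw [USphere.norm hx, one_mul]
    have hFx := hF.pos x hx
    have h4 : ⟪x, u - w⟫ / F x ≤ c⁻¹ * ‖u - w‖ := by
      rw [div_le_iff₀ hFx]
      refine h3.trans ?_
      have : 1 ≤ c⁻¹ * F x := by
        rw [inv_mul_eq_div, le_div_iff₀ hc]; linarith [hcF x hx]
      nlinarith [norm_nonneg (u - w)]
    rw [hxe]; linarith
  refine LipschitzWith.continuous (K := ⟨c⁻¹, by positivity⟩) (LipschitzWith.of_dist_le_mul ?_)
  intro u w
  rw [Real.dist_eq, dist_eq_norm, abs_le]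
  have h1 := key u w
  have h2 := key w u
  rw [norm_sub_rev] at h2
  exact ⟨show -(c⁻¹ * ‖u - w‖) ≤ _ by linarith, h1⟩

lemma IsSupportFn.invRad_pos (hF : IsSupportFn n F) (hu : u ∈ USphere n) : 0 < invRad n F u := by
  obtain ⟨_, _, h, _⟩ := hF.exists_normal hu
  exact h

lemma IsSupportFn.log_invRad_cont (hn : 0 < n) (hF : IsSupportFn n F) :
    ContinuousOn (fun u => Real.log (invRad n F u)) (USphere n) :=
  (hF.invRad_continuous hn).continuousOn.log fun _ hu => (hF.invRad_pos hu).ne'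

/-- The entropy-type functional `-∫ log ρ`, with `ρ` the radial function. -/
def radEnt (n : ℕ) (F : Euc n → ℝ) : ℝ := sphInt n fun u => Real.log (invRad n F u)

/-- Comparison of the radial functionals of two bodies through the radial Gauss map of one. -/
lemma radEnt_compare (hn : 0 < n) {F G : Euc n → ℝ} (hF : IsSupportFn n F) (hG : IsSupportFn n G) :
    sphInt n (fun x => (Real.log (F x) - Real.log (G x)) * radJac n F x) ≤
      radEnt n G - radEnt n F := by
  have hw : ContinuousOn (fun u => Real.log (invRad n G u) - Real.log (invRad n F u)) (USphere n) :=
    (hG.log_invRad_cont hn).sub (hF.log_invRad_cont hn)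
  obtain ⟨h1, h2⟩ := sphInt_radDir hn hF _ hw
  rw [radEnt, radEnt, ← sphInt_sub (hG.log_invRad_cont hn) (hF.log_invRad_cont hn), h2]
  have hsub : USphere n ⊆ {(0 : Euc n)}ᶜ := fun x hx => USphere.ne_zero hx
  have hc : ContinuousOn (fun x => (Real.log (F x) - Real.log (G x)) * radJac n F x) (USphere n) :=
    (((hF.sm.continuousOn.mono hsub).log fun x hx => (hF.pos x hx).ne').sub
      ((hG.sm.continuousOn.mono hsub).log fun x hx => (hG.pos x hx).ne')).mul (radJac_continuous hF)
  refine integral_mono (integrable_sphere hc) h1 fun x => ?_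
  have hx := x.2
  refine mul_le_mul_of_nonneg_right ?_ (radJac_pos hF hx).le
  have hr := norm_pos_iff.mpr (hF.gradient_ne_zero hx)
  have hFx := hF.pos x hx
  have hGx := hG.pos x hx
  have h3 : F x / ‖gradient F x‖ / G x ≤ invRad n G (radDir F x) := by
    have h4 := hG.le_invRad hx (radDir F x)
    have h5 : ⟪(x : Euc n), radDir F x⟫ = F x / ‖gradient F x‖ := by
      rw [radDir, real_inner_smul_right, real_inner_comm, inner_gradient,
        hF.euler (USphere.ne_zero hx), inv_mul_eq_div]
    rwa [h5] at h4
  have h6 := Real.log_le_log (by positivity) h3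
  rw [Real.log_div (by positivity) hGx.ne', Real.log_div hFx.ne' hr.ne'] at h6
  have h7 : Real.log (invRad n F (radDir F x)) = - Real.log ‖gradient F (x : Euc n)‖ := by
    rw [hF.invRad_radDir hx, Real.log_inv]
  simp only [h7]
  linarith

lemma GFlow.logcont (h : GFlow n f φ H) :
    ContinuousOn (fun p : ℝ × Euc n => Real.log (H p.1 p.2)) (Ici 0 ×ˢ USphere n) :=
  h.hcont.log fun _ hp => (h.hpos hp.1 hp.2).ne'

lemma GFlow.compare_cont (h : GFlow n f φ H) (ht : 0 ≤ t) :
    ContinuousOn (fun s => sphInt n fun x =>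
      (Real.log (H t x) - Real.log (H s x)) * radJac n (H t) x) (Ici 0) := by
  refine sphInt_continuousOn (g := fun s x =>
    (Real.log (H t x) - Real.log (H s x)) * radJac n (H t) x) ?_
  have h1 : MapsTo (fun p : ℝ × Euc n => (t, p.2)) (Ici 0 ×ˢ USphere n) (Ici 0 ×ˢ USphere n) :=
    fun p hp => ⟨ht, hp.2⟩
  have h2 : ContinuousOn (fun p : ℝ × Euc n => (t, p.2)) (Ici 0 ×ˢ USphere n) := by fun_prop
  exact ((h.logcont.comp h2 h1).sub h.logcont).mul (h.jcont.comp h2 h1)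

lemma GFlow.radEnt_cont (h : GFlow n f φ H) : ContinuousOn (fun t => radEnt n (H t)) (Ici 0) := by
  intro t ht
  have ht' : (0 : ℝ) ≤ t := ht
  have hL := h.compare_cont ht' t ht
  have hU : ContinuousOn (fun s => sphInt n fun x =>
      (Real.log (H t x) - Real.log (H s x)) * radJac n (H s) x) (Ici 0) := by
    refine sphInt_continuousOn (g := fun s x =>
      (Real.log (H t x) - Real.log (H s x)) * radJac n (H s) x) ?_
    have h1 : MapsTo (fun p : ℝ × Euc n => (t, p.2)) (Ici 0 ×ˢ USphere n) (Ici 0 ×ˢ USphere n) :=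
      fun p hp => ⟨ht, hp.2⟩
    have h2 : ContinuousOn (fun p : ℝ × Euc n => (t, p.2)) (Ici 0 ×ˢ USphere n) := by fun_prop
    exact ((h.logcont.comp h2 h1).sub h.logcont).mul h.jcont
  have hU' := hU t ht
  have hz : (sphInt n fun x => (Real.log (H t x) - Real.log (H t x)) * radJac n (H t) x) = 0 := by
    simp [sphInt]
  rw [ContinuousWithinAt, hz] at hL hU'
  rw [ContinuousWithinAt, ← tendsto_sub_nhds_zero_iff]
  refine tendsto_of_tendsto_of_tendsto_of_le_of_le' hL hU' ?_ ?_
  · filter_upwards [self_mem_nhdsWithin] with s hs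
    exact radEnt_compare h.npos (h.supp ht') (h.supp hs)
  · filter_upwards [self_mem_nhdsWithin] with s hs
    have h1 := radEnt_compare h.npos (h.supp hs) (h.supp ht')
    have e : (sphInt n fun x => (Real.log (H t x) - Real.log (H s x)) * radJac n (H s) x) =
        (-1) * sphInt n fun x => (Real.log (H s x) - Real.log (H t x)) * radJac n (H s) x := by
      rw [← sphInt_mul]; exact sphInt_congr fun x _ => by ring
    rw [e]; linarith

lemma GFlow.tD_jac (h : GFlow n f φ H) (ht : 0 ≤ t) :
    sphInt n (fun x => tD H t x / H t x * radJac n (H t) x) = 0 := by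
  have h1 : sphInt n (fun x => tD H t x / H t x * radJac n (H t) x) =
      sphInt n (fun x => radJac n (H t) x - flowEta n f φ (H t) * (f x / φ (1 / H t x))) := by
    refine sphInt_congr fun x hx => ?_
    have hJ := (radJac_pos (h.supp ht) hx).ne'
    rw [h.tD_div ht hx]; field_simp
  rw [h1, sphInt_sub (g := radJac n (H t)) (k := fun x => flowEta n f φ (H t) * (f x / φ (1 / H t x)))
    (slice_cont (k := fun t => radJac n (H t)) h.jcont ht)
    (continuousOn_const.mul (h.pslice ht)), sphInt_mul, h.jac_int ht, flowEta,
    div_mul_cancel₀ _ (h.pint_pos ht).ne', sub_self]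

/-- `∫ log ρ` does not decrease along the flow. -/
lemma GFlow.radEnt_le (h : GFlow n f φ H) {T : ℝ} (hT : 0 ≤ T) : radEnt n (H T) ≤ radEnt n (H 0) := by
  have key : ∀ ⦃x⦄, x ∈ Icc 0 T → - radEnt n (H (T - x)) ≤ - radEnt n (H T) := by
    refine image_le_of_liminf_slope_right_le_deriv_boundary
      (f := fun s => - radEnt n (H (T - s))) (B := fun _ => - radEnt n (H T)) (B' := fun _ => 0)
      ?_ (by simp) continuousOn_const (fun x _ => hasDerivWithinAt_const _ _ _) ?_
    · refine (h.radEnt_cont.comp (f := fun s => T - s) (by fun_prop) ?_).neg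
      intro s hs
      exact sub_nonneg.mpr hs.2
    · intro s hs r hr
      set τ := T - s with hτ
      have hτp : 0 < τ := sub_pos.mpr hs.2
      -- differentiate the lower barrier supplied by the comparison lemma
      have hQ : HasDerivAt (fun z => sphInt n fun x => Real.log (H z x) * radJac n (H τ) x) 0 τ := by
        have h1 : MapsTo (fun p : ℝ × Euc n => (τ, p.2)) (Ici 0 ×ˢ USphere n) (Ici 0 ×ˢ USphere n) :=
          fun p hp => ⟨hτp.le, hp.2⟩
        have h2 : ContinuousOn (fun p : ℝ × Euc n => (τ, p.2)) (Ici 0 ×ˢ USphere n) := by fun_prop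
        have := sphInt_hasDerivAt (g := fun z x => Real.log (H z x) * radJac n (H τ) x)
          (g' := fun z x => tD H z x / H z x * radJac n (H τ) x)
          (h.logcont.mul (h.jcont.comp h2 h1))
          (((h.smT.tD.continuousOn.mono sphere_subset).div h.hcont
            fun p hp => (h.hpos hp.1 hp.2).ne').mul (h.jcont.comp h2 h1))
          (fun z hz x hx => ((h.smT.hasDerivAt hz (USphere.ne_zero hx)).log
            (h.hpos hz.le hx).ne').mul_const _) hτp
        rwa [h.tD_jac hτp.le] at this
      have hQ' : HasDerivAt (fun z => sphInt n fun x => Real.log (H (T - z) x) * radJac n (H τ) x)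
          0 s := by
        have := HasDerivAt.comp s (h₂ := fun z => sphInt n fun x => Real.log (H z x) * radJac n (H τ) x)
          (h := fun z => T - z) hQ ((hasDerivAt_id s).const_sub T)
        rw [zero_mul] at this
        exact this
      have hev := ((hQ'.tendsto_slope.mono_left
        (nhdsGT_le_nhdsNE s)).eventually (gt_mem_nhds hr)).and
        (Ioo_mem_nhdsGT hs.2)
      refine hev.frequently.mono fun z hz => ?_
      obtain ⟨hz1, hz2, hz3⟩ := hz
      refine lt_of_le_of_lt ?_ hz1
      rw [slope_def_field, slope_def_field]
      refine div_le_div_of_nonneg_right ?_ (sub_pos.mpr hz2).le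
      have hTz : 0 ≤ T - z := by linarith
      have hc := radEnt_compare h.npos (h.supp hτp.le) (h.supp hTz)
      have hlog : ∀ r, 0 ≤ r → ContinuousOn
          (fun x => Real.log (H r x) * radJac n (H τ) x) (USphere n) := fun r hr =>
        (slice_cont (k := fun t x => Real.log (H t x)) h.logcont hr).mul
          (radJac_continuous (h.supp hτp.le))
      have e : (sphInt n fun x => (Real.log (H τ x) - Real.log (H (T - z) x)) * radJac n (H τ) x) =
          (sphInt n fun x => Real.log (H τ x) * radJac n (H τ) x) -
          sphInt n fun x => Real.log (H (T - z) x) * radJac n (H τ) x := by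
        rw [← sphInt_sub (hlog τ hτp.le) (hlog _ hTz)]
        exact sphInt_congr fun x _ => by ring
      rw [e] at hc
      simp only [← hτ]
      linarith
  have := key ⟨hT, le_rfl⟩
  rw [sub_self] at this
  linarith

lemma log_lower {y : ℝ} (hy : 0 < y) : -2 * (√y)⁻¹ ≤ Real.log y := by
  have hs := Real.sqrt_pos.mpr hy
  have h1 := Real.log_le_sub_one_of_pos (inv_pos.mpr hs)
  rw [Real.log_inv, Real.log_sqrt hy.le] at h1
  linarith

lemma GFlow.lower_bound (h : GFlow n f φ H) :
    ∃ m : ℝ, 0 < m ∧ ∀ t, 0 ≤ t → ∀ x ∈ USphere n, m ≤ H t x := by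
  obtain ⟨C, hC, hCb⟩ := singular_bound h.npos
  have hA := sphArea_pos h.npos
  refine ⟨Real.exp (-(2 * C + radEnt n (H 0)) / sphArea n), Real.exp_pos _, fun t ht θ hθ => ?_⟩
  have hF := h.supp ht
  have hθp := hF.pos θ hθ
  rw [← Real.le_log_iff_exp_le hθp, div_le_iff₀ hA]
  obtain ⟨u0, hu0, hmin⟩ := (isCompact_sphere (0 : Euc n) 1).exists_isMinOn (sphere_nonempty h.npos)
    (hF.invRad_continuous h.npos).continuousOn
  have hκ0 := hF.invRad_pos hu0
  set δ := invRad n (H t) u0 * H t θ with hδ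
  have hδp : 0 < δ := by positivity
  have h1 : ∀ u ∈ USphere n, -2 * (√(max |⟪u, θ⟫| δ))⁻¹ - Real.log (H t θ) ≤
      Real.log (invRad n (H t) u) := by
    intro u hu
    have hmx : 0 < max |⟪u, θ⟫| δ := lt_max_of_lt_right hδp
    have h2 : max |⟪u, θ⟫| δ / H t θ ≤ invRad n (H t) u := by
      rw [div_le_iff₀ hθp]
      refine max_le (abs_le'.mpr ⟨?_, ?_⟩) (mul_le_mul_of_nonneg_right (hmin hu) hθp.le)
      · have := hF.le_invRad hθ u
        rwa [div_le_iff₀ hθp, real_inner_comm] at this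
      · have := hF.le_invRad (x := -θ) (by simpa using hθ) u
        rw [h.sol.symm t ht θ, div_le_iff₀ hθp, inner_neg_left, real_inner_comm] at this
        exact this
    have h3 := Real.log_le_log (by positivity) h2
    rw [Real.log_div hmx.ne' hθp.ne'] at h3
    linarith [log_lower hmx]
  have hsc := (singular_lower θ hδp).continuousOn (s := USphere n)
  have h4 := sphInt_mono
    (g := fun u => -2 * (√(max |⟪u, θ⟫| δ))⁻¹ - Real.log (H t θ)) ((continuousOn_const.mul hsc).sub continuousOn_const)
    (hF.log_invRad_cont h.npos) h1
  rw [sphInt_sub (g := fun u => -2 * (√(max |⟪u, θ⟫| δ))⁻¹) (continuousOn_const.mul hsc)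
    continuousOn_const, sphInt_mul, sphInt_const] at h4
  have h5 := h.radEnt_le ht
  have h6 := hCb θ hθ δ hδp
  rw [radEnt] at h5
  linarith

/-- A body is at least as wide as the segment to its farthest point. -/
lemma GFlow.width (h : GFlow n f φ H) (ht : 0 ≤ t) {θ : Euc n} (hθ : θ ∈ USphere n)
    (hmax : ∀ y ∈ USphere n, H t y ≤ H t θ) (hx : x ∈ USphere n) : H t θ * |⟪x, θ⟫| ≤ H t x := by
  have hF := h.supp ht
  have hp := hF.pos θ hθ
  have hG : gradient (H t) θ = H t θ • θ := by
    have h1 := hF.norm_gradient_le hθ hmax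
    have h2 : ⟪gradient (H t) θ, θ⟫ = H t θ := by
      rw [inner_gradient, hF.euler (USphere.ne_zero hθ)]
    have h3 : ‖gradient (H t) θ - H t θ • θ‖ ^ 2 ≤ 0 := by
      rw [norm_sub_sq_real, real_inner_smul_right, h2, norm_smul, USphere.norm hθ,
        Real.norm_of_nonneg hp.le]
      nlinarith [norm_nonneg (gradient (H t) θ)]
    have h4 : ‖gradient (H t) θ - H t θ • θ‖ = 0 := by
      nlinarith [norm_nonneg (gradient (H t) θ - H t θ • θ)]
    exact sub_eq_zero.mp (norm_eq_zero.mp h4)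
  have key : ∀ y ∈ USphere n, H t θ * ⟪y, θ⟫ ≤ H t y := by
    intro y hy
    have := hF.support_le hθ hy
    rwa [← inner_gradient, hG, real_inner_smul_left, real_inner_comm] at this
  rcases abs_cases ⟪x, θ⟫ with h1 | h1
  · rw [h1.1]; exact key x hx
  · have := key (-x) (by simpa using hx)
    rw [h.sol.symm t ht x, inner_neg_left] at this
    rw [h1.1]; exact this

end

section
variable {n : ℕ} {f : Euc n → ℝ} {φ : ℝ → ℝ} {H : ℝ → Euc n → ℝ} {t s : ℝ} {x u : Euc n}
  {F : Euc n → ℝ}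

/-- If `1 / (z φ(1/z))` has a positive primitive tending to infinity, the bodies stay bounded. -/
lemma GFlow.upper_of_tendsto_top (h : GFlow n f φ H) {S : ℝ → ℝ}
    (hS : ∀ z, 0 < z → HasDerivAt S (1 / (z * φ (1 / z))) z) (hSp : ∀ z, 0 < z → 0 < S z)
    (hmono : ∀ y z, 0 < y → y ≤ z → S y ≤ S z) (hlim : Tendsto S atTop atTop) :
    ∃ M : ℝ, 0 < M ∧ ∀ t, 0 ≤ t → ∀ x ∈ USphere n, H t x ≤ M := by
  obtain ⟨C, hC, hCb⟩ := singular_bound h.npos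
  have hA := sphArea_pos h.npos
  have hsub : USphere n ⊆ {(0 : Euc n)}ᶜ := fun x hx => USphere.ne_zero hx
  have hfc := h.fs.continuousOn.mono hsub
  obtain ⟨x0, hx0, hx0m⟩ := (isCompact_sphere (0 : Euc n) 1).exists_isMinOn (sphere_nonempty h.npos) hfc
  have hfm := h.fpos x0 hx0
  have hSc : ContinuousOn S (Ioi 0) := fun z hz => (hS z hz).continuousAt.continuousWithinAt
  set Φ := sphInt n (fun x => f x * S (H 0 x))
  -- the width of the equatorial strip is chosen so that its weight is at most half of the area
  set δ := (sphArea n / (2 * C)) ^ 2 with hδ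
  have hδp : 0 < δ := by positivity
  have hsq : √δ = sphArea n / (2 * C) := Real.sqrt_sq (by positivity)
  obtain ⟨z0, hz0⟩ := eventually_atTop.mp (hlim.eventually_gt_atTop (2 * Φ / (f x0 * sphArea n)))
  refine ⟨(max z0 1) / δ, by positivity, fun t ht y hy => ?_⟩
  obtain ⟨θ, hθ, hmax⟩ := (isCompact_sphere (0 : Euc n) 1).exists_isMaxOn (sphere_nonempty h.npos)
    ((h.supp ht).sm.continuousOn.mono hsub)
  refine (hmax hy).trans ?_
  change H t θ ≤ _
  by_contra! hbig
  have hM := h.hpos ht hθ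
  have hz : z0 ≤ H t θ * δ := by
    rw [div_lt_iff₀ hδp] at hbig
    exact (le_max_left _ _).trans hbig.le
  have hSz := hz0 _ hz
  have hSzp := hSp _ (mul_pos hM hδp)
  have hpt : ∀ x ∈ USphere n, f x0 * S (H t θ * δ) * (1 - √δ * (√(max |⟪x, θ⟫| δ))⁻¹) ≤
      f x * S (H t x) := by
    intro x hx
    have h1 := h.fpos x hx
    have h2 : f x0 ≤ f x := hx0m hx
    have h3 := hSp _ (h.hpos ht hx)
    rcases le_total |⟪x, θ⟫| δ with hc | hc
    · rw [max_eq_right hc, mul_inv_cancel₀ (Real.sqrt_pos.mpr hδp).ne', sub_self, mul_zero]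
      positivity
    · have h4 : S (H t θ * δ) ≤ S (H t x) := hmono _ _ (by positivity)
        ((mul_le_mul_of_nonneg_left hc hM.le).trans
          (h.width ht hθ (fun y hy => hmax hy) hx))
      have h5 : 0 ≤ √δ * (√(max |⟪x, θ⟫| δ))⁻¹ := by positivity
      calc _ ≤ f x0 * S (H t θ * δ) * 1 := mul_le_mul_of_nonneg_left (by linarith) (by positivity)
        _ ≤ _ := by rw [mul_one]; exact mul_le_mul h2 h4 hSzp.le h1.le
  have hsc := (singular_lower θ hδp).continuousOn (s := USphere n)
  have hkc : ContinuousOn (fun x => √δ * (√(max |⟪x, θ⟫| δ))⁻¹) (USphere n) :=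
    continuousOn_const.mul hsc
  have hSHc : ContinuousOn (fun x => f x * S (H t x)) (USphere n) :=
    hfc.mul (hSc.comp ((h.supp ht).sm.continuousOn.mono hsub) fun x hx => h.hpos ht hx)
  have h1 := sphInt_mono
    (g := fun x => f x0 * S (H t θ * δ) * (1 - √δ * (√(max |⟪x, θ⟫| δ))⁻¹))
    (continuousOn_const.mul (continuousOn_const.sub hkc)) hSHc hpt
  rw [sphInt_mul, sphInt_sub (g := fun _ => 1) continuousOn_const hkc, sphInt_mul, sphInt_const] at h1
  have h2 := h.functional_le hS ht
  have h3 := hCb θ hθ δ hδp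
  have h4 : √δ * (sphInt n fun u => (√(max |⟪u, θ⟫| δ))⁻¹) ≤ sphArea n / 2 := by
    calc _ ≤ √δ * C := mul_le_mul_of_nonneg_left h3 (by positivity)
      _ = sphArea n / 2 := by rw [hsq]; field_simp
  rw [div_lt_iff₀ (by positivity)] at hSz
  have h5 : f x0 * S (H t θ * δ) * (sphArea n / 2) ≤ f x0 * S (H t θ * δ) *
      (1 * sphArea n - √δ * sphInt n fun u => (√(max |⟪u, θ⟫| δ))⁻¹) :=
    mul_le_mul_of_nonneg_left (by linarith) (by positivity)
  nlinarith

/-- If `-1 / (z φ(1/z))` has a positive primitive tending to zero, the bodies stay bounded. -/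
lemma GFlow.upper_of_tendsto_zero (h : GFlow n f φ H) {T : ℝ → ℝ}
    (hT : ∀ z, 0 < z → HasDerivAt (fun z => - T z) (1 / (z * φ (1 / z))) z)
    (hTp : ∀ z, 0 < z → 0 < T z)
    (hanti : ∀ y z, 0 < y → y ≤ z → T z ≤ T y) (hlim : Tendsto T atTop (𝓝 0)) :
    ∃ M : ℝ, 0 < M ∧ ∀ t, 0 ≤ t → ∀ x ∈ USphere n, H t x ≤ M := by
  obtain ⟨C, hC, hCb⟩ := singular_bound h.npos
  obtain ⟨m, hm, hmb⟩ := h.lower_bound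
  have hA := sphArea_pos h.npos
  have hsub : USphere n ⊆ {(0 : Euc n)}ᶜ := fun x hx => USphere.ne_zero hx
  have hfc := h.fs.continuousOn.mono hsub
  obtain ⟨x0, hx0, hx0m⟩ := (isCompact_sphere (0 : Euc n) 1).exists_isMaxOn (sphere_nonempty h.npos) hfc
  have hfm := h.fpos x0 hx0
  have hTc : ContinuousOn T (Ioi 0) := fun z hz => by
    have h1 : ContinuousAt (fun z => -(-T z)) z := (hT z hz).continuousAt.neg
    simp only [neg_neg] at h1
    exact h1.continuousWithinAt
  have hTHc : ∀ t, 0 ≤ t → ContinuousOn (fun x => f x * T (H t x)) (USphere n) := fun t ht =>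
    hfc.mul (hTc.comp ((h.supp ht).sm.continuousOn.mono hsub) fun x hx => h.hpos ht hx)
  set Φ := sphInt n (fun x => f x * T (H 0 x)) with hΦ
  have hΦp : 0 < Φ := sphInt_pos h.npos (hTHc 0 le_rfl) fun x hx =>
    mul_pos (h.fpos x hx) (hTp _ (h.hpos le_rfl hx))
  have hTm := hTp m hm
  -- the width of the equatorial strip is chosen so that it carries at most half of the functional
  set δ := (Φ / (2 * C * f x0 * T m)) ^ 2 with hδ
  have hδp : 0 < δ := by positivity
  have hsq : √δ = Φ / (2 * C * f x0 * T m) := Real.sqrt_sq (by positivity)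
  have hε : 0 < Φ / (2 * f x0 * sphArea n) := by positivity
  obtain ⟨z0, hz0⟩ := eventually_atTop.mp (hlim.eventually (gt_mem_nhds hε))
  refine ⟨(max z0 1) / δ, by positivity, fun t ht y hy => ?_⟩
  obtain ⟨θ, hθ, hmax⟩ := (isCompact_sphere (0 : Euc n) 1).exists_isMaxOn (sphere_nonempty h.npos)
    ((h.supp ht).sm.continuousOn.mono hsub)
  refine (hmax hy).trans ?_
  change H t θ ≤ _
  by_contra! hbig
  have hM := h.hpos ht hθ
  have hz : z0 ≤ H t θ * δ := by
    rw [div_lt_iff₀ hδp] at hbig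
    exact (le_max_left _ _).trans hbig.le
  have hTz := hz0 _ hz
  have hTzp := hTp _ (mul_pos hM hδp)
  have hpt : ∀ x ∈ USphere n, f x * T (H t x) ≤
      f x0 * T (H t θ * δ) + f x0 * T m * √δ * (√(max |⟪x, θ⟫| δ))⁻¹ := by
    intro x hx
    have h1 := h.fpos x hx
    have h2 : f x ≤ f x0 := hx0m hx
    have h3 := hTp _ (h.hpos ht hx)
    rcases le_total |⟪x, θ⟫| δ with hc | hc
    · rw [max_eq_right hc, mul_assoc _ (√δ), mul_inv_cancel₀ (Real.sqrt_pos.mpr hδp).ne', mul_one]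
      have h4 : f x * T (H t x) ≤ f x0 * T m :=
        mul_le_mul h2 (hanti _ _ hm (hmb t ht x hx)) h3.le hfm.le
      have : 0 < f x0 * T (H t θ * δ) := by positivity
      linarith
    · have h4 : T (H t x) ≤ T (H t θ * δ) := hanti _ _ (by positivity)
        ((mul_le_mul_of_nonneg_left hc hM.le).trans
          (h.width ht hθ (fun y hy => hmax hy) hx))
      have h5 : 0 ≤ f x0 * T m * √δ * (√(max |⟪x, θ⟫| δ))⁻¹ := by positivity
      have h6 := mul_le_mul h2 h4 h3.le hfm.le
      linarith
  have hsc := (singular_lower θ hδp).continuousOn (s := USphere n)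
  have hkc : ContinuousOn (fun x => f x0 * T m * √δ * (√(max |⟪x, θ⟫| δ))⁻¹) (USphere n) :=
    continuousOn_const.mul hsc
  have h1 := sphInt_mono (hTHc t ht)
    (k := fun x => f x0 * T (H t θ * δ) + f x0 * T m * √δ * (√(max |⟪x, θ⟫| δ))⁻¹)
    (continuousOn_const.add hkc) hpt
  rw [sphInt_add (g := fun _ => f x0 * T (H t θ * δ)) continuousOn_const hkc,
    sphInt_const, sphInt_mul (f x0 * T m * √δ)] at h1
  have h2 := h.functional_le hT ht
  have hneg : ∀ s, sphInt n (fun x => f x * -T (H s x)) = -1 * sphInt n fun x => f x * T (H s x) := by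
    intro s
    rw [← sphInt_mul]; exact sphInt_congr fun x _ => by ring
  rw [hneg, hneg, ← hΦ] at h2
  have h3 := hCb θ hθ δ hδp
  have h4 : f x0 * T m * √δ * (sphInt n fun u => (√(max |⟪u, θ⟫| δ))⁻¹) ≤ Φ / 2 := by
    calc _ ≤ f x0 * T m * √δ * C := mul_le_mul_of_nonneg_left h3 (by positivity)
      _ = Φ / 2 := by rw [hsq]; field_simp
  rw [lt_div_iff₀ (by positivity)] at hTz
  nlinarith

lemma GFlow.upper_bound (h : GFlow n f φ H) (hcond : CondI n f φ (H 0) ∨ CondII φ) :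
    ∃ M : ℝ, 0 < M ∧ ∀ t, 0 ≤ t → ∀ x ∈ USphere n, H t x ≤ M := by
  have hinv : ∀ z : ℝ, 0 < z → HasDerivAt (fun z : ℝ => 1 / z) (-(1 / z ^ 2)) z := by
    intro z hz
    have := hasDerivAt_inv hz.ne'
    simpa [one_div] using this
  rcases hcond with ⟨R, hRp, hRm, hR0, -, -, hRd, -⟩ | ⟨R, hRp, hRm, hR0, -, -, hRd⟩
  · refine h.upper_of_tendsto_zero (T := fun z => R (1 / z)) ?_ ?_ ?_ ?_
    · intro z hz
      have hz' : (1 / z) ∈ Ioi (0 : ℝ) := one_div_pos.mpr hz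
      have h1 := ((hRd _ hz').1.comp z (hinv z hz)).neg
      have := (h.φpos _ hz').ne'
      refine h1.congr_deriv ?_
      field_simp
    · exact fun z hz => hRp _ (one_div_pos.mpr hz)
    · intro y z hy hyz
      exact hRm.monotoneOn (one_div_pos.mpr (hy.trans_le hyz)) (one_div_pos.mpr hy)
        (one_div_le_one_div_of_le hy hyz)
    · simp only [one_div]
      exact hR0.comp tendsto_inv_atTop_nhdsGT_zero
  · refine h.upper_of_tendsto_top (S := fun z => R (1 / z)) ?_ ?_ ?_ ?_
    · intro z hz
      have hz' : (1 / z) ∈ Ioi (0 : ℝ) := one_div_pos.mpr hz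
      have h1 := (hRd _ hz').1.comp z (hinv z hz)
      have := (h.φpos _ hz').ne'
      refine h1.congr_deriv ?_
      field_simp
    · exact fun z hz => hRp _ (one_div_pos.mpr hz)
    · intro y z hy hyz
      exact hRm.antitoneOn (one_div_pos.mpr (hy.trans_le hyz)) (one_div_pos.mpr hy)
        (one_div_le_one_div_of_le hy hyz)
    · simp only [one_div]
      exact hR0.comp tendsto_inv_atTop_nhdsGT_zero

/-- Two-sided bounds on the normalising factor in terms of those on the support function. -/
lemma GFlow.eta_bounds (h : GFlow n f φ H) {m M : ℝ} (hm : 0 < m)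
    (hb : ∀ t, 0 ≤ t → ∀ x ∈ USphere n, m ≤ H t x ∧ H t x ≤ M) :
    ∃ a b : ℝ, 0 < a ∧ ∀ t, 0 ≤ t → a ≤ flowEta n f φ (H t) ∧ flowEta n f φ (H t) ≤ b := by
  have hA := sphArea_pos h.npos
  obtain ⟨v, hv⟩ := sphere_nonempty h.npos
  have hmM : m ≤ M := (hb 0 le_rfl v hv).1.trans (hb 0 le_rfl v hv).2
  have hc : ContinuousOn (fun p : ℝ × Euc n => f p.2 / φ (1 / p.1)) (Icc m M ×ˢ USphere n) := by
    refine ContinuousOn.div ?_ ?_ fun p hp => (h.φpos _ (one_div_pos.mpr (hm.trans_le hp.1.1))).ne'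
    · exact h.fs.continuousOn.comp continuousOn_snd fun p hp => USphere.ne_zero hp.2
    · refine h.φs.continuousOn.comp (continuousOn_const.div continuousOn_fst
        fun p hp => (hm.trans_le hp.1.1).ne') fun p hp => one_div_pos.mpr (hm.trans_le hp.1.1)
  have hK : IsCompact (Icc m M ×ˢ USphere n) := isCompact_Icc.prod (isCompact_sphere _ _)
  have hne : (Icc m M ×ˢ USphere n).Nonempty := ⟨(m, v), ⟨le_rfl, hmM⟩, hv⟩
  obtain ⟨p1, hp1, hmin⟩ := hK.exists_isMinOn hne hc
  obtain ⟨p2, hp2, hmax⟩ := hK.exists_isMaxOn hne hc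
  have hpos : ∀ p ∈ Icc m M ×ˢ USphere n, 0 < f p.2 / φ (1 / p.1) := fun p hp =>
    div_pos (h.fpos _ hp.2) (h.φpos _ (one_div_pos.mpr (hm.trans_le hp.1.1)))
  have h1 := hpos p1 hp1
  have h2 := hpos p2 hp2
  refine ⟨1 / (f p2.2 / φ (1 / p2.1)), 1 / (f p1.2 / φ (1 / p1.1)), by positivity, fun t ht => ?_⟩
  have hI := h.pint_pos ht
  have e1 := sphInt_mono (h.pslice ht) (continuousOn_const (c := f p2.2 / φ (1 / p2.1)))
    fun x hx => hmax (show (H t x, x) ∈ Icc m M ×ˢ USphere n from ⟨hb t ht x hx, hx⟩)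
  have e2 := sphInt_mono (continuousOn_const (c := f p1.2 / φ (1 / p1.1))) (h.pslice ht)
    fun x hx => hmin (show (H t x, x) ∈ Icc m M ×ˢ USphere n from ⟨hb t ht x hx, hx⟩)
  rw [sphInt_const] at e1 e2
  rw [flowEta]
  constructor
  · rw [div_le_div_iff₀ h2 hI]; linarith
  · rw [div_le_div_iff₀ hI h1]; linarith

end

/-! ### The algebra behind the bound on the largest radius -/

section
open Finset

lemma lam_algebra_sq {N a y Z : ℝ} (hN : 2 ≤ N) (h : y ^ 2 ≤ (N - 1) * Z) :
    a ^ 2 / N ≤ (a - y) ^ 2 + Z := by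
  have hN1 : 0 < N - 1 := by linarith
  have h2 : y ^ 2 / (N - 1) ≤ Z := by
    rw [div_le_iff₀ hN1]; linarith
  have h3 : (a - y) ^ 2 + y ^ 2 / (N - 1) - a ^ 2 / N =
      ((N - 1) * a - N * y) ^ 2 / (N * (N - 1)) := by field_simp; ring
  have : 0 ≤ ((N - 1) * a - N * y) ^ 2 / (N * (N - 1)) := by positivity
  linarith

set_option maxHeartbeats 1000000 in
/-- Pointwise algebra at a maximum of `λ₁ / ((h - ε)(c - r²/2))`. The hypotheses are the first and
second order conditions: `hK1`, `hK2` differentiate the logarithm of the speed, `hT`, `hQ` are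
the spatial and `h5` the time conditions at the maximum. The sums `Σ h_j Y_j` (with
`Y_j = Σ_i T i j / λ_i`) and `n Σ h_j² λ_j / r²` cancel, and what is left is quadratic in `λ₁`
from below and linear from above. -/
lemma lam_algebra {ι : Type*} [DecidableEq ι] (I : Finset ι) {p : ι} (hp : p ∈ I)
    {lam hh g K Q : ι → ℝ} {T : ι → ι → ℝ} {N h r2 F L S μ K11 g11 ε M S0 c G : ℝ}
    (hN : (I.card : ℝ) = N - 1) (hlam : ∀ i ∈ I, 0 < lam i)
    (hε : 0 < ε) (hF : 0 < F) (hL : ε ≤ L) (hLh : L = h - ε) (hhM : h ≤ M)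
    (hr1 : h ^ 2 ≤ r2) (hr2 : r2 ≤ M ^ 2) (hhp : ∀ i ∈ I, hh i ^ 2 ≤ r2)
    (hS0 : 0 < S0) (hS : S0 ≤ S) (hSc : S ≤ c) (hMS : M ^ 3 ≤ ε * S0)
    (hg : ∀ i ∈ I, |g i| ≤ G) (hg11 : |g11| ≤ G * (1 + lam p))
    (hμ : lam p = μ * (L * S))
    (hK1 : ∀ k ∈ I, K k / F = g k + N * (lam k * hh k) / r2 - ∑ i ∈ I, T i k / lam i)
    (hK2 : g11 + N / 2 * (2 * (lam p ^ 2 - h * lam p + ∑ j ∈ I, hh j * T p j) / r2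
        - (2 * (lam p * hh p) / r2) ^ 2)
      - ∑ i ∈ I, ((Q i + lam i + if i = p then 2 else 0) / lam i - (T i p / lam i) ^ 2)
      - (2 * lam p - 2) ≤ K11 / F - (K p / F) ^ 2)
    (hT : ∀ k ∈ I, T p k = μ * (hh k * S - L * (lam k * hh k)))
    (hQ : ∀ i ∈ I, Q i + lam p + (if i = p then 2 * lam p else 0) ≤
      μ * ((lam i - h) * S - L * (lam i ^ 2 - h * lam i + ∑ j ∈ I, hh j * T i j)
        - 2 * (hh i ^ 2 * lam i)))
    (h5 : μ * ((h - F) * S - L * (r2 - h * F - ∑ k ∈ I, hh k * K k)) ≤ lam p - K11) :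
    lam p ≤ 1 + c * (2 / ε + G / ε + 2 * G + 2 * N / ε + N * M / S0 + N * G * M / S0 + N + 4) := by
  have hl := hlam p hp
  have hLp : 0 < L := hε.trans_le hL
  have hSp : 0 < S := hS0.trans_le hS
  have hhpos : 0 < h := by linarith
  have hMp : 0 < M := hhpos.trans_le hhM
  have hr2p : 0 < r2 := (pow_pos hhpos 2).trans_le hr1
  have hμp : 0 < μ := by
    have : 0 < L * S := mul_pos hLp hSp
    by_contra! hc
    nlinarith [mul_nonneg (neg_nonneg.mpr hc) this.le]
  have hG : 0 ≤ G := (abs_nonneg _).trans (hg p hp)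
  have hcard : (1 : ℝ) ≤ I.card := by exact_mod_cast Finset.card_pos.mpr ⟨p, hp⟩
  have hN2 : 2 ≤ N := by linarith
  have hcp : 0 < c := hSp.trans_le hSc
  set s1 := ∑ i ∈ I, 1 / lam i with hs1
  set sl := ∑ i ∈ I, lam i with hsl
  set sh := ∑ i ∈ I, hh i ^ 2 with hsh
  set slh := ∑ i ∈ I, lam i * hh i ^ 2 with hslh
  set sg := ∑ i ∈ I, hh i * g i with hsg
  set sK := ∑ i ∈ I, hh i * K i with hsK
  set Y : ι → ℝ := fun k => ∑ i ∈ I, T i k / lam i with hY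
  set Z := ∑ i ∈ I, (T i p / lam i) ^ 2 with hZ
  set A := ∑ i ∈ I, Q i / lam i with hA
  have hs1p : 0 ≤ s1 := sum_nonneg fun i hi => (one_div_pos.mpr (hlam i hi)).le
  have hshp : 0 ≤ sh := sum_nonneg fun i _ => sq_nonneg _
  have hslp : lam p ≤ sl := single_le_sum (f := lam) (fun i hi => (hlam i hi).le) hp
  set u := 1 / r2 with hu
  have hup : 0 < u := one_div_pos.mpr hr2p
  have hur : u * r2 = 1 := by rw [hu]; field_simp
  set F' := 1 / F with hF'
  have hF'p : 0 < F' := one_div_pos.mpr hF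
  have hFF : F' * F = 1 := by rw [hF']; field_simp
  -- contraction of the first-order condition on the speed with the gradient
  have hB : ∑ j ∈ I, hh j * Y j = sg + N * u * slh - sK * F' := by
    have : ∀ j ∈ I, hh j * Y j = hh j * g j + N * u * (lam j * hh j ^ 2) - hh j * K j * F' := by
      intro j hj
      have h1 := hK1 j hj
      have h2 : Y j = g j + N * (lam j * hh j) / r2 - K j / F := by rw [h1]; simp only [hY]; ring
      rw [h2, hu, hF']; field_simp
    rw [sum_congr rfl this, sum_sub_distrib, sum_add_distrib, ← mul_sum, ← sum_mul]
  have hC : ∑ j ∈ I, hh j * T p j = μ * (S * sh - L * slh) := by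
    have : ∀ j ∈ I, hh j * T p j = μ * (S * hh j ^ 2 - L * (lam j * hh j ^ 2)) := by
      intro j hj; rw [hT j hj]; ring
    rw [sum_congr rfl this, ← mul_sum, sum_sub_distrib, ← mul_sum, ← mul_sum]
  have hD : Y p ^ 2 ≤ (N - 1) * Z := by
    rw [← hN]; exact sq_sum_le_card_mul_sum_sq
  have hAb : A ≤ μ * ((N - 1) * S - h * S * s1 - L * (sl - (N - 1) * h + ∑ j ∈ I, hh j * Y j)
      - 2 * sh) - lam p * s1 - 2 := by
    have hq : ∀ i ∈ I, Q i / lam i ≤ μ * (S - h * S * (1 / lam i) - L * (lam i - h +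
        ∑ j ∈ I, hh j * (T i j / lam i)) - 2 * hh i ^ 2) - lam p * (1 / lam i)
        - (if i = p then 2 else 0) := by
      intro i hi
      have hli := hlam i hi
      have e1 : ∑ j ∈ I, hh j * (T i j / lam i) = (∑ j ∈ I, hh j * T i j) / lam i := by
        rw [sum_div]; exact sum_congr rfl fun j _ => by ring
      have e2 : (if i = p then (2 : ℝ) else 0) = (if i = p then 2 * lam p else 0) / lam i := by
        by_cases hip : i = p
        · subst hip; simp [hli.ne']
        · simp [hip]
      rw [e1, e2, div_le_iff₀ hli]
      have := hQ i hi
      have e3 : (μ * (S - h * S * (1 / lam i) - L * (lam i - h +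
        (∑ j ∈ I, hh j * T i j) / lam i) - 2 * hh i ^ 2) - lam p * (1 / lam i)
        - (if i = p then 2 * lam p else 0) / lam i) * lam i =
        μ * ((lam i - h) * S - L * (lam i ^ 2 - h * lam i + ∑ j ∈ I, hh j * T i j)
        - 2 * (hh i ^ 2 * lam i)) - lam p - (if i = p then 2 * lam p else 0) := by
        field_simp
      rw [e3]; linarith
    refine (sum_le_sum hq).trans (le_of_eq ?_)
    rw [sum_sub_distrib, sum_sub_distrib, ← mul_sum, ← mul_sum, sum_sub_distrib, sum_sub_distrib,
      sum_sub_distrib, ← mul_sum, ← mul_sum, sum_add_distrib, sum_sub_distrib, ← mul_sum,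
      sum_comm, sum_const, sum_const, sum_ite_eq' I p, if_pos hp, nsmul_eq_mul, nsmul_eq_mul, hN]
    have : ∀ j ∈ I, ∑ i ∈ I, hh j * (T i j / lam i) = hh j * Y j := fun j _ => by rw [← mul_sum]
    rw [sum_congr rfl this]
  have hmid : ∑ i ∈ I, ((Q i + lam i + if i = p then 2 else 0) / lam i - (T i p / lam i) ^ 2) =
      A + (N - 1) + 2 / lam p - Z := by
    have : ∀ i ∈ I, (Q i + lam i + if i = p then 2 else 0) / lam i - (T i p / lam i) ^ 2 =
        Q i / lam i + 1 + (if i = p then 2 / lam p else 0) - (T i p / lam i) ^ 2 := by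
      intro i hi
      have := (hlam i hi).ne'
      by_cases hip : i = p
      · subst hip; simp only [if_true]; field_simp
      · simp only [if_neg hip]; field_simp; ring
    rw [sum_congr rfl this, sum_sub_distrib, sum_add_distrib, sum_add_distrib, sum_ite_eq' I p,
      if_pos hp, sum_const, nsmul_eq_mul, hN]
    ring
  rw [hmid, hC] at hK2
  have hkp : K p / F = g p + N * u * (lam p * hh p) - Y p := by
    rw [hK1 p hp, hu]; ring
  have hsq : 2 * g p * lam p * hh p * u + N * lam p ^ 2 * hh p ^ 2 * u ^ 2 ≤ (K p / F) ^ 2 + Z := by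
    rw [hkp]
    set a := g p + N * u * (lam p * hh p) with ha
    have h1 : a ^ 2 / N ≤ (a - Y p) ^ 2 + Z := lam_algebra_sq hN2 hD
    have h4 : a ^ 2 / N = g p ^ 2 / N + 2 * g p * lam p * hh p * u
        + N * lam p ^ 2 * hh p ^ 2 * u ^ 2 := by
      rw [ha]; field_simp; ring
    have : 0 ≤ g p ^ 2 / N := by positivity
    linarith only [h1, h4, this]
  have hpu : hh p ^ 2 * u ≤ 1 := by
    rw [← hur, mul_comm u]; exact mul_le_mul_of_nonneg_right (hhp p hp) hup.le
  have hpu2 : N * lam p ^ 2 * hh p ^ 2 * u ^ 2 ≤ N * lam p ^ 2 * u := by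
    have := mul_le_mul_of_nonneg_left hpu (by positivity : 0 ≤ N * lam p ^ 2 * u)
    linarith only [this]
  have h5' : K11 / F ≤ lam p * F' - μ * ((h * F' - 1) * S - L * (r2 * F' - h - sK * F')) := by
    rw [div_le_iff₀ hF]
    have : (lam p * F' - μ * ((h * F' - 1) * S - L * (r2 * F' - h - sK * F'))) * F =
      lam p * (F' * F) - μ * ((h * (F' * F) - F) * S - L * (r2 * (F' * F) - h * F - sK * (F' * F))) := by
      ring
    rw [this, hFF]; linarith only [h5]
  have hK2' : g11 + N * (lam p ^ 2 - h * lam p + μ * (S * sh - L * slh)) * u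
      - 2 * N * lam p ^ 2 * hh p ^ 2 * u ^ 2 - (A + (N - 1) + 2 / lam p - Z) - (2 * lam p - 2)
      + (K p / F) ^ 2 ≤ K11 / F := by
    have : N / 2 * (2 * (lam p ^ 2 - h * lam p + μ * (S * sh - L * slh)) / r2
        - (2 * (lam p * hh p) / r2) ^ 2) = N * (lam p ^ 2 - h * lam p + μ * (S * sh - L * slh)) * u
      - 2 * N * lam p ^ 2 * hh p ^ 2 * u ^ 2 := by
      rw [hu]; ring
    linarith only [this, hK2]
  rw [hB] at hAb
  have E1 : g11 + 2 * g p * lam p * hh p * u - N * h * lam p * u + N * μ * S * sh * u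
      - (N - 1) - 2 / lam p - 2 * lam p + 2 + μ * (-(N - 1) * S + h * S * s1 + L * sl
      - (N - 1) * L * h + L * sg + 2 * sh) + lam p * s1 + 2 ≤
      lam p * F' - μ * S * h * F' + μ * S + μ * L * r2 * F' - μ * L * h := by
    linear_combination hK2' + h5' + hAb + hsq + hpu2
  clear_value s1 sl sh slh sg sK Y Z A u F'
  clear hK2' h5' hAb hsq hpu2 hkp hK2 h5 hmid hB hC hD hQ hT hK1
  rcases le_total (lam p) 1 with h1 | h1
  · have : 0 ≤ c * (2 / ε + G / ε + 2 * G + 2 * N / ε + N * M / S0 + N * G * M / S0 + N + 4) := by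
      positivity
    linarith only [this, h1]
  -- the choice of `c` makes the terms with a factor `1 / F` nonpositive
  have hFt : lam p * F' - μ * S * h * F' + μ * L * r2 * F' ≤ 0 := by
    have : lam p * F' - μ * S * h * F' + μ * L * r2 * F' = μ * F' * (L * r2 - ε * S) := by
      rw [hμ, hLh]; ring
    rw [this]
    refine mul_nonpos_of_nonneg_of_nonpos (by positivity) ?_
    have h2 : L * r2 ≤ M * M ^ 2 := mul_le_mul (by linarith only [hLh, hhM, hε]) hr2 hr2p.le hMp.le
    have h3 : ε * S0 ≤ ε * S := mul_le_mul_of_nonneg_left hS hε.le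
    have h4 : M * M ^ 2 = M ^ 3 := by ring
    linarith only [h2, h3, h4, hMS]
  have hmS : μ * S ≤ lam p / ε := by
    rw [le_div_iff₀ hε, hμ]
    have := mul_le_mul_of_nonneg_left hL (by positivity : 0 ≤ μ * S)
    linarith only [this]
  have hmL : μ * L ≤ lam p / S0 := by
    rw [le_div_iff₀ hS0, hμ]
    have := mul_le_mul_of_nonneg_left hS (by positivity : 0 ≤ μ * L)
    linarith only [this]
  have hmL2 : lam p / c ≤ μ * L := by
    rw [div_le_iff₀ hcp, hμ]
    have := mul_le_mul_of_nonneg_left hSc (by positivity : 0 ≤ μ * L)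
    linarith only [this]
  have hhu : ∀ y : ℝ, y ^ 2 ≤ r2 → |y| * u ≤ 1 / (2 * ε) := by
    intro y hy
    have h2 : |y| ≤ √r2 := Real.abs_le_sqrt hy
    have h3 : h ≤ √r2 := Real.le_sqrt_of_sq_le hr1
    have h4 : √r2 * √r2 = r2 := Real.mul_self_sqrt hr2p.le
    have h6 : 0 < √r2 := Real.sqrt_pos.mpr hr2p
    rw [hu, mul_one_div, div_le_div_iff₀ hr2p (by positivity), ← h4]
    have h7 : 2 * ε ≤ √r2 := by linarith only [h3, hL, hLh]
    have h8 : |y| * (2 * ε) ≤ √r2 * √r2 := mul_le_mul h2 h7 (by positivity) h6.le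
    linarith only [h8]
  have hgG : ∀ i ∈ I, -G ≤ g i := fun i hi => (abs_le.mp (hg i hi)).1
  have b1 : -(G * lam p / ε) ≤ 2 * g p * lam p * hh p * u := by
    have h2 := hhu _ (hhp p hp)
    have h3 : |g p * (hh p * u)| ≤ G * (1 / (2 * ε)) := by
      rw [abs_mul, abs_mul, abs_of_pos hup]
      exact mul_le_mul (hg p hp) h2 (by positivity) hG
    have h4 := (abs_le.mp h3).1
    have h6 := mul_le_mul_of_nonneg_left h4 (by positivity : 0 ≤ 2 * lam p)
    have : 2 * lam p * -(G * (1 / (2 * ε))) = -(G * lam p / ε) := by field_simp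
    linarith only [h6, this]
  have b2 : -(2 * G * lam p) ≤ g11 := by
    have := (abs_le.mp hg11).1
    have h2 := mul_le_mul_of_nonneg_left h1 hG
    linarith only [this, h2]
  have b3 : N * h * lam p * u ≤ N * lam p / (2 * ε) := by
    have h2 := hhu h hr1
    rw [abs_of_pos hhpos] at h2
    have h3 := mul_le_mul_of_nonneg_left h2 (by positivity : 0 ≤ N * lam p)
    have : N * lam p * (1 / (2 * ε)) = N * lam p / (2 * ε) := by ring
    linarith only [this, h3]
  have b4 : μ * ((N - 1) * S) ≤ N * lam p / ε := by
    have h3 := mul_le_mul_of_nonneg_left hmS (by linarith only [hN2] : 0 ≤ N - 1)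
    have h4 : (N - 1) * (lam p / ε) ≤ N * (lam p / ε) :=
      mul_le_mul_of_nonneg_right (by linarith only) (by positivity)
    have : N * lam p / ε = N * (lam p / ε) := by ring
    linarith only [h3, h4, this]
  have b5 : μ * ((N - 1) * L * h) ≤ N * M * lam p / S0 := by
    have h3 : (N - 1) * (μ * L) * h ≤ N * (lam p / S0) * M :=
      mul_le_mul (mul_le_mul (by linarith only) hmL (by positivity) (by linarith only [hN2])) hhM hhpos.le
        (by positivity)
    have : N * M * lam p / S0 = N * (lam p / S0) * M := by ring
    linarith only [h3, this]
  have b6 : -(N * G * M * lam p / S0) ≤ μ * (L * sg) := by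
    have h2 : |sg| ≤ N * (M * G) := by
      rw [hsg]
      refine (Finset.abs_sum_le_sum_abs (fun i => hh i * g i) I).trans ?_
      have : ∀ i ∈ I, |hh i * g i| ≤ M * G := fun i hi => by
        rw [abs_mul]
        exact mul_le_mul (Real.abs_le_sqrt ((hhp i hi).trans hr2) |>.trans_eq
          (Real.sqrt_sq hMp.le)) (hg i hi) (abs_nonneg _) hMp.le
      refine (sum_le_sum this).trans ?_
      rw [sum_const, nsmul_eq_mul, hN]
      exact mul_le_mul_of_nonneg_right (by linarith only) (by positivity)
    have h3 := (abs_le.mp h2).1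
    have h4 : μ * L * (N * (M * G)) ≤ lam p / S0 * (N * (M * G)) :=
      mul_le_mul_of_nonneg_right hmL (by positivity)
    have h6 := mul_le_mul_of_nonneg_left h3 (by positivity : 0 ≤ μ * L)
    have : N * G * M * lam p / S0 = lam p / S0 * (N * (M * G)) := by ring
    linarith only [h4, h6, this]
  have b7 : 2 / lam p ≤ 2 * lam p := by
    rw [div_le_iff₀ hl]; nlinarith only [h1]
  have b8 : lam p / c * lam p ≤ μ * (L * sl) := by
    have h2 : lam p / c * lam p ≤ μ * L * sl := mul_le_mul hmL2 hslp hl.le (by positivity)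
    linarith only [h2]
  have b9 : 0 ≤ μ * (h * S * s1) := by positivity
  have b10 : 0 ≤ μ * (2 * sh) := by positivity
  have b11 : 0 ≤ lam p * s1 := by positivity
  have b12 : 0 ≤ N * μ * S * sh * u := by positivity
  have b13 : 0 ≤ μ * L * h := by positivity
  have E2 : lam p / c * lam p ≤ lam p * (2 / ε + G / ε + 2 * G + 2 * N / ε + N * M / S0
      + N * G * M / S0 + N + 4) := by
    have e : lam p * (2 / ε + G / ε + 2 * G + 2 * N / ε + N * M / S0 + N * G * M / S0 + N + 4) =
      2 * (lam p / ε) + G * lam p / ε + 2 * G * lam p + (N * lam p / (2 * ε) + N * lam p / ε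
        + N * lam p / (2 * ε)) + N * M * lam p / S0
      + N * G * M * lam p / S0 + N * lam p + 4 * lam p := by field_simp; ring
    rw [e]
    have e1 : 0 ≤ N * lam p / (2 * ε) := by positivity
    have e2 : 0 ≤ lam p / ε := by positivity
    have e3 : N ≤ N * lam p := by nlinarith only [h1, hN2]
    linarith only [E1, hFt, hmS, b1, b2, b3, b4, b5, b6, b7, b8, b9, b10, b11, b12, b13, e1, e2, e3, h1]
  have E3 : lam p / c ≤ 2 / ε + G / ε + 2 * G + 2 * N / ε + N * M / S0
      + N * G * M / S0 + N + 4 := by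
    rw [mul_comm] at E2
    exact le_of_mul_le_mul_left E2 hl
  rw [div_le_iff₀ hcp] at E3
  linarith only [E3]

end

/-! ### First and second derivatives of the speed in an eigenframe -/

section
variable {q : ℝ → ℝ} {a b c : ℝ}

lemma J2.comp {ψ : ℝ → ℝ} (h : J2 q a b c) (hψ : ContDiffAt ℝ (⊤ : ℕ∞) ψ a) :
    J2 (fun s => ψ (q s)) (ψ a) (deriv ψ a * b) (deriv (deriv ψ) a * b ^ 2 + deriv ψ a * c) := by
  obtain ⟨rfl, q1, h1, rfl, h2⟩ := h
  have hc := h1.self_of_nhds.continuousAt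
  have hd : ∀ᶠ z in 𝓝 (q 0), DifferentiableAt ℝ ψ z := by
    have := (hψ.of_le (m := 2) ENat.LEInfty.out).eventually (by simp)
    filter_upwards [this] with z hz using hz.differentiableAt (by simp)
  refine ⟨rfl, fun s => deriv ψ (q s) * q1 s, ?_, rfl, ?_⟩
  · filter_upwards [h1, hc.eventually hd] with s hs hs' using hs'.hasDerivAt.comp s hs
  · have h3 : HasDerivAt (deriv ψ) (deriv (deriv ψ) (q 0)) (q 0) :=
by
      have h4 : ContDiffAt ℝ (⊤ : ℕ∞) (fun z => fderiv ℝ ψ z 1) (q 0) :=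
        (hψ.fderiv_right (by simp)).clm_apply contDiffAt_const
      simp only [fderiv_apply_one_eq_deriv] at h4
      exact (h4.differentiableAt (by simp)).hasDerivAt
    refine ((h3.comp 0 h1.self_of_nhds).mul h2).congr_deriv ?_
    simp only [Function.comp]; ring

lemma J2.one_add_sq : J2 (fun s => 1 + s ^ 2) 1 0 2 := by
  have := (J2.const 1).add (J2.id.mul J2.id)
  refine (this.congr_val (by ring) (by ring) (by ring)).congr (Eventually.of_forall fun s => ?_)
  simp only; ring

lemma J2.sqrt_one_add_sq : J2 (fun s => √(1 + s ^ 2)) 1 0 1 := by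
  have h := J2.one_add_sq.comp (ψ := fun z => √z) (Real.contDiffAt_sqrt one_ne_zero)
  have hd : deriv (fun z => √z) (1 : ℝ) = 1 / 2 := by
    rw [(Real.hasDerivAt_sqrt one_ne_zero).deriv]; simp
  exact h.congr_val (by simp) (by ring) (by rw [hd]; ring)

lemma J2.inv_sqrt_one_add_sq : J2 (fun s => (√(1 + s ^ 2))⁻¹) 1 0 (-1) := by
  have h := J2.sqrt_one_add_sq.comp (ψ := fun z => z⁻¹) (contDiffAt_inv ℝ one_ne_zero)
  have hd : deriv (fun z : ℝ => z⁻¹) 1 = -1 := by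
    rw [deriv_inv]; norm_num
  exact h.congr_val (by simp) (by ring) (by rw [hd]; ring)

lemma J2.inv_one_add_sq : J2 (fun s => (1 + s ^ 2)⁻¹) 1 0 (-2) := by
  have h := J2.one_add_sq.comp (ψ := fun z => z⁻¹) (contDiffAt_inv ℝ one_ne_zero)
  have hd : deriv (fun z : ℝ => z⁻¹) 1 = -1 := by
    rw [deriv_inv]; norm_num
  exact h.congr_val (by simp) (by ring) (by rw [hd]; ring)

lemma J2.sq_div_one_add_sq : J2 (fun s => s ^ 2 * (1 + s ^ 2)⁻¹) 0 0 2 := by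
  have h := (J2.const 1).sub J2.inv_one_add_sq
  refine (h.congr_val (by ring) (by ring) (by ring)).congr (Eventually.of_forall fun s => ?_)
  have : (1 + s ^ 2) ≠ 0 := by positivity
  simp only; field_simp; ring

end

section
variable {n : ℕ} {F : Euc n → ℝ} {x : Euc n}

lemma dd_perm3 (hs : Sm F) (hx : x ≠ 0) (u v : Euc n) :
    dd u (dd v (dd v F)) x = dd v (dd v (dd u F)) x := by
  rw [dd_comm (hs.ddir v) hx]
  exact dd_comm_outer hs hx v u v

lemma dd_perm4 (hs : Sm F) (hx : x ≠ 0) (u v : Euc n) :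
    dd u (dd u (dd v (dd v F))) x = dd v (dd v (dd u (dd u F))) x := by
  rw [dd_congr (fun y hy => dd_perm3 hs hy u v) hx, dd_perm3 (hs.ddir u) hx]

namespace EigenFrame
variable (E : EigenFrame n F x)

lemma norm_line (hx : x ∈ USphere n) {k : Fin n} (hk : k ≠ E.o) (s : ℝ) :
    ‖x + s • E.b k‖ = √(1 + s ^ 2) := by
  have h1 : ‖x + s • E.b k‖ ^ 2 = 1 + s ^ 2 := by
    rw [norm_add_sq_real, real_inner_smul_right, E.inner_x hk, norm_smul, USphere.norm hx]
    simp
  rw [← h1, Real.sqrt_sq (norm_nonneg _)]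

lemma line_ne (hx : x ∈ USphere n) {k : Fin n} (hk : k ≠ E.o) (s : ℝ) : x + s • E.b k ≠ 0 := by
  rw [← norm_pos_iff, E.norm_line hx hk]; positivity

lemma inner_line (k : Fin n) (s : ℝ) (i : Fin n) :
    ⟪x + s • E.b k, E.b i⟫ = (if i = E.o then 1 else 0) + s * (if i = k then 1 else 0) := by
  nth_rewrite 1 [← E.b_o]
  rw [inner_add_left, real_inner_smul_left, E.b.inner_eq_ite, E.b.inner_eq_ite]
  simp only [eq_comm]

/-- Jets of the diagonal entries of `∇²h + hI` (at the normalised point, in the fixed frame)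
along a tangential line. -/
lemma diag_jet (hF : IsSupportFn n F) (hx : x ∈ USphere n) {k i : Fin n} (hk : k ≠ E.o)
    (hi : i ≠ E.o) :
    J2 (fun s => ‖x + s • E.b k‖ * dd (E.b i) (dd (E.b i) F) (x + s • E.b k)
        + ⟪x + s • E.b k, E.b i⟫ ^ 2 * (‖x + s • E.b k‖ ^ 2)⁻¹)
      (E.lam i) (dd (E.b k) (dd (E.b i) (dd (E.b i) F)) x)
      (dd (E.b k) (dd (E.b k) (dd (E.b i) (dd (E.b i) F))) x + E.lam i
        + if i = k then 2 else 0) := by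
  have hx0 := USphere.ne_zero hx
  have h1 := J2.sqrt_one_add_sq.mul
    (J2.line (((hF.sm.ddir (E.b i)).ddir (E.b i))) hx0 (E.b k))
  have h2 : J2 (fun s => (if i = k then s ^ 2 * (1 + s ^ 2)⁻¹ else 0)) 0 0
      (if i = k then 2 else 0) := by
    by_cases h : i = k
    · simpa only [h, if_true] using J2.sq_div_one_add_sq
    · simpa only [h, if_false] using J2.const 0
  have h3 := h1.add h2
  rw [E.hess hF hx0, if_pos rfl] at h3
  refine (h3.congr_val (by ring) (by ring) (by ring)).congr (Eventually.of_forall fun s => ?_)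
  simp only [E.norm_line hx hk, E.inner_line, if_neg hi]
  rw [Real.sq_sqrt (by positivity)]
  by_cases h : i = k <;> simp [h]

lemma diag_jet_o (hF : IsSupportFn n F) (hx : x ∈ USphere n) {k : Fin n} (hk : k ≠ E.o) :
    J2 (fun s => ‖x + s • E.b k‖ * dd (E.b E.o) (dd (E.b E.o) F) (x + s • E.b k)
        + ⟪x + s • E.b k, E.b E.o⟫ ^ 2 * (‖x + s • E.b k‖ ^ 2)⁻¹) 1 0 (2 * E.lam k - 2) := by
  have hx0 := USphere.ne_zero hx
  have h1 := J2.sqrt_one_add_sq.mul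
    (J2.line (((hF.sm.ddir (E.b E.o)).ddir (E.b E.o))) hx0 (E.b k))
  have h3 := h1.add J2.inv_one_add_sq
  have e1 : dd (E.b E.o) (dd (E.b E.o) F) x = 0 := by
    rw [E.b_o, hF.dd_radial hx0]
  have e2 : dd (E.b k) (dd (E.b E.o) (dd (E.b E.o) F)) x = 0 := by
    rw [dd_perm3 hF.sm hx0, E.b_o, hF.ddd_radial hx0, hF.dd_radial hx0, neg_zero]
  have e3 : dd (E.b k) (dd (E.b k) (dd (E.b E.o) (dd (E.b E.o) F))) x = 2 * E.lam k := by
    rw [dd_perm4 hF.sm hx0, E.b_o]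
    have h4 := (((hF.hom2 (E.b k) (E.b k)).ddir ((hF.sm.ddir _).ddir _) x).euler
      (((hF.sm.ddir _).ddir _).ddir _) hx0)
    rw [h4, hF.ddd_radial hx0, E.hess hF hx0, if_pos rfl]
    norm_num
  rw [e1, e2, e3] at h3
  refine (h3.congr_val (by ring) (by ring) (by ring)).congr (Eventually.of_forall fun s => ?_)
  simp only [E.norm_line hx hk, E.inner_line, if_neg hk.symm, if_true]
  rw [Real.sq_sqrt (by positivity)]
  simp

lemma norm_sq_gradient (y : Euc n) : ‖gradient F y‖ ^ 2 = ∑ j, dd (E.b j) F y ^ 2 := by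
  rw [← E.b.sum_sq_norm_inner_right (gradient F y)]
  refine Finset.sum_congr rfl fun j _ => ?_
  rw [Real.norm_eq_abs, sq_abs, real_inner_comm, inner_gradient]

lemma norm_sq_gradient_self (hF : IsSupportFn n F) (hx : x ∈ USphere n) :
    ‖gradient F x‖ ^ 2 = F x ^ 2 + ∑ j ∈ E.tan, dd (E.b j) F x ^ 2 := by
  rw [E.norm_sq_gradient, E.sum_eq, E.b_o, hF.euler (USphere.ne_zero hx)]

lemma gradient_jet (hF : IsSupportFn n F) (hx : x ∈ USphere n) (k : Fin n) :
    J2 (fun s => ‖gradient F (x + s • E.b k)‖ ^ 2) (‖gradient F x‖ ^ 2)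
      (2 * (E.lam k * dd (E.b k) F x))
      (2 * (E.lam k ^ 2 - F x * E.lam k
        + ∑ j ∈ E.tan, dd (E.b j) F x * dd (E.b k) (dd (E.b k) (dd (E.b j) F)) x)) := by
  have hx0 := USphere.ne_zero hx
  have h1 : J2 (fun s => ‖gradient F (x + s • E.b k)‖ ^ 2) _ _ _ :=
    (J2.sum Finset.univ fun j _ =>
      (J2.line (hF.sm.ddir (E.b j)) hx0 (E.b k)).mul (J2.line (hF.sm.ddir (E.b j)) hx0 (E.b k))).congr
      (Eventually.of_forall fun s => by
        simp only [E.norm_sq_gradient]; exact Finset.sum_congr rfl fun j _ => pow_two _)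
  refine h1.congr_val ?_ ?_ ?_
  · rw [E.norm_sq_gradient]; exact Finset.sum_congr rfl fun j _ => (pow_two _).symm
  · have : ∀ j, dd (E.b k) (dd (E.b j) F) x * dd (E.b j) F x
        + dd (E.b j) F x * dd (E.b k) (dd (E.b j) F) x =
        if k = j then 2 * (E.lam k * dd (E.b k) F x) else 0 := by
      intro j
      rw [E.hess hF hx0]
      by_cases h : k = j
      · subst h; simp; ring
      · simp [h]
    rw [Finset.sum_congr rfl fun j _ => this j]
    simp
  · have : ∀ j, dd (E.b k) (dd (E.b k) (dd (E.b j) F)) x * dd (E.b j) F x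
        + 2 * (dd (E.b k) (dd (E.b j) F) x * dd (E.b k) (dd (E.b j) F) x)
        + dd (E.b j) F x * dd (E.b k) (dd (E.b k) (dd (E.b j) F)) x =
        2 * (dd (E.b j) F x * dd (E.b k) (dd (E.b k) (dd (E.b j) F)) x)
        + if k = j then 2 * E.lam k ^ 2 else 0 := by
      intro j
      rw [E.hess hF hx0]
      by_cases h : k = j
      · subst h; simp; ring
      · simp [h]; ring
    rw [Finset.sum_congr rfl fun j _ => this j, Finset.sum_add_distrib, ← Finset.mul_sum, E.sum_eq,
      E.b_o, hF.euler hx0, ← dd_perm3 hF.sm hx0, hF.ddd_radial hx0, E.hess hF hx0]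
    simp; ring

end EigenFrame
end

/-! ### The logarithm of the speed -/

/-- The `1`-homogeneous extension of the speed. -/
def KK {n : ℕ} (H : ℝ → Euc n → ℝ) (t : ℝ) : Euc n → ℝ := fun X => H t X - tD H t X

/-- The logarithm of the `1`-homogeneous extension of `f`. -/
def logf {n : ℕ} (f : Euc n → ℝ) : Euc n → ℝ := fun X => Real.log (‖X‖ * f (‖X‖⁻¹ • X))

/-- The function `w ↦ -log φ(1/w)`, through which the speed depends on `h`. -/
def psi (φ : ℝ → ℝ) : ℝ → ℝ := fun w => - Real.log (φ (1 / w))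

section
variable {n : ℕ} {f : Euc n → ℝ} {φ : ℝ → ℝ} {H : ℝ → Euc n → ℝ} {t s : ℝ} {x X : Euc n}

lemma GFlow.smT_KK (h : GFlow n f φ H) : SmT (KK H) := ContDiffOn.sub h.smT h.smT.tD

lemma GFlow.KK_sm (h : GFlow n f φ H) (ht : 0 ≤ t) : Sm (KK H t) := h.smT_KK.slice ht

lemma GFlow.KK_hom (h : GFlow n f φ H) (ht : 0 ≤ t) : Hom 1 (KK H t) := by
  intro c hc X hX
  have h1 : tD H t (c • X) = c * tD H t X := by
    have h2 := (h.smT.hasDerivWithinAt ht hX).const_mul c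
    have h3 : HasDerivWithinAt (fun s => H s (c • X)) (c * tD H t X) (Ici 0) t :=
      h2.congr (fun s hs => (h.supp hs).homog c hc X) ((h.supp ht).homog c hc X)
    exact h3.derivWithin (uniqueDiffOn_Ici 0 t ht)
  simp only [KK]
  rw [h1, (h.supp ht).homog c hc X, zpow_one]; ring

lemma GFlow.KK_eq (h : GFlow n f φ H) (ht : 0 ≤ t) (hx : x ∈ USphere n) :
    KK H t x = speed n f φ H t x := by
  rw [KK, h.tD_eq ht hx]; ring

lemma GFlow.KK_eq' (h : GFlow n f φ H) (ht : 0 ≤ t) (hX : X ≠ 0) :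
    KK H t X = ‖X‖ * speed n f φ H t (‖X‖⁻¹ • X) := by
  have hn := norm_pos_iff.mpr hX
  rw [← h.KK_eq ht (unit_mem hX), h.KK_hom ht _ (inv_pos.mpr hn) X hX, zpow_one,
    mul_inv_cancel_left₀ hn.ne']

lemma GFlow.KK_pos (h : GFlow n f φ H) (ht : 0 ≤ t) (hX : X ≠ 0) : 0 < KK H t X := by
  rw [h.KK_eq' ht hX]
  exact mul_pos (norm_pos_iff.mpr hX) (h.speed_pos ht (unit_mem hX))

lemma GFlow.logf_sm (h : GFlow n f φ H) : Sm (logf f) := by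
  intro X hX
  have hX' : X ≠ 0 := hX
  have hn : ContDiffAt ℝ (⊤ : ℕ∞) (fun X : Euc n => ‖X‖) X := contDiffAt_norm ℝ hX'
  have hX0 := norm_pos_iff.mpr hX'
  have hu : ContDiffAt ℝ (⊤ : ℕ∞) (fun X : Euc n => ‖X‖⁻¹ • X) X :=
    (hn.inv hX0.ne').smul contDiffAt_id
  have hf : ContDiffAt ℝ (⊤ : ℕ∞) (fun X : Euc n => f (‖X‖⁻¹ • X)) X :=
    ContDiffAt.comp X (h.fs.contDiffAt (USphere.ne_zero (unit_mem hX'))) hu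
  exact ((hn.mul hf).log (mul_pos hX0 (h.fpos _ (unit_mem hX'))).ne').contDiffWithinAt

lemma GFlow.psi_smooth (h : GFlow n f φ H) {w : ℝ} (hw : 0 < w) :
    ContDiffAt ℝ (⊤ : ℕ∞) (psi φ) w := by
  have h1 : ContDiffAt ℝ (⊤ : ℕ∞) (fun w : ℝ => 1 / w) w :=
    contDiffAt_const.div contDiffAt_id hw.ne'
  have hw' : (1 / w) ∈ Ioi (0 : ℝ) := one_div_pos.mpr hw
  have h2 : ContDiffAt ℝ (⊤ : ℕ∞) φ (1 / w) := h.φs.contDiffAt (Ioi_mem_nhds hw')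
  exact ((ContDiffAt.comp w h2 h1).log (h.φpos _ hw').ne').neg

lemma GFlow.log_KK (h : GFlow n f φ H) (ht : 0 ≤ t) (hX : X ≠ 0) :
    Real.log (KK H t X) = Real.log (flowEta n f φ (H t)) + logf f X + psi φ (H t X * ‖X‖⁻¹)
      + n / 2 * Real.log (‖gradient (H t) X‖ ^ 2) - Real.log (sphDet n (H t) (‖X‖⁻¹ • X)) := by
  have hn := norm_pos_iff.mpr hX
  have hu := unit_mem hX
  have h1 := (h.eta_pos ht).ne'
  have h2 := (h.fpos _ hu).ne'
  have h3 : H t (‖X‖⁻¹ • X) = H t X * ‖X‖⁻¹ := by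
    rw [(h.supp ht).homog _ (inv_pos.mpr hn), mul_comm]
  have h4 := (h.φinv ht hu).ne'
  have h5 := ((h.supp ht).sphDet_pos hu).ne'
  have h6 := (norm_pos_iff.mpr ((h.supp ht).gradient_ne_zero hu)).ne'
  have h7 := (h.speed_pos ht hu).ne'
  rw [h.KK_eq' ht hX, Real.log_mul hn.ne' h7, speed, Real.log_div (by positivity) (by positivity),
    Real.log_mul (by positivity) (by positivity), Real.log_mul h1 h2, Real.log_mul h4 h5,
    Real.log_pow, logf, Real.log_mul hn.ne' h2, psi, h3,
    (h.supp ht).gradient_smul hX (inv_pos.mpr hn), Real.log_pow]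
  push_cast; ring

lemma GFlow.log_KK_ge (h : GFlow n f φ H) (ht : 0 ≤ t) (hX : X ≠ 0)
    (b : OrthonormalBasis (Fin n) ℝ (Euc n)) :
    Real.log (flowEta n f φ (H t)) + logf f X + psi φ (H t X * ‖X‖⁻¹)
      + n / 2 * Real.log (‖gradient (H t) X‖ ^ 2)
      - ∑ i, Real.log (‖X‖ * dd (b i) (dd (b i) (H t)) X + ⟪X, b i⟫ ^ 2 * (‖X‖ ^ 2)⁻¹) ≤
    Real.log (KK H t X) := by
  rw [h.log_KK ht hX]
  have hn := norm_pos_iff.mpr hX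
  have hu := unit_mem hX
  have hF := h.supp ht
  have h1 : ∀ i, ‖X‖ * dd (b i) (dd (b i) (H t)) X + ⟪X, b i⟫ ^ 2 * (‖X‖ ^ 2)⁻¹ =
      dd (b i) (dd (b i) (H t)) (‖X‖⁻¹ • X) + ⟪‖X‖⁻¹ • X, b i⟫ ^ 2 := by
    intro i
    rw [hF.hom2 _ _ _ (inv_pos.mpr hn) X hX, real_inner_smul_left, zpow_neg_one, inv_inv]
    ring
  have h2 : ∀ i, 0 < dd (b i) (dd (b i) (H t)) (‖X‖⁻¹ • X) + ⟪‖X‖⁻¹ • X, b i⟫ ^ 2 := by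
    intro i
    rw [← inner_dOp hF.sm (USphere.ne_zero hu)]
    exact hF.dOp_pos hu (b.orthonormal.ne_zero i)
  simp only [h1]
  rw [← Real.log_prod fun i _ => (h2 i).ne']
  have := Real.log_le_log (hF.sphDet_pos hu) (hF.sphDet_le hu b)
  linarith

lemma GFlow.log_KK_frame (h : GFlow n f φ H) (ht : 0 ≤ t) (hx : x ∈ USphere n)
    (E : EigenFrame n (H t) x) :
    Real.log (KK H t x) = Real.log (flowEta n f φ (H t)) + logf f x + psi φ (H t x)
      + n / 2 * Real.log (‖gradient (H t) x‖ ^ 2) - ∑ i ∈ E.tan, Real.log (E.lam i) := by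
  have h1 : ‖x‖ = 1 := USphere.norm hx
  rw [h.log_KK ht (USphere.ne_zero hx), h1, inv_one, one_smul, mul_one, E.sphDet_eq hx,
    Real.log_prod fun i hi => (E.lam_pos i (E.mem_tan.mp hi)).ne']

/-- First and second logarithmic derivatives of the speed: by Hadamard's inequality the logarithm
of the speed is touched from below by an expression in the diagonal Hessian entries. -/
lemma GFlow.speed_jet (h : GFlow n f φ H) (ht : 0 ≤ t) (hx : x ∈ USphere n)
    (E : EigenFrame n (H t) x) {k : Fin n} (hk : k ≠ E.o) :
    dd (E.b k) (KK H t) x / KK H t x =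
      (dd (E.b k) (logf f) x + deriv (psi φ) (H t x) * dd (E.b k) (H t) x)
      + n * (E.lam k * dd (E.b k) (H t) x) / ‖gradient (H t) x‖ ^ 2
      - ∑ i ∈ E.tan, dd (E.b k) (dd (E.b i) (dd (E.b i) (H t))) x / E.lam i ∧
    (dd (E.b k) (dd (E.b k) (logf f)) x + (deriv (deriv (psi φ)) (H t x) *
        dd (E.b k) (H t) x ^ 2 + deriv (psi φ) (H t x) * (E.lam k - H t x)))
      + n / 2 * (2 * (E.lam k ^ 2 - H t x * E.lam k + ∑ j ∈ E.tan, dd (E.b j) (H t) x *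
          dd (E.b j) (dd (E.b k) (dd (E.b k) (H t))) x) / ‖gradient (H t) x‖ ^ 2
        - (2 * (E.lam k * dd (E.b k) (H t) x) / ‖gradient (H t) x‖ ^ 2) ^ 2)
      - ∑ i ∈ E.tan, ((dd (E.b k) (dd (E.b k) (dd (E.b i) (dd (E.b i) (H t)))) x + E.lam i
          + if i = k then 2 else 0) / E.lam i
          - (dd (E.b k) (dd (E.b i) (dd (E.b i) (H t))) x / E.lam i) ^ 2)
      - (2 * E.lam k - 2) ≤
    dd (E.b k) (dd (E.b k) (KK H t)) x / KK H t x - (dd (E.b k) (KK H t) x / KK H t x) ^ 2 := by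
  have hx0 := USphere.ne_zero hx
  have hF := h.supp ht
  have hh := h.hpos ht hx
  have hr : 0 < ‖gradient (H t) x‖ ^ 2 := by
    have := norm_pos_iff.mpr (hF.gradient_ne_zero hx); positivity
  have j1 := J2.line h.logf_sm hx0 (E.b k)
  have j2 := (J2.line hF.sm hx0 (E.b k)).mul J2.inv_sqrt_one_add_sq
  have j3 := j2.comp (ψ := psi φ) (by rw [mul_one]; exact h.psi_smooth hh)
  have j4 := (((E.gradient_jet hF hx k).log hr).const_mul (n / 2 : ℝ))
  have j5 := (E.diag_jet_o hF hx hk).log one_pos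
  have j6 := J2.sum E.tan fun i hi => (E.diag_jet hF hx hk (E.mem_tan.mp hi)).log
    (E.lam_pos i (E.mem_tan.mp hi))
  have jl := (((J2.const (Real.log (flowEta n f φ (H t)))).add j1).add j3).add j4 |>.sub
    (j5.add j6)
  have jr := (J2.line (h.KK_sm ht) hx0 (E.b k)).log (h.KK_pos ht hx0)
  have jl' := jl.congr_val (a' := Real.log (KK H t x)) (by
    rw [h.log_KK_frame ht hx E, mul_one, Real.log_one]; ring) rfl rfl
  obtain ⟨e1, e2⟩ := jl'.le jr (Eventually.of_forall fun s => by
    have := h.log_KK_ge ht (E.line_ne hx hk s) E.b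
    rw [E.sum_eq] at this
    simp only [E.norm_line hx hk] at this ⊢
    linarith)
  constructor
  · rw [← e1]; simp only [mul_one]; ring
  · refine le_trans (le_of_eq ?_) e2
    rw [E.hess hF hx0, if_pos rfl]
    simp only [dd_perm3 hF.sm hx0 _ (E.b k), mul_one]
    ring

end

/-! ### An upper bound for the principal radii -/

section
variable {n : ℕ} {F : Euc n → ℝ} {x v : Euc n}

namespace EigenFrame
variable (E : EigenFrame n F x)

lemma quad (hF : IsSupportFn n F) (hx : x ∈ USphere n) (v : Euc n) :
    dd v (dd v F) x = ∑ i ∈ E.tan, E.lam i * ⟪E.b i, v⟫ ^ 2 := by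
  have h1 : hessOp n F x v = ∑ i, (E.lam i * ⟪E.b i, v⟫) • E.b i := by
    conv_lhs => rw [← E.b.sum_repr' v]
    rw [map_sum]
    refine Finset.sum_congr rfl fun i _ => ?_
    rw [map_smul, E.eig, smul_smul, mul_comm]
  rw [← inner_hessOp hF.sm (USphere.ne_zero hx), h1, inner_sum, E.sum_eq, E.lam_o]
  simp only [zero_mul, zero_smul, inner_zero_right, zero_add]
  refine Finset.sum_congr rfl fun i _ => ?_
  rw [real_inner_smul_right, real_inner_comm v (E.b i)]; ring

lemma norm_sq_tan (hv : ⟪x, v⟫ = 0) : ∑ i ∈ E.tan, ⟪E.b i, v⟫ ^ 2 = ‖v‖ ^ 2 := by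
  rw [← E.b.sum_sq_norm_inner_right v, E.sum_eq, E.b_o, hv]
  simp

end EigenFrame

lemma Sm.norm_fderiv_bound {g : Euc n → ℝ} (hg : Sm g) : ∃ B, 0 ≤ B ∧ ∀ x ∈ USphere n, ∀ b ∈ USphere n,
    |dd b g x| ≤ B ∧ |dd b (dd b g) x| ≤ B := by
  have hc1 : ContinuousOn (fderiv ℝ g) (USphere n) := fun x hx =>
    (hg.contDiffAt_fderiv (USphere.ne_zero hx)).continuousAt.continuousWithinAt
  have hc2 : ContinuousOn (hessOp n g) (USphere n) := hg.hessOp_continuousOn.mono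
    fun x hx => USphere.ne_zero hx
  obtain ⟨B1, h1⟩ := (isCompact_sphere (0 : Euc n) 1).exists_bound_of_continuousOn hc1
  obtain ⟨B2, h2⟩ := (isCompact_sphere (0 : Euc n) 1).exists_bound_of_continuousOn hc2
  refine ⟨max 0 (max B1 B2), le_max_left _ _, fun x hx b hb => ⟨?_, ?_⟩⟩
  · have h3 := (fderiv ℝ g x).le_opNorm b
    rw [USphere.norm hb, mul_one] at h3
    exact (h3.trans (h1 x hx)).trans ((le_max_left _ _).trans (le_max_right _ _))
  · rw [← inner_hessOp hg (USphere.ne_zero hx)]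
    have h3 := (abs_real_inner_le_norm b (hessOp n g x b)).trans
      (mul_le_mul_of_nonneg_left ((hessOp n g x).le_opNorm b) (norm_nonneg b))
    rw [USphere.norm hb, mul_one, one_mul] at h3
    exact (h3.trans (h2 x hx)).trans ((le_max_right _ _).trans (le_max_right _ _))

lemma deriv_nonneg_of_left {q : ℝ → ℝ} {d t : ℝ} (ht : 0 < t) (hd : HasDerivAt q d t)
    (h : ∀ s, 0 ≤ s → s ≤ t → q s ≤ q t) : 0 ≤ d := by
  have h1 : HasDerivWithinAt q d (Iio t) t := hd.hasDerivWithinAt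
  rw [hasDerivWithinAt_iff_tendsto_slope' (by simp)] at h1
  refine ge_of_tendsto h1 ?_
  have : Ioo 0 t ∈ 𝓝[<] t := Ioo_mem_nhdsLT ht
  filter_upwards [this] with s hs
  rw [slope_def_field]
  exact div_nonneg_of_nonpos (sub_nonpos.mpr (h s hs.1.le hs.2.le)) (by linarith [hs.2])

end

section
variable {n : ℕ} {f : Euc n → ℝ} {φ : ℝ → ℝ} {H : ℝ → Euc n → ℝ} {t s : ℝ} {x X : Euc n} {m M : ℝ}

lemma GFlow.psi_bounds (h : GFlow n f φ H) (hm : 0 < m) : ∃ B, 0 ≤ B ∧ ∀ z, m ≤ z → z ≤ M →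
    |deriv (psi φ) z| ≤ B ∧ |deriv (deriv (psi φ)) z| ≤ B := by
  have hd : ∀ {ψ : ℝ → ℝ} {w : ℝ}, ContDiffAt ℝ (⊤ : ℕ∞) ψ w → ContDiffAt ℝ (⊤ : ℕ∞) (deriv ψ) w := by
    intro ψ w hψ
    have h4 : ContDiffAt ℝ (⊤ : ℕ∞) (fun z => fderiv ℝ ψ z 1) w :=
      (hψ.fderiv_right (by simp)).clm_apply contDiffAt_const
    simpa only [fderiv_apply_one_eq_deriv] using h4
  have hc1 : ContinuousOn (deriv (psi φ)) (Icc m M) := fun z hz =>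
    (hd (h.psi_smooth (hm.trans_le hz.1))).continuousAt.continuousWithinAt
  have hc2 : ContinuousOn (deriv (deriv (psi φ))) (Icc m M) := fun z hz =>
    (hd (hd (h.psi_smooth (hm.trans_le hz.1)))).continuousAt.continuousWithinAt
  obtain ⟨B1, h1⟩ := isCompact_Icc.exists_bound_of_continuousOn hc1
  obtain ⟨B2, h2⟩ := isCompact_Icc.exists_bound_of_continuousOn hc2
  exact ⟨max 0 (max B1 B2), le_max_left _ _, fun z hz hz' =>
    ⟨(h1 z ⟨hz, hz'⟩).trans ((le_max_left _ _).trans (le_max_right _ _)),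
    (h2 z ⟨hz, hz'⟩).trans ((le_max_right _ _).trans (le_max_right _ _))⟩⟩

lemma GFlow.g_bounds (h : GFlow n f φ H) (hm : 0 < m) (hmM : m ≤ M) : ∃ G, 0 ≤ G ∧
    ∀ z, m ≤ z → z ≤ M → ∀ x ∈ USphere n, ∀ b ∈ USphere n, ∀ y, |y| ≤ M → ∀ l, 0 ≤ l →
    |dd b (logf f) x + deriv (psi φ) z * y| ≤ G ∧
    |dd b (dd b (logf f)) x + (deriv (deriv (psi φ)) z * y ^ 2 + deriv (psi φ) z * (l - z))|
      ≤ G * (1 + l) := by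
  obtain ⟨A, hA, hAb⟩ := h.logf_sm.norm_fderiv_bound
  obtain ⟨B, hB, hBb⟩ := h.psi_bounds (M := M) hm
  have hM : 0 < M := hm.trans_le hmM
  refine ⟨A + B * M + B * M ^ 2 + B, by positivity, fun z hz hz' x hx b hb y hy l hl => ?_⟩
  obtain ⟨a1, a2⟩ := hAb x hx b hb
  obtain ⟨b1, b2⟩ := hBb z hz hz'
  have hy2 : |y ^ 2| ≤ M ^ 2 := by rw [abs_pow]; exact pow_le_pow_left₀ (abs_nonneg _) hy 2
  have c1 : |deriv (psi φ) z * y| ≤ B * M := by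
    rw [abs_mul]; exact mul_le_mul b1 hy (abs_nonneg _) hB
  have c2 : |deriv (deriv (psi φ)) z * y ^ 2| ≤ B * M ^ 2 := by
    rw [abs_mul]; exact mul_le_mul b2 hy2 (abs_nonneg _) hB
  have c3 : |deriv (psi φ) z * (l - z)| ≤ B * (l + M) := by
    rw [abs_mul]
    refine mul_le_mul b1 ?_ (abs_nonneg _) hB
    rw [abs_le]; constructor <;> linarith
  have d1 : 0 ≤ B * M := by positivity
  have d2 : 0 ≤ B * M ^ 2 := by positivity
  constructor
  · linarith [abs_add_le (dd b (logf f) x) (deriv (psi φ) z * y)]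
  · have e1 := abs_add_le (dd b (dd b (logf f)) x)
      (deriv (deriv (psi φ)) z * y ^ 2 + deriv (psi φ) z * (l - z))
    have e2 := abs_add_le (deriv (deriv (psi φ)) z * y ^ 2) (deriv (psi φ) z * (l - z))
    have e3 : 0 ≤ (A + B * M + B * M ^ 2) * l := by positivity
    nlinarith

lemma dd_sub_eq {g k : Euc n → ℝ} (hg : Sm g) (hk : Sm k) (hx : x ≠ 0) (v : Euc n) :
    dd v (fun y => g y - k y) x = dd v g x - dd v k x := by
  simp only [dd]
  rw [fderiv_fun_sub (hg.differentiableAt hx) (hk.differentiableAt hx)]; rfl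

lemma GFlow.dd_tD (h : GFlow n f φ H) (ht : 0 ≤ t) (hx : x ≠ 0) (v : Euc n) :
    dd v (tD H t) x = dd v (H t) x - dd v (KK H t) x := by
  rw [← dd_sub_eq (h.smT.slice ht) (h.KK_sm ht) hx]
  refine dd_congr (fun y _ => ?_) hx
  simp [KK]

lemma GFlow.time_h (h : GFlow n f φ H) (ht : 0 < t) (hx : x ≠ 0) :
    HasDerivAt (fun s => H s x) (H t x - KK H t x) t :=
  (h.smT.hasDerivAt ht hx).congr_deriv (by simp [KK])

lemma GFlow.time_dd (h : GFlow n f φ H) (ht : 0 < t) (hx : x ≠ 0) (v : Euc n) :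
    HasDerivAt (fun s => dd v (H s) x) (dd v (H t) x - dd v (KK H t) x) t :=
  ((h.smT.dd v).hasDerivAt ht hx).congr_deriv (by rw [h.smT.comm ht hx, h.dd_tD ht.le hx])

lemma GFlow.time_hess (h : GFlow n f φ H) (ht : 0 < t) (hx : x ≠ 0) (v : Euc n) :
    HasDerivAt (fun s => dd v (dd v (H s)) x)
      (dd v (dd v (H t)) x - dd v (dd v (KK H t)) x) t := by
  refine (((h.smT.dd v).dd v).hasDerivAt ht hx).congr_deriv ?_
  rw [h.smT.comm2 ht hx, dd_congr (fun y hy => h.dd_tD ht.le hy v) hx,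
    dd_sub_eq ((h.smT.slice ht.le).ddir v) ((h.KK_sm ht.le).ddir v) hx]

lemma GFlow.time_grad (h : GFlow n f φ H) (ht : 0 < t) (hx : x ∈ USphere n)
    (E : EigenFrame n (H t) x) :
    HasDerivAt (fun s => ‖gradient (H s) x‖ ^ 2) (2 * (‖gradient (H t) x‖ ^ 2 - H t x * KK H t x
      - ∑ j ∈ E.tan, dd (E.b j) (H t) x * dd (E.b j) (KK H t) x)) t := by
  have hx0 := USphere.ne_zero hx
  have h1 : ∀ F : Euc n → ℝ, ‖gradient F x‖ ^ 2 = ∑ j, dd (E.b j) F x ^ 2 := by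
    intro F
    rw [← E.b.sum_sq_norm_inner_right (gradient F x)]
    refine Finset.sum_congr rfl fun j _ => ?_
    rw [Real.norm_eq_abs, sq_abs, real_inner_comm, inner_gradient]
  simp only [h1]
  refine (HasDerivAt.fun_sum fun j _ => (h.time_dd ht hx0 (E.b j)).fun_pow 2).congr_deriv ?_
  have h2 : dd (E.b E.o) (KK H t) x = KK H t x := by
    rw [E.b_o]; simpa using (h.KK_hom ht.le).euler (h.KK_sm ht.le) hx0
  rw [E.sum_eq, E.sum_eq (fun j => dd (E.b j) (H t) x ^ 2), h2, E.b_o, (h.supp ht.le).euler hx0]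
  have : ∀ j ∈ E.tan, ((2 : ℕ) : ℝ) * dd (E.b j) (H t) x ^ (2 - 1) *
      (dd (E.b j) (H t) x - dd (E.b j) (KK H t) x) =
      2 * dd (E.b j) (H t) x ^ 2 - 2 * (dd (E.b j) (H t) x * dd (E.b j) (KK H t) x) := by
    intro j _; push_cast; ring
  rw [Finset.sum_congr rfl this, Finset.sum_sub_distrib, ← Finset.mul_sum, ← Finset.mul_sum]
  push_cast; ring

end

/-! ### The maximum principle for the largest principal radius -/

section
variable {n : ℕ} {f : Euc n → ℝ} {φ : ℝ → ℝ} {H : ℝ → Euc n → ℝ} {F : Euc n → ℝ} {t s : ℝ}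
  {x X v w : Euc n} {m M B μ ε c : ℝ}

lemma hess_le_of_unit (hF : IsSupportFn n F) (hx : x ∈ USphere n)
    (h : ∀ v ∈ USphere n, ⟪x, v⟫ = 0 → dd v (dd v F) x ≤ B) (hv : ⟪x, v⟫ = 0) :
    dd v (dd v F) x ≤ B * ‖v‖ ^ 2 := by
  have hx0 := USphere.ne_zero hx
  have hsm : ∀ (c : ℝ) (u : Euc n), dd (c • u) (dd (c • u) F) x = c ^ 2 * dd u (dd u F) x := by
    intro c u
    rw [dd_smul_left, dd_smul_mid hF.sm hx0]; ring
  by_cases h0 : v = 0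
  · have := hsm 0 v
    rw [zero_smul] at this
    rw [h0, this]; simp
  · have h1 := h _ (unit_mem h0) (by rw [real_inner_smul_right, hv, mul_zero])
    have hn : 0 < ‖v‖ := norm_pos_iff.mpr h0
    rw [hsm] at h1
    have h2 := mul_le_mul_of_nonneg_right h1 (sq_nonneg ‖v‖)
    rwa [mul_right_comm, ← mul_pow, inv_mul_cancel₀ hn.ne', one_pow, one_mul] at h2

/-- A bound for the tangential Hessian on the sphere, extended homogeneously to all base points
and all directions. -/
lemma hess_touch (hF : IsSupportFn n F) (hX : X ≠ 0) (hw : w ∈ USphere n)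
    (h : ∀ y ∈ USphere n, ∀ v ∈ USphere n, ⟪y, v⟫ = 0 →
      dd v (dd v F) y ≤ μ * ((F y - ε) * (c - ‖gradient F y‖ ^ 2 / 2))) :
    ‖X‖ * dd w (dd w F) X ≤ μ * ((F X * ‖X‖⁻¹ - ε) * (c - ‖gradient F X‖ ^ 2 / 2))
      * (1 - ⟪X, w⟫ ^ 2 * (‖X‖ ^ 2)⁻¹) := by
  have hn : 0 < ‖X‖ := norm_pos_iff.mpr hX
  obtain ⟨y, hy⟩ : ∃ y, y = ‖X‖⁻¹ • X := ⟨_, rfl⟩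
  have hyS : y ∈ USphere n := hy ▸ unit_mem hX
  have e1 : dd w (dd w F) y = ‖X‖ * dd w (dd w F) X := by
    rw [hy, hF.hom2 w w _ (inv_pos.mpr hn) X hX]
    simp
  have e2 : F y = F X * ‖X‖⁻¹ := by rw [hy, hF.homog _ (inv_pos.mpr hn)]; ring
  have e3 : gradient F y = gradient F X := hy ▸ hF.gradient_smul hX (inv_pos.mpr hn)
  have e4 : ⟪y, y⟫ = 1 := by rw [real_inner_self_eq_norm_sq, USphere.norm hyS]; norm_num
  have e5 : ⟪w, w⟫ = 1 := by rw [real_inner_self_eq_norm_sq, USphere.norm hw]; norm_num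
  have e6 : ⟪y, w⟫ ^ 2 = ⟪X, w⟫ ^ 2 * (‖X‖ ^ 2)⁻¹ := by
    rw [hy, real_inner_smul_left]; field_simp
  have h1 := hess_le_of_unit (v := w + (-⟪y, w⟫) • y) hF hyS (h y hyS) (by
    rw [inner_add_right, real_inner_smul_right, e4]; ring)
  have e7 : ‖w + (-⟪y, w⟫) • y‖ ^ 2 = 1 - ⟪y, w⟫ ^ 2 := by
    rw [← real_inner_self_eq_norm_sq, inner_add_left, inner_add_right, inner_add_right,
      real_inner_smul_left, real_inner_smul_right, real_inner_smul_left, real_inner_smul_right,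
      e4, e5, real_inner_comm y w]
    ring
  rwa [hF.hess_shift (USphere.ne_zero hyS), e1, e7, e6, e2, e3] at h1

lemma EigenFrame.b_mem (E : EigenFrame n F x) (i : Fin n) : E.b i ∈ USphere n := by simp

/-- At a space-time maximum of `λ₁ / ((h - ε)(c - |∇h|²/2))` at positive time, the largest
principal radius is bounded by a constant depending only on the data and the `C⁰` bounds. -/
lemma GFlow.lam_step (h : GFlow n f φ H) (hm : 0 < m)
    (hb : ∀ t, 0 ≤ t → ∀ x ∈ USphere n, m ≤ H t x ∧ H t x ≤ M) {G : ℝ}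
    (hG : ∀ z, m ≤ z → z ≤ M → ∀ x ∈ USphere n, ∀ b ∈ USphere n, ∀ y, |y| ≤ M → ∀ l, 0 ≤ l →
      |dd b (logf f) x + deriv (psi φ) z * y| ≤ G ∧
      |dd b (dd b (logf f)) x + (deriv (deriv (psi φ)) z * y ^ 2 + deriv (psi φ) z * (l - z))|
        ≤ G * (1 + l))
    (hε : ε = m / 2) (hc : c = M ^ 3 / ε + M ^ 2 / 2) (ht : 0 < t) (hx : x ∈ USphere n)
    (E : EigenFrame n (H t) x) {p : Fin n} (hp : p ∈ E.tan)
    (heq : E.lam p = μ * ((H t x - ε) * (c - ‖gradient (H t) x‖ ^ 2 / 2)))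
    (hle : ∀ s, 0 ≤ s → s ≤ t → ∀ y ∈ USphere n, ∀ v ∈ USphere n, ⟪y, v⟫ = 0 →
      dd v (dd v (H s)) y ≤ μ * ((H s y - ε) * (c - ‖gradient (H s) y‖ ^ 2 / 2))) :
    E.lam p ≤ 1 + c * (2 / ε + G / ε + 2 * G + 2 * n / ε + n * M / (M ^ 3 / ε)
      + n * G * M / (M ^ 3 / ε) + n + 4) := by
  have hF := h.supp ht.le
  have hx0 := USphere.ne_zero hx
  obtain ⟨hmh, hhM⟩ := hb t ht.le x hx
  have hεp : 0 < ε := by rw [hε]; positivity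
  have hM : 0 < M := by linarith
  have hhp := h.hpos ht.le hx
  have hS0 : 0 < M ^ 3 / ε := by positivity
  have hr1 : H t x ^ 2 ≤ ‖gradient (H t) x‖ ^ 2 :=
    pow_le_pow_left₀ hhp.le (hF.le_norm_gradient hx) 2
  have hr2 : ‖gradient (H t) x‖ ^ 2 ≤ M ^ 2 :=
    pow_le_pow_left₀ (norm_nonneg _) (hF.norm_gradient_le hx fun y hy => (hb t ht.le y hy).2) 2
  have hhi : ∀ i ∈ E.tan, dd (E.b i) (H t) x ^ 2 ≤ ‖gradient (H t) x‖ ^ 2 := by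
    intro i hi
    rw [E.norm_sq_gradient_self hF hx]
    have := Finset.single_le_sum (f := fun j => dd (E.b j) (H t) x ^ 2)
      (fun j _ => sq_nonneg _) hi
    nlinarith [sq_nonneg (H t x)]
  have hhi' : ∀ i ∈ E.tan, |dd (E.b i) (H t) x| ≤ M := fun i hi =>
    abs_le_of_sq_le_sq ((hhi i hi).trans hr2) hM.le
  have hpo := E.mem_tan.mp hp
  have hjet : ∀ k ∈ E.tan,
      dd (E.b k) (dd (E.b p) (dd (E.b p) (H t))) x =
        μ * (dd (E.b k) (H t) x * (c - ‖gradient (H t) x‖ ^ 2 / 2)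
          - (H t x - ε) * (E.lam k * dd (E.b k) (H t) x)) ∧
      dd (E.b p) (dd (E.b p) (dd (E.b k) (dd (E.b k) (H t)))) x + E.lam p
        + (if k = p then 2 * E.lam p else 0) ≤
        μ * ((E.lam k - H t x) * (c - ‖gradient (H t) x‖ ^ 2 / 2)
          - (H t x - ε) * (E.lam k ^ 2 - H t x * E.lam k + ∑ j ∈ E.tan, dd (E.b j) (H t) x *
            dd (E.b j) (dd (E.b k) (dd (E.b k) (H t))) x)
          - 2 * (dd (E.b k) (H t) x ^ 2 * E.lam k)) := by
    intro k hk
    have hko := E.mem_tan.mp hk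
    have l1 := J2.sqrt_one_add_sq.mul
      (J2.line ((hF.sm.ddir (E.b p)).ddir (E.b p)) hx0 (E.b k))
    have r1 := ((J2.line hF.sm hx0 (E.b k)).mul J2.inv_sqrt_one_add_sq).sub (J2.const ε)
    have r2 := (J2.const c).sub ((E.gradient_jet hF hx k).const_mul (1 / 2))
    have r3 : J2 (fun s => (if p = k then s ^ 2 * (1 + s ^ 2)⁻¹ else 0)) 0 0
        (if p = k then 2 else 0) := by
      by_cases h : p = k
      · simpa only [h, if_true] using J2.sq_div_one_add_sq
      · simpa only [h, if_false] using J2.const 0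
    have r4 := ((r1.mul r2).const_mul μ).mul ((J2.const 1).sub r3)
    have r5 := r4.congr_val (a' := 1 * dd (E.b p) (dd (E.b p) (H t)) x) (by
      rw [E.hess hF hx0, if_pos rfl, heq]; ring) rfl rfl
    obtain ⟨e1, e2⟩ := l1.le r5 (Eventually.of_forall fun s => by
      have := hess_touch (X := x + s • E.b k) hF (E.line_ne hx hko s) (E.b_mem p)
        (hle t ht.le le_rfl)
      simp only [E.norm_line hx hko, E.inner_line, if_neg hpo] at this
      rw [Real.sq_sqrt (by positivity)] at this
      refine this.trans (le_of_eq ?_)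
      by_cases hpk : p = k
      · simp only [hpk, if_true]; ring
      · simp only [hpk, if_false]; ring)
    rw [E.hess hF hx0, E.hess hF hx0, if_pos rfl, if_pos rfl] at e2
    constructor
    · linear_combination e1
    · rw [dd_perm4 hF.sm hx0]
      simp only [dd_perm3 hF.sm hx0 _ (E.b k)]
      have e3 : (if p = k then (2 : ℝ) else 0) = if k = p then 2 else 0 := by
        simp only [eq_comm]
      rw [e3] at e2
      split_ifs with hkp
      · rw [if_pos hkp] at e2
        linear_combination e2 + 2 * heq
      · rw [if_neg hkp] at e2
        linear_combination e2
  refine lam_algebra (I := E.tan) (hh := fun k => dd (E.b k) (H t) x)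
    (g := fun k => dd (E.b k) (logf f) x + deriv (psi φ) (H t x) * dd (E.b k) (H t) x)
    (K := fun k => dd (E.b k) (KK H t) x)
    (Q := fun i => dd (E.b p) (dd (E.b p) (dd (E.b i) (dd (E.b i) (H t)))) x)
    (T := fun i k => dd (E.b k) (dd (E.b i) (dd (E.b i) (H t))) x)
    (N := n) (h := H t x) (r2 := ‖gradient (H t) x‖ ^ 2) (F := KK H t x) (L := H t x - ε)
    (S := c - ‖gradient (H t) x‖ ^ 2 / 2) (K11 := dd (E.b p) (dd (E.b p) (KK H t)) x) hp
    E.card_tan (fun i hi => E.lam_pos i (E.mem_tan.mp hi)) hεp (h.KK_pos ht.le hx0)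
    (by rw [hε]; linarith) rfl hhM hr1 hr2 hhi hS0 (by rw [hc]; linarith)
    (by linarith [sq_nonneg ‖gradient (H t) x‖]) (le_of_eq (by field_simp))
    (fun i hi => (hG _ hmh hhM x hx _ (E.b_mem i) _ (hhi' i hi) 0 le_rfl).1)
    (hG _ hmh hhM x hx _ (E.b_mem p) _ (hhi' p hp) _ (E.lam_pos p hpo).le).2
    heq (fun k hk => (h.speed_jet ht.le hx E (E.mem_tan.mp hk)).1)
    (h.speed_jet ht.le hx E hpo).2 (fun k hk => (hjet k hk).1) (fun k hk => (hjet k hk).2) ?_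
  have d1 := (h.time_hess ht hx0 (E.b p)).sub
    ((((h.time_h ht hx0).sub_const ε).mul
      (((h.time_grad ht hx E).div_const 2).const_sub c)).const_mul μ)
  have d2 := deriv_nonneg_of_left ht d1 (fun s hs hst => by
    have a1 := hle s hs hst x hx _ (E.b_mem p) (E.inner_x hpo)
    have a2 : dd (E.b p) (dd (E.b p) (H t)) x = _ := E.hess hF hx0 p p
    rw [if_pos rfl, heq] at a2
    simp only [Pi.sub_apply, Pi.mul_apply]
    linarith)
  rw [E.hess hF hx0, if_pos rfl] at d2
  linear_combination d2

end

section
variable {n : ℕ} {f : Euc n → ℝ} {φ : ℝ → ℝ} {H : ℝ → Euc n → ℝ} {m M : ℝ}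

/-- The principal radii are bounded above, uniformly in time. -/
lemma GFlow.lam_bound (h : GFlow n f φ H) (hm : 0 < m)
    (hb : ∀ t, 0 ≤ t → ∀ x ∈ USphere n, m ≤ H t x ∧ H t x ≤ M) :
    ∃ Λ, 0 < Λ ∧ ∀ t, 0 ≤ t → ∀ x ∈ USphere n, ∀ v ∈ USphere n, ⟪x, v⟫ = 0 →
      dd v (dd v (H t)) x ≤ Λ := by
  obtain ⟨x', hx'⟩ := sphere_nonempty h.npos
  have hmM : m ≤ M := (hb 0 le_rfl x' hx').1.trans (hb 0 le_rfl x' hx').2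
  have hM : 0 < M := hm.trans_le hmM
  obtain ⟨G, hG0, hG⟩ := h.g_bounds hm hmM
  obtain ⟨ε, hε⟩ : ∃ ε, ε = m / 2 := ⟨_, rfl⟩
  have hεp : 0 < ε := by rw [hε]; positivity
  obtain ⟨c, hc⟩ : ∃ c, c = M ^ 3 / ε + M ^ 2 / 2 := ⟨_, rfl⟩
  have hcp : 0 < c := by rw [hc]; positivity
  obtain ⟨S0, hS0⟩ : ∃ S0, S0 = M ^ 3 / ε := ⟨_, rfl⟩
  have hS0p : 0 < S0 := by rw [hS0]; positivity
  obtain ⟨Λ1, hΛ1⟩ : ∃ Λ1, Λ1 = 1 + c * (2 / ε + G / ε + 2 * G + 2 * n / ε + n * M / (M ^ 3 / ε)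
      + n * G * M / (M ^ 3 / ε) + n + 4) := ⟨_, rfl⟩
  have hΛ1p : 0 < Λ1 := by rw [hΛ1]; positivity
  have hcH : ContinuousOn (hessOp n (H 0)) (USphere n) :=
    (h.smT.slice le_rfl).hessOp_continuousOn.mono fun x hx => USphere.ne_zero hx
  obtain ⟨Λ0, hΛ0⟩ := (isCompact_sphere (0 : Euc n) 1).exists_bound_of_continuousOn hcH
  have hΛ0p : 0 ≤ Λ0 := (norm_nonneg _).trans (hΛ0 x' hx')
  have hinit : ∀ x ∈ USphere n, ∀ v ∈ USphere n, dd v (dd v (H 0)) x ≤ Λ0 := by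
    intro x hx v hv
    rw [← inner_hessOp (h.smT.slice le_rfl) (USphere.ne_zero hx)]
    have h3 := (real_inner_le_norm v (hessOp n (H 0) x v)).trans
      (mul_le_mul_of_nonneg_left ((hessOp n (H 0) x).le_opNorm v) (norm_nonneg v))
    rw [USphere.norm hv, mul_one, one_mul] at h3
    exact h3.trans (hΛ0 x hx)
  let P : ℝ → Euc n → ℝ := fun t y => (H t y - ε) * (c - ‖gradient (H t) y‖ ^ 2 / 2)
  have hP : ∀ t, 0 ≤ t → ∀ y ∈ USphere n, ε * S0 ≤ P t y ∧ P t y ≤ M * c := by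
    intro t ht y hy
    obtain ⟨b1, b2⟩ := hb t ht y hy
    have hr2 : ‖gradient (H t) y‖ ^ 2 ≤ M ^ 2 := pow_le_pow_left₀ (norm_nonneg _)
      ((h.supp ht).norm_gradient_le hy fun z hz => (hb t ht z hz).2) 2
    have a1 : ε ≤ H t y - ε := by rw [hε]; linarith
    have a2 : S0 ≤ c - ‖gradient (H t) y‖ ^ 2 / 2 := by rw [hc, ← hS0]; linarith
    exact ⟨mul_le_mul a1 a2 hS0p.le (hεp.le.trans a1),
      mul_le_mul (by linarith) (by linarith [sq_nonneg ‖gradient (H t) y‖])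
        (hS0p.le.trans a2) hM.le⟩
  have hPpos : ∀ t, 0 ≤ t → ∀ y ∈ USphere n, 0 < P t y := fun t ht y hy =>
    (mul_pos hεp hS0p).trans_le (hP t ht y hy).1
  refine ⟨(Λ0 + Λ1) / (ε * S0) * (M * c), by positivity, fun t ht x hx v hv hxv => ?_⟩
  let K : Set (ℝ × Euc n × Euc n) :=
    (Icc 0 t ×ˢ (USphere n ×ˢ USphere n)) ∩ {p | ⟪p.2.1, p.2.2⟫ = 0}
  have hK : IsCompact K := by
    refine (isCompact_Icc.prod ((isCompact_sphere (0 : Euc n) 1).prod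
      (isCompact_sphere (0 : Euc n) 1))).inter_right ?_
    exact isClosed_eq (by fun_prop) continuous_const
  have hq : ContinuousOn (fun p : ℝ × Euc n × Euc n =>
      ⟪p.2.2, hessOp n (H p.1) p.2.1 p.2.2⟫ / P p.1 p.2.1) K := by
    have hmap : MapsTo (fun p : ℝ × Euc n × Euc n => (p.1, p.2.1)) K
        (Ici 0 ×ˢ {(0 : Euc n)}ᶜ) := fun p hp => ⟨hp.1.1.1, USphere.ne_zero hp.1.2.1⟩
    have c1 := h.smT.hessOp_continuousOn.comp (by fun_prop) hmap
    have c2 := h.smT.continuousOn.comp (by fun_prop) hmap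
    have c3 := h.smT.gradient_continuousOn.comp (by fun_prop) hmap
    refine ContinuousOn.div ?_ ?_ fun p hp => (hPpos p.1 hp.1.1.1 p.2.1 hp.1.2.1).ne'
    · exact continuousOn_snd.snd.inner (𝕜 := ℝ) (c1.clm_apply continuousOn_snd.snd)
    · exact (c2.sub continuousOn_const).mul (continuousOn_const.sub ((c3.norm.pow 2).div_const 2))
  obtain ⟨⟨t0, x0, v0⟩, ⟨⟨ht0, hx0, hv0⟩, hxv0⟩, hmax⟩ :=
    hK.exists_isMaxOn ⟨(t, x, v), ⟨⟨⟨ht, le_rfl⟩, hx, hv⟩, hxv⟩⟩ hq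
  simp only at ht0 hx0 hv0
  change ⟪x0, v0⟫ = 0 at hxv0
  obtain ⟨μ, hμ⟩ : ∃ μ, μ = ⟪v0, hessOp n (H t0) x0 v0⟫ / P t0 x0 := ⟨_, rfl⟩
  have hle : ∀ s, 0 ≤ s → s ≤ t → ∀ y ∈ USphere n, ∀ w ∈ USphere n, ⟪y, w⟫ = 0 →
      dd w (dd w (H s)) y ≤ μ * P s y := by
    intro s hs hst y hy w hw hyw
    have := hmax (show ((s, y, w) : ℝ × Euc n × Euc n) ∈ K from ⟨⟨⟨hs, hst⟩, hy, hw⟩, hyw⟩)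
    simp only [mem_ofPred_eq] at this
    rw [← hμ, div_le_iff₀ (hPpos s hs y hy), inner_hessOp (h.smT.slice hs) (USphere.ne_zero hy)]
      at this
    exact this
  have hμ' : μ * P t0 x0 = dd v0 (dd v0 (H t0)) x0 := by
    rw [hμ, div_mul_cancel₀ _ (hPpos t0 ht0.1 x0 hx0).ne',
      inner_hessOp (h.smT.slice ht0.1) (USphere.ne_zero hx0)]
  have hkey : μ * P t0 x0 ≤ Λ0 + Λ1 := by
    rcases ht0.1.eq_or_lt with h0 | h0
    · rw [hμ']
      subst h0
      linarith [hinit x0 hx0 v0 hv0]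
    · obtain ⟨E⟩ := (h.supp h0.le).exists_frame hx0
      have hne : E.tan.Nonempty := by
        rw [← Finset.card_pos]
        have h1 := E.card_tan
        have h2 : (2 : ℝ) ≤ n := by exact_mod_cast h.hn
        have h3 : (0 : ℝ) < E.tan.card := by rw [h1]; linarith
        exact_mod_cast h3
      obtain ⟨p, hp, hpm⟩ := Finset.exists_max_image E.tan E.lam hne
      have h1 : μ * P t0 x0 ≤ E.lam p := by
        rw [hμ', E.quad (h.supp h0.le) hx0]
        calc _ ≤ ∑ i ∈ E.tan, E.lam p * ⟪E.b i, v0⟫ ^ 2 := Finset.sum_le_sum fun i hi =>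
              mul_le_mul_of_nonneg_right (hpm i hi) (sq_nonneg _)
          _ = _ := by
              rw [← Finset.mul_sum, E.norm_sq_tan hxv0, USphere.norm hv0]; ring
      have h2 : E.lam p ≤ μ * P t0 x0 := by
        have := hle t0 h0.le ht0.2 x0 hx0 _ (E.b_mem p) (E.inner_x (E.mem_tan.mp hp))
        rwa [E.hess (h.supp h0.le) (USphere.ne_zero hx0), if_pos rfl] at this
      have h3 := h.lam_step hm hb hG hε hc h0 hx0 E hp (le_antisymm h2 h1)
        fun s hs hst => hle s hs (hst.trans ht0.2)
      rw [← hΛ1] at h3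
      linarith
  have hμb : μ ≤ (Λ0 + Λ1) / (ε * S0) := by
    have hpos := mul_pos hεp hS0p
    rw [le_div_iff₀ hpos]
    rcases le_or_gt μ 0 with h0 | h0
    · nlinarith
    · exact (mul_le_mul_of_nonneg_left (hP t0 ht0.1 x0 hx0).1 h0.le).trans hkey
  calc _ ≤ μ * P t x := hle t ht le_rfl x hx v hv hxv
    _ ≤ (Λ0 + Λ1) / (ε * S0) * P t x := mul_le_mul_of_nonneg_right hμb (hPpos t ht x hx).le
    _ ≤ _ := mul_le_mul_of_nonneg_left (hP t ht x hx).2 (by positivity)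

end

/-! ### An upper bound for the speed -/

lemma tso_algebra {ι : Type*} (I : Finset ι) {lam hh K Kd : ι → ℝ} {N h r2 F a ε M B P : ℝ}
    (hN : (I.card : ℝ) = N - 1) (hlam : ∀ i ∈ I, 0 < lam i) (hε : 0 < ε) (hL : ε ≤ h - ε)
    (hhM : h ≤ M) (hr : r2 = h ^ 2 + ∑ i ∈ I, hh i ^ 2) (hF : F = a * (h - ε)) (hP : |P| ≤ B)
    (ha : 1 ≤ a) (hK : ∀ i ∈ I, K i = a * hh i) (hKd : ∀ i ∈ I, Kd i ≤ a * (lam i - ε))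
    (hd : 0 ≤ P * (h - F) + N / 2 * (2 * (r2 - h * F - ∑ i ∈ I, hh i * K i) / r2)
      - ∑ i ∈ I, (lam i - Kd i) / lam i - (h - F) / (h - ε)) :
    ε * ∑ i ∈ I, 1 / lam i ≤ 2 * B * M + 1 + N := by
  have hLp : 0 < h - ε := hε.trans_le hL
  have hh0 : 0 < h := by linarith
  have hr2 : 0 < r2 := by
    rw [hr]; have := Finset.sum_nonneg fun i (_ : i ∈ I) => sq_nonneg (hh i); positivity
  have ha0 : 0 < a := by linarith
  have hF0 : 0 ≤ F := by rw [hF]; positivity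
  have hN0 : 0 ≤ N := by linarith [(Nat.cast_nonneg I.card : (0 : ℝ) ≤ _)]
  have e1 : (N - 1) - a * (N - 1) + a * (ε * ∑ i ∈ I, 1 / lam i) ≤
      ∑ i ∈ I, (lam i - Kd i) / lam i := by
    have : (N - 1) - a * (N - 1) + a * (ε * ∑ i ∈ I, 1 / lam i) =
        ∑ i ∈ I, (1 - a + a * ε * (1 / lam i)) := by
      rw [Finset.sum_add_distrib, ← Finset.mul_sum, Finset.sum_const, nsmul_eq_mul, hN]; ring
    rw [this]
    refine Finset.sum_le_sum fun i hi => ?_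
    have hl := hlam i hi
    rw [le_div_iff₀ hl]
    have : (1 - a + a * ε * (1 / lam i)) * lam i = lam i - a * (lam i - ε) := by
      field_simp; ring
    rw [this]
    linarith [hKd i hi]
  have e2 : N / 2 * (2 * (r2 - h * F - ∑ i ∈ I, hh i * K i) / r2) ≤ N := by
    have h1 : 0 ≤ ∑ i ∈ I, hh i * K i := Finset.sum_nonneg fun i hi => by
      rw [hK i hi]; nlinarith [mul_nonneg ha0.le (sq_nonneg (hh i))]
    have h2 : 2 * (r2 - h * F - ∑ i ∈ I, hh i * K i) / r2 ≤ 2 := by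
      rw [div_le_iff₀ hr2]; nlinarith [mul_nonneg hh0.le hF0]
    nlinarith
  have hB : 0 ≤ B := (abs_nonneg _).trans hP
  have e3 : P * (h - F) ≤ B * (M + a * M) := by
    refine (le_abs_self _).trans ?_
    rw [abs_mul]
    refine mul_le_mul hP ?_ (abs_nonneg _) hB
    have : F ≤ a * M := by rw [hF]; exact mul_le_mul_of_nonneg_left (by linarith) ha0.le
    rw [abs_le]; constructor <;> linarith
  have e4 : -((h - F) / (h - ε)) ≤ a := by
    have : (h - F) / (h - ε) = h / (h - ε) - a := by rw [hF]; field_simp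
    rw [this]
    have : 0 ≤ h / (h - ε) := by positivity
    linarith
  have hBM : 0 ≤ B * M := by
    have : 0 < M := by linarith
    positivity
  have e5 : a * (ε * ∑ i ∈ I, 1 / lam i) ≤ a * (2 * B * M + 1 + N) := by nlinarith
  exact le_of_mul_le_mul_left e5 ha0

section
variable {n : ℕ} {f : Euc n → ℝ} {φ : ℝ → ℝ} {H : ℝ → Euc n → ℝ} {t s : ℝ}
  {x : Euc n} {m M B μ ε : ℝ}

lemma GFlow.rest_bound (h : GFlow n f φ H) (hm : 0 < m)
    (hb : ∀ t, 0 ≤ t → ∀ x ∈ USphere n, m ≤ H t x ∧ H t x ≤ M) :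
    ∃ C, 0 ≤ C ∧ ∀ t, 0 ≤ t → ∀ x ∈ USphere n,
      |logf f x + psi φ (H t x) + n / 2 * Real.log (‖gradient (H t) x‖ ^ 2)| ≤ C := by
  have c1 : ContinuousOn (logf f) (USphere n) :=
    h.logf_sm.continuousOn.mono fun x hx => USphere.ne_zero hx
  have c2 : ContinuousOn (psi φ) (Icc m M) := fun z hz =>
    (h.psi_smooth (hm.trans_le hz.1)).continuousAt.continuousWithinAt
  obtain ⟨B1, h1⟩ := (isCompact_sphere (0 : Euc n) 1).exists_bound_of_continuousOn c1
  obtain ⟨B2, h2⟩ := isCompact_Icc.exists_bound_of_continuousOn c2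
  set B3 := |Real.log (m ^ 2)| + |Real.log (M ^ 2)| with hB3
  have key : ∀ t, 0 ≤ t → ∀ x ∈ USphere n,
      |logf f x + psi φ (H t x) + n / 2 * Real.log (‖gradient (H t) x‖ ^ 2)| ≤
        B1 + B2 + n / 2 * B3 := by
    intro t ht x hx
    obtain ⟨b1, b2⟩ := hb t ht x hx
    have a1 := h1 x hx
    have a2 := h2 (H t x) ⟨b1, b2⟩
    rw [Real.norm_eq_abs] at a1 a2
    have g1 : m ^ 2 ≤ ‖gradient (H t) x‖ ^ 2 :=
      pow_le_pow_left₀ hm.le (b1.trans ((h.supp ht).le_norm_gradient hx)) 2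
    have g2 : ‖gradient (H t) x‖ ^ 2 ≤ M ^ 2 := pow_le_pow_left₀ (norm_nonneg _)
      ((h.supp ht).norm_gradient_le hx fun z hz => (hb t ht z hz).2) 2
    have m2 : 0 < m ^ 2 := by positivity
    have l1 := Real.log_le_log m2 g1
    have l2 := Real.log_le_log (m2.trans_le g1) g2
    have a3 : |Real.log (‖gradient (H t) x‖ ^ 2)| ≤ B3 := by
      rw [abs_le]
      constructor
      · linarith [neg_abs_le (Real.log (m ^ 2)), abs_nonneg (Real.log (M ^ 2))]
      · linarith [le_abs_self (Real.log (M ^ 2)), abs_nonneg (Real.log (m ^ 2))]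
    have a4 : |(n / 2 : ℝ) * Real.log (‖gradient (H t) x‖ ^ 2)| ≤ n / 2 * B3 := by
      rw [abs_mul, abs_of_nonneg (by positivity : (0 : ℝ) ≤ n / 2)]
      exact mul_le_mul_of_nonneg_left a3 (by positivity)
    linarith [abs_add_le (logf f x + psi φ (H t x)) (n / 2 * Real.log (‖gradient (H t) x‖ ^ 2)),
      abs_add_le (logf f x) (psi φ (H t x))]
  obtain ⟨x', hx'⟩ := sphere_nonempty h.npos
  exact ⟨_, (abs_nonneg _).trans (key 0 le_rfl x' hx'), key⟩

/-- Hadamard's inequality for the speed at other times, in a frame diagonalising the Hessian at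
time `t`. -/
lemma GFlow.log_KK_ge_frame (h : GFlow n f φ H) (hs : 0 ≤ s) (hx : x ∈ USphere n)
    (E : EigenFrame n (H t) x) :
    Real.log (flowEta n f φ (H s)) + logf f x + psi φ (H s x)
      + n / 2 * Real.log (‖gradient (H s) x‖ ^ 2)
      - ∑ i ∈ E.tan, Real.log (dd (E.b i) (dd (E.b i) (H s)) x) ≤ Real.log (KK H s x) := by
  have h1 := h.log_KK_ge hs (USphere.ne_zero hx) E.b
  rw [E.sum_eq, E.b_o, (h.supp hs).dd_radial (USphere.ne_zero hx), USphere.norm hx,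
    real_inner_self_eq_norm_sq, USphere.norm hx] at h1
  have h2 : ∑ i ∈ E.tan, Real.log (1 * dd (E.b i) (dd (E.b i) (H s)) x +
      ⟪x, E.b i⟫ ^ 2 * ((1 : ℝ) ^ 2)⁻¹) =
      ∑ i ∈ E.tan, Real.log (dd (E.b i) (dd (E.b i) (H s)) x) :=
    Finset.sum_congr rfl fun i hi => by rw [E.inner_x (E.mem_tan.mp hi)]; simp
  rw [h2] at h1
  simpa using h1

/-- At a space-time maximum of `(h - ∂ₜh) / (η (h - ε))` at positive time, either the speed or all
principal curvatures are bounded. -/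
lemma GFlow.tso_step (h : GFlow n f φ H) (hm : 0 < m)
    (hb : ∀ t, 0 ≤ t → ∀ x ∈ USphere n, m ≤ H t x ∧ H t x ≤ M)
    (hB : ∀ z, m ≤ z → z ≤ M → |deriv (psi φ) z| ≤ B)
    (hε : ε = m / 2) (ht : 0 < t) (hx : x ∈ USphere n) (hμ : 0 < μ)
    (E : EigenFrame n (H t) x) (heq : KK H t x = flowEta n f φ (H t) * μ * (H t x - ε))
    (hle : ∀ s, 0 ≤ s → s ≤ t → ∀ y ∈ USphere n,
      KK H s y ≤ flowEta n f φ (H s) * μ * (H s y - ε))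
    (ha : 1 ≤ flowEta n f φ (H t) * μ) :
    ε * ∑ i ∈ E.tan, 1 / E.lam i ≤ 2 * B * M + 1 + n := by
  have hF := h.supp ht.le
  have hx0 := USphere.ne_zero hx
  have hεp : 0 < ε := by rw [hε]; positivity
  have hLs : ∀ s, 0 ≤ s → ∀ y ∈ USphere n, 0 < H s y - ε := fun s hs y hy => by
    have := (hb s hs y hy).1
    rw [hε]; linarith
  have hjet : ∀ k ∈ E.tan,
      dd (E.b k) (KK H t) x = flowEta n f φ (H t) * μ * dd (E.b k) (H t) x ∧
      dd (E.b k) (dd (E.b k) (KK H t)) x ≤ flowEta n f φ (H t) * μ * (E.lam k - ε) := by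
    intro k hk
    have hko := E.mem_tan.mp hk
    have l1 := J2.line (h.KK_sm ht.le) hx0 (E.b k)
    have r1 := ((J2.line hF.sm hx0 (E.b k)).sub (J2.sqrt_one_add_sq.const_mul ε)).const_mul
      (flowEta n f φ (H t) * μ)
    obtain ⟨e1, e2⟩ := l1.le (r1.congr_val (by rw [mul_one, heq]) rfl rfl)
      (Eventually.of_forall fun s => by
        have hX := E.line_ne hx hko s
        have hn := norm_pos_iff.mpr hX
        have a1 := hle t ht.le le_rfl _ (unit_mem hX)
        have a2 := (h.KK_hom ht.le) _ (inv_pos.mpr hn) _ hX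
        rw [zpow_one] at a2
        rw [a2, hF.homog _ (inv_pos.mpr hn), inv_mul_le_iff₀ hn] at a1
        rw [← E.norm_line hx hko]
        refine a1.trans (le_of_eq ?_)
        field_simp)
    rw [E.hess hF hx0, if_pos rfl] at e2
    exact ⟨by linarith, by linarith⟩
  have hh := h.hpos ht.le hx
  have hr : 0 < ‖gradient (H t) x‖ ^ 2 := by
    have := norm_pos_iff.mpr (hF.gradient_ne_zero hx); positivity
  have hD : ∀ i, dd (E.b i) (dd (E.b i) (H t)) x = E.lam i := fun i => by
    rw [E.hess hF hx0, if_pos rfl]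
  have d1 := (((((h.psi_smooth hh).differentiableAt (by simp)).hasDerivAt.comp t
    (h.time_h ht hx0)).add (((h.time_grad ht hx E).log hr.ne').const_mul (n / 2 : ℝ))).sub
    (HasDerivAt.fun_sum (u := E.tan) fun i hi => (h.time_hess ht hx0 (E.b i)).log
      (by rw [hD]; exact (E.lam_pos i (E.mem_tan.mp hi)).ne'))).sub
    (((h.time_h ht hx0).sub_const ε).log (hLs t ht.le x hx).ne')
  have d2 := deriv_nonneg_of_left ht d1 (fun s hs hst => by
    have hlog : Real.log (flowEta n f φ (H s) * μ * (H s x - ε)) =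
        Real.log (flowEta n f φ (H s)) + Real.log μ + Real.log (H s x - ε) := by
      rw [Real.log_mul (mul_pos (h.eta_pos hs) hμ).ne' (hLs s hs x hx).ne',
        Real.log_mul (h.eta_pos hs).ne' hμ.ne']
    have hlog' : Real.log (KK H t x) =
        Real.log (flowEta n f φ (H t)) + Real.log μ + Real.log (H t x - ε) := by
      rw [heq, Real.log_mul (mul_pos (h.eta_pos ht.le) hμ).ne' (hLs t ht.le x hx).ne',
        Real.log_mul (h.eta_pos ht.le).ne' hμ.ne']
    have a1 := h.log_KK_ge_frame hs hx E
    have a2 := Real.log_le_log (h.KK_pos hs hx0) (hle s hs hst x hx)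
    have a3 := h.log_KK_frame ht.le hx E
    simp only [Pi.sub_apply, Pi.add_apply, Function.comp_apply, hD]
    linarith)
  simp only [hD] at d2
  exact tso_algebra E.tan (K := fun k => dd (E.b k) (KK H t) x) E.card_tan
    (fun i hi => E.lam_pos i (E.mem_tan.mp hi)) hεp
    (by have := (hb t ht.le x hx).1; rw [hε]; linarith) (hb t ht.le x hx).2
    (E.norm_sq_gradient_self hF hx) heq (hB _ (hb t ht.le x hx).1 (hb t ht.le x hx).2) ha
    (fun k hk => (hjet k hk).1) (fun k hk => (hjet k hk).2) d2

end

section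
variable {n : ℕ} {f : Euc n → ℝ} {φ : ℝ → ℝ} {H : ℝ → Euc n → ℝ} {t : ℝ} {x : Euc n} {m M : ℝ}

/-- The speed of the flow divided by its normalisation factor `η`; unlike the speed itself, it is a
local expression in `h`. -/
def relSpeed (n : ℕ) (f : Euc n → ℝ) (φ : ℝ → ℝ) (H : ℝ → Euc n → ℝ) (t : ℝ) (x : Euc n) : ℝ :=
  f x / φ (1 / H t x) * (‖gradient (H t) x‖ ^ n / sphDet n (H t) x)

lemma GFlow.KK_relSpeed (h : GFlow n f φ H) (ht : 0 ≤ t) (hx : x ∈ USphere n) :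
    KK H t x = flowEta n f φ (H t) * relSpeed n f φ H t x := by
  rw [h.KK_eq ht hx, speed, relSpeed]; ring

lemma GFlow.relSpeed_pos (h : GFlow n f φ H) (ht : 0 ≤ t) (hx : x ∈ USphere n) :
    0 < relSpeed n f φ H t x := by
  have h1 := h.KK_pos ht (USphere.ne_zero hx)
  rw [h.KK_relSpeed ht hx] at h1
  exact (mul_pos_iff_of_pos_left (h.eta_pos ht)).mp h1

lemma GFlow.relSpeed_cont (h : GFlow n f φ H) :
    ContinuousOn (fun p : ℝ × Euc n => relSpeed n f φ H p.1 p.2) (Ici 0 ×ˢ USphere n) :=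
  h.pcont.mul (((h.smT.gradient_continuousOn.mono sphere_subset).norm.pow n).div
    (h.smT.sphDet_continuousOn.mono sphere_subset)
    fun _ hp => ((h.supp hp.1).sphDet_pos hp.2).ne')

lemma GFlow.log_relSpeed (h : GFlow n f φ H) (ht : 0 ≤ t) (hx : x ∈ USphere n)
    (E : EigenFrame n (H t) x) :
    Real.log (relSpeed n f φ H t x) = logf f x + psi φ (H t x)
      + n / 2 * Real.log (‖gradient (H t) x‖ ^ 2) - ∑ i ∈ E.tan, Real.log (E.lam i) := by
  have h1 := h.log_KK_frame ht hx E
  rw [h.KK_relSpeed ht hx, Real.log_mul (h.eta_pos ht).ne' (h.relSpeed_pos ht hx).ne'] at h1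
  linarith

/-- The speed is bounded above, equivalently `det (∇²h + hI)` is bounded away from zero. -/
lemma GFlow.det_bound (h : GFlow n f φ H) (hm : 0 < m)
    (hb : ∀ t, 0 ≤ t → ∀ x ∈ USphere n, m ≤ H t x ∧ H t x ≤ M) :
    ∃ C, 0 ≤ C ∧ ∀ t, 0 ≤ t → ∀ x ∈ USphere n, ∀ E : EigenFrame n (H t) x,
      -C ≤ ∑ i ∈ E.tan, Real.log (E.lam i) := by
  obtain ⟨x', hx'⟩ := sphere_nonempty h.npos
  have hmM : m ≤ M := (hb 0 le_rfl x' hx').1.trans (hb 0 le_rfl x' hx').2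
  have hM : 0 < M := hm.trans_le hmM
  obtain ⟨B, hB0, hB⟩ := h.psi_bounds (M := M) hm
  obtain ⟨R, hR0, hR⟩ := h.rest_bound hm hb
  obtain ⟨a, b, ha, hab⟩ := h.eta_bounds hm hb
  obtain ⟨ε, hε⟩ : ∃ ε, ε = m / 2 := ⟨_, rfl⟩
  have hεp : 0 < ε := by rw [hε]; positivity
  obtain ⟨V0, hV0⟩ := (isCompact_sphere (0 : Euc n) 1).exists_bound_of_continuousOn
    (slice_cont (k := relSpeed n f φ H) h.relSpeed_cont le_rfl)
  have hV0p : 0 ≤ V0 := (norm_nonneg _).trans (hV0 x' hx')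
  obtain ⟨A, hA⟩ : ∃ A, A = (2 * B * M + 1 + n) / ε := ⟨_, rfl⟩
  have hAp : 0 < A := by rw [hA]; positivity
  obtain ⟨Q, hQ⟩ : ∃ Q, Q = V0 / ε + 1 / a + Real.exp (R + n * |Real.log A|) / ε := ⟨_, rfl⟩
  have hQp : 0 < Q := by rw [hQ]; positivity
  have hge : ∀ t, 0 ≤ t → ∀ y ∈ USphere n, ε ≤ H t y - ε := fun t ht y hy => by
    linarith [(hb t ht y hy).1]
  have hmain : ∀ t, 0 ≤ t → ∀ x ∈ USphere n, relSpeed n f φ H t x ≤ Q * M := by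
    intro t ht x hx
    have hK : IsCompact (Icc 0 t ×ˢ USphere n : Set (ℝ × Euc n)) :=
      isCompact_Icc.prod (isCompact_sphere (0 : Euc n) 1)
    have hsub : (Icc 0 t ×ˢ USphere n : Set (ℝ × Euc n)) ⊆ Ici 0 ×ˢ USphere n :=
      prod_mono (fun s hs => hs.1) le_rfl
    have hq : ContinuousOn (fun p : ℝ × Euc n => relSpeed n f φ H p.1 p.2 / (H p.1 p.2 - ε))
        (Icc 0 t ×ˢ USphere n) :=
      (h.relSpeed_cont.mono hsub).div ((h.hcont.mono hsub).sub continuousOn_const)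
        fun p hp => (hεp.trans_le (hge p.1 hp.1.1 p.2 hp.2)).ne'
    obtain ⟨⟨t0, x0⟩, ⟨ht0, hx0⟩, hmax⟩ := hK.exists_isMaxOn ⟨(t, x), ⟨ht, le_rfl⟩, hx⟩ hq
    simp only at ht0 hx0
    obtain ⟨μ, hμ⟩ : ∃ μ, μ = relSpeed n f φ H t0 x0 / (H t0 x0 - ε) := ⟨_, rfl⟩
    have hd0 := hge t0 ht0.1 x0 hx0
    have hμp : 0 < μ := by
      rw [hμ]; exact div_pos (h.relSpeed_pos ht0.1 hx0) (hεp.trans_le hd0)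
    have hle : ∀ s, 0 ≤ s → s ≤ t → ∀ y ∈ USphere n,
        relSpeed n f φ H s y ≤ μ * (H s y - ε) := by
      intro s hs hst y hy
      have := hmax (show ((s, y) : ℝ × Euc n) ∈ Icc 0 t ×ˢ USphere n from ⟨⟨hs, hst⟩, hy⟩)
      simp only [mem_ofPred_eq] at this
      rwa [← hμ, div_le_iff₀ (hεp.trans_le (hge s hs y hy))] at this
    have heq : relSpeed n f φ H t0 x0 = μ * (H t0 x0 - ε) := by
      rw [hμ, div_mul_cancel₀ _ (hεp.trans_le hd0).ne']
    have hdiv : ∀ Y, relSpeed n f φ H t0 x0 ≤ Y → μ ≤ Y / ε := fun Y hY => by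
      rw [le_div_iff₀ hεp]
      exact (mul_le_mul_of_nonneg_left hd0 hμp.le).trans (heq ▸ hY)
    have p1 : 0 ≤ V0 / ε := by positivity
    have p2 : 0 < 1 / a := by positivity
    have p3 : 0 < Real.exp (R + n * |Real.log A|) / ε := by positivity
    have hμQ : μ ≤ Q := by
      rw [hQ]
      rcases ht0.1.eq_or_lt with h0 | h0
      · subst h0
        linarith [hdiv V0 ((le_abs_self _).trans (hV0 x0 hx0))]
      rcases lt_or_ge (flowEta n f φ (H t0) * μ) 1 with h1 | h1
      · have : μ ≤ 1 / a := by
          rw [le_div_iff₀ ha]; nlinarith [(hab t0 ht0.1).1]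
        linarith
      obtain ⟨E⟩ := (h.supp h0.le).exists_frame hx0
      have h2 := h.tso_step hm hb (fun z z1 z2 => (hB z z1 z2).1) hε h0 hx0 hμp E
        (by rw [h.KK_relSpeed h0.le hx0, heq]; ring)
        (fun s hs hst y hy => by
          rw [h.KK_relSpeed hs hy, mul_assoc]
          exact mul_le_mul_of_nonneg_left (hle s hs (hst.trans ht0.2) y hy) (h.eta_pos hs).le) h1
      have hlp : ∀ i ∈ E.tan, 0 < E.lam i := fun i hi => E.lam_pos i (E.mem_tan.mp hi)
      have h3 : ∀ i ∈ E.tan, -Real.log (E.lam i) ≤ |Real.log A| := by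
        intro i hi
        have h4 : 1 / E.lam i ≤ A := by
          rw [hA, le_div_iff₀ hεp, mul_comm]
          refine le_trans (mul_le_mul_of_nonneg_left ?_ hεp.le) h2
          exact Finset.single_le_sum (f := fun i => 1 / E.lam i)
            (fun j hj => (one_div_pos.mpr (hlp j hj)).le) hi
        have h5 := Real.log_le_log (one_div_pos.mpr (hlp i hi)) h4
        rw [one_div, Real.log_inv] at h5
        exact h5.trans (le_abs_self _)
      have h4 : -∑ i ∈ E.tan, Real.log (E.lam i) ≤ n * |Real.log A| := by
        rw [← Finset.sum_neg_distrib]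
        refine (Finset.sum_le_sum h3).trans ?_
        rw [Finset.sum_const, nsmul_eq_mul, E.card_tan]
        linarith [abs_nonneg (Real.log A)]
      have h5 : relSpeed n f φ H t0 x0 ≤ Real.exp (R + n * |Real.log A|) := by
        rw [← Real.log_le_iff_le_exp (h.relSpeed_pos h0.le hx0), h.log_relSpeed h0.le hx0 E]
        linarith [le_of_abs_le (hR t0 h0.le x0 hx0)]
      linarith [hdiv _ h5]
    have h1 : H t x - ε ≤ M := by linarith [(hb t ht x hx).2]
    exact (hle t ht le_rfl x hx).trans (mul_le_mul hμQ h1 (hεp.le.trans (hge t ht x hx)) hQp.le)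
  refine ⟨R + |Real.log (Q * M)|, by positivity, fun t ht x hx E => ?_⟩
  have h1 := Real.log_le_log (h.relSpeed_pos ht hx) (hmain t ht x hx)
  rw [h.log_relSpeed ht hx E] at h1
  linarith [neg_le_of_abs_le (hR t ht x hx), le_abs_self (Real.log (Q * M))]

/-! ### Two-sided bounds on the principal radii -/

/-- An upper bound for all principal radii and a lower bound for their product bound each of them
from below. -/
lemma EigenFrame.lam_ge {F : Euc n → ℝ} (E : EigenFrame n F x) {Λ C : ℝ}
    (hΛ : ∀ i ∈ E.tan, E.lam i ≤ Λ) (hC : -C ≤ ∑ i ∈ E.tan, Real.log (E.lam i))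
    {i : Fin n} (hi : i ∈ E.tan) :
    Real.exp (-(C + n * |Real.log Λ|)) ≤ E.lam i := by
  have hlp : ∀ i ∈ E.tan, 0 < E.lam i := fun i hi => E.lam_pos i (E.mem_tan.mp hi)
  rw [← Real.le_log_iff_exp_le (hlp i hi)]
  have h1 : ∑ j ∈ E.tan.erase i, Real.log (E.lam j) ≤ n * |Real.log Λ| := by
    have h2 : ∑ j ∈ E.tan.erase i, Real.log (E.lam j) ≤ ∑ j ∈ E.tan.erase i, |Real.log Λ| :=
      Finset.sum_le_sum fun j hj => (Real.log_le_log (hlp j (Finset.mem_of_mem_erase hj))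
        (hΛ j (Finset.mem_of_mem_erase hj))).trans (le_abs_self _)
    refine h2.trans ?_
    rw [Finset.sum_const, nsmul_eq_mul]
    have h3 : (E.tan.erase i).card ≤ n := (Finset.card_le_univ _).trans (by simp)
    exact mul_le_mul_of_nonneg_right (by exact_mod_cast h3) (abs_nonneg _)
  have h2 := Finset.add_sum_erase E.tan (fun j => Real.log (E.lam j)) hi
  linarith

lemma GFlow.curvature_bounds (h : GFlow n f φ H) (hcond : CondI n f φ (H 0) ∨ CondII φ) :
    ∃ C : ℝ, 0 < C ∧ ∀ t, 0 ≤ t → ∀ x ∈ USphere n, ∀ v : Euc n, ⟪x, v⟫ = 0 →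
      (1 / C) * ‖v‖ ^ 2 ≤ ⟪v, hessOp n (H t) x v⟫ ∧
      ⟪v, hessOp n (H t) x v⟫ ≤ C * ‖v‖ ^ 2 := by
  obtain ⟨M, -, hM⟩ := h.upper_bound hcond
  obtain ⟨m, hm, hmb⟩ := h.lower_bound
  have hb : ∀ t, 0 ≤ t → ∀ x ∈ USphere n, m ≤ H t x ∧ H t x ≤ M := fun t ht x hx =>
    ⟨hmb t ht x hx, hM t ht x hx⟩
  obtain ⟨Λ, hΛ, hΛb⟩ := h.lam_bound hm hb
  obtain ⟨D, hD, hDb⟩ := h.det_bound hm hb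
  obtain ⟨L, hL⟩ : ∃ L, L = D + n * |Real.log Λ| := ⟨_, rfl⟩
  refine ⟨max Λ (Real.exp L), lt_max_of_lt_left hΛ, fun t ht x hx v hxv => ?_⟩
  have hF := h.supp ht
  obtain ⟨E⟩ := hF.exists_frame hx
  have hup : ∀ i ∈ E.tan, E.lam i ≤ Λ := fun i hi => by
    have := hΛb t ht x hx _ (E.b_mem i) (E.inner_x (E.mem_tan.mp hi))
    rwa [E.hess hF (USphere.ne_zero hx), if_pos rfl] at this
  have hlo : ∀ i ∈ E.tan, 1 / max Λ (Real.exp L) ≤ E.lam i := fun i hi => by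
    refine le_trans ?_ (E.lam_ge hup (hDb t ht x hx E) hi)
    rw [← hL, Real.exp_neg, ← one_div]
    exact one_div_le_one_div_of_le (Real.exp_pos L) (le_max_right _ _)
  rw [inner_hessOp (h.smT.slice ht) (USphere.ne_zero hx), E.quad hF hx, ← E.norm_sq_tan hxv,
    Finset.mul_sum, Finset.mul_sum]
  exact ⟨Finset.sum_le_sum fun i hi => mul_le_mul_of_nonneg_right (hlo i hi) (sq_nonneg _),
    Finset.sum_le_sum fun i hi => mul_le_mul_of_nonneg_right ((hup i hi).trans (le_max_left _ _))
      (sq_nonneg _)⟩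

end

/-- uniform two-sided bounds on the principal curvatures, expressed as
two-sided bounds on the quadratic form `v ↦ ⟪v, (∇²h + hI) v⟫` on each tangent space. -/
theorem principal_curvature_bounds
    (n : ℕ) (hn : 2 ≤ n)
    (f : Euc n → ℝ) (φ : ℝ → ℝ) (h₀ : Euc n → ℝ)
    (hf_smooth : ContDiffOn ℝ (⊤ : ℕ∞) f {(0 : Euc n)}ᶜ)
    (hf_pos : ∀ x ∈ USphere n, 0 < f x)
    (hf_even : ∀ x : Euc n, f (-x) = f x)
    (hφ_smooth : ContDiffOn ℝ (⊤ : ℕ∞) φ (Ioi 0))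
    (hφ_pos : ∀ s ∈ Ioi (0 : ℝ), 0 < φ s)
    (hh₀ : IsSupportFn n h₀) (hh₀e : ∀ x : Euc n, h₀ (-x) = h₀ x)
    (hcond : CondI n f φ h₀ ∨ CondII φ)
    (H : ℝ → Euc n → ℝ) (hH : IsFlowSol n f φ (Ici 0) H) (hH0 : H 0 = h₀) :
    ∃ C : ℝ, 0 < C ∧ ∀ t ∈ Ioi (0 : ℝ), ∀ x ∈ USphere n, ∀ v : Euc n, ⟪x, v⟫ = 0 →
      (1 / C) * ‖v‖ ^ 2 ≤ ⟪v, hessOp n (H t) x v⟫ ∧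
      ⟪v, hessOp n (H t) x v⟫ ≤ C * ‖v‖ ^ 2 := by
  subst hH0
  have h : GFlow n f φ H := ⟨hn, hf_smooth, hf_pos, hφ_smooth, hφ_pos, hH⟩
  obtain ⟨C, hC, hb⟩ := h.curvature_bounds hcond
  exact ⟨C, hC, fun t ht => hb t (le_of_lt ht)⟩
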